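/- With p, q ∈ ℚ[X] as in the context (the first Belyi map of degree 100 for Aut(HS)), the polynomial F = p − t·q ∈ K[X] has degree 100, is irreducible over K = ℚ(t), and its Galois group Polynomial.Gal F (the Galois group of the splitting field of F over K) has cardinality 88704000, the order of Aut(HS). -/

import Mathlib

open Polynomial

noncomputable section

def p : Polynomial ℚ :=
    (7 * X ^ 5 - 30 * X ^ 4 + 30 * X ^ 3 + 40 * X ^ 2 - 95 * X + 50) ^ 4 * (2 * X ^ 10 - 20 *
    X ^ 9 + 90 * X ^ 8 - 240 * X ^ 7 + 435 * X ^ 6 - 550 * X ^ 5 + 425 * X ^ 4 - 100 * X ^ 3 -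
    175 * X ^ 2 + 250 * X - 125) ^ 4 * (2 * X ^ 10 + 5 * X ^ 8 - 40 * X ^ 6 + 50 * X ^ 4 - 50
    * X ^ 2 + 125) ^ 4

def q : Polynomial ℚ :=
    2 ^ 8 * (X ^ 4 - 5) ^ 5 * (X ^ 8 - 20 * X ^ 6 + 60 * X ^ 5 - 70 * X ^ 4 + 100 * X ^ 2 -
    100 * X + 25) ^ 10

/-- `F = p − t·q ∈ K[X]` where `K = ℚ(t)` and `t = RatFunc.X`. -/
def F : Polynomial (RatFunc ℚ) :=
  p.map (algebraMap ℚ (RatFunc ℚ)) - Polynomial.C RatFunc.X * q.map (algebraMap ℚ (RatFunc ℚ))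

end

namespace HSproof
open MulAction
set_option linter.unusedSectionVars false

section tools
variable {G Ω : Type*} [Group G] [Finite G] [Fintype Ω] [DecidableEq Ω] [MulAction G Ω]

lemma modfixF {α : Type*} [DecidableEq α] (f : α → α) (s : Finset α) (hs : ∀ y ∈ s, f y ∈ s)
    (p n : ℕ) [Fact p.Prime] (h : ∀ y ∈ s, f^[p ^ n] y = y) :
    s.card ≡ (s.filter (fun y => f y = y)).card [MOD p] := by
  classical
  let F : Function.End s := fun y => ⟨f y.1, hs _ y.2⟩
  have hpow : ∀ (k : ℕ) (y : s), ((F ^ k) y).1 = f^[k] y.1 := by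
    intro k
    induction k with
    | zero => intro y; rfl
    | succ k ih =>
      intro y
      rw [pow_succ, Function.iterate_succ_apply]
      exact ih (F y)
  have hF : F ^ p ^ n = 1 := by
    funext y
    apply Subtype.ext
    rw [hpow]; exact h _ y.2
  have := Equiv.Perm.card_fixedPoints_modEq hF
  rw [Fintype.card_coe] at this
  refine this.trans ?_
  rw [Fintype.card_of_subtype (s.attach.filter (fun y => f y.1 = y.1))]
  · rw [← Finset.card_map ⟨Subtype.val, Subtype.val_injective⟩]
    exact congrArg (fun t => Finset.card t % p) (by ext y; simp [and_comm])
  · intro y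
    simp [Function.mem_fixedPoints, Function.IsFixedPt, F, Subtype.ext_iff]

lemma modfix (g : G) (s : Finset Ω) (hs : ∀ y ∈ s, g • y ∈ s) (p n : ℕ) [Fact p.Prime]
    (h : ∀ y ∈ s, g ^ (p ^ n) • y = y) :
    s.card ≡ (s.filter (fun y => g • y = y)).card [MOD p] := by
  apply modfixF (fun y => g • y) s hs p n
  intro y hy
  rw [smul_iterate]; exact h y hy

lemma stable_pow (g : G) (s : Finset Ω) (hs : ∀ y ∈ s, g • y ∈ s) (k : ℕ) :
    ∀ y ∈ s, g ^ k • y ∈ s := by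
  induction k with
  | zero => intro y hy; simpa using hy
  | succ k ih => intro y hy; rw [pow_succ, mul_smul]; exact ih _ (hs _ hy)

lemma stable_all (g : G) (s : Finset Ω) (hs : ∀ y ∈ s, g • y ∈ s) (h : G)
    (hh : h ∈ Subgroup.zpowers g) : ∀ y ∈ s, h • y ∈ s := by
  have : h ∈ Submonoid.powers g := by
    have := (isOfFinOrder_of_finite g).powers_eq_zpowers
    rw [← SetLike.mem_coe, this]; exact hh
  obtain ⟨k, rfl⟩ := this
  exact stable_pow g s hs k

/-- orbits divisible by d -/
lemma dvd_of_orbits (J : Subgroup G) (d : ℕ) (s : Finset Ω) (hs : ∀ g ∈ J, ∀ y ∈ s, g • y ∈ s)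
    (h : ∀ y ∈ s, d ∣ Nat.card (orbit J y)) : d ∣ s.card := by
  classical
  induction s using Finset.strongInduction with
  | H s ih =>
    rcases s.eq_empty_or_nonempty with rfl | ⟨y, hy⟩
    · simp
    · let o : Finset Ω := s.filter (fun z => z ∈ orbit J y)
      have ho : (o : Set Ω) = orbit J y := by
        ext z
        simp only [o, Finset.coe_filter, Set.mem_ofPred_eq, and_iff_right_iff_imp]
        rintro ⟨g, rfl⟩
        exact hs g.1 g.2 y hy
      have hoc : o.card = Nat.card (orbit J y) := by
        rw [← ho]; simp
      have hos : o ⊆ s := Finset.filter_subset _ _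
      have h2 : d ∣ (s \ o).card := by
        apply ih
        · exact Finset.sdiff_ssubset hos ⟨y, by simp [o, hy]⟩
        · intro g hg z hz
          simp only [o, Finset.mem_sdiff, Finset.mem_filter, not_and] at hz ⊢
          refine ⟨hs g hg z hz.1, fun _ hz2 => hz.2 hz.1 ?_⟩
          obtain ⟨k, hk⟩ := hz2
          refine ⟨⟨g, hg⟩⁻¹ * k, ?_⟩
          have hk' : k • y = g • z := hk
          show ((⟨g, hg⟩ : J)⁻¹ * k) • y = z
          rw [mul_smul, hk', inv_smul_eq_iff]
          rfl
        · intro z hz; exact h z (Finset.sdiff_subset hz)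
      have := Finset.card_sdiff_add_card_eq_card hos
      rw [← this]
      exact dvd_add h2 (hoc ▸ h y hy)

lemma orbit_zpowers (g : G) (k : ℕ) (y : Ω) (h : Nat.card (orbit (Subgroup.zpowers g) y) ∣ k) :
    g ^ k • y = y := by
  obtain ⟨m, rfl⟩ := h
  have h1 : Nat.card (orbit (Subgroup.zpowers g) y) = (stabilizer (Subgroup.zpowers g) y).index := by
    rw [index_stabilizer]; rfl
  have h2 := Subgroup.pow_index_mem (stabilizer (Subgroup.zpowers g) y)
    ⟨g, Subgroup.mem_zpowers g⟩
  have h3 := pow_mem h2 m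
  rw [← pow_mul, ← h1] at h3
  exact h3

lemma orbit_zpowers_dvd (g : G) (k : ℕ) (y : Ω) (h : g ^ k • y = y) :
    Nat.card (orbit (Subgroup.zpowers g) y) ∣ k := by
  have e := orbitZPowersEquiv g y
  have := Nat.card_congr e
  rw [Nat.card_zmod] at this
  rw [this]
  apply Function.IsPeriodicPt.minimalPeriod_dvd
  show (fun z => g • z)^[k] y = y
  rw [smul_iterate]; exact h

lemma four_dvd (g : G) (s : Finset Ω) (hs : ∀ y ∈ s, g • y ∈ s)
    (h8 : ∀ y ∈ s, g ^ 8 • y = y) (h2 : ∀ y ∈ s, g ^ 2 • y ≠ y) : 4 ∣ s.card := by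
  apply dvd_of_orbits (Subgroup.zpowers g) 4 s (fun h hh => stable_all g s hs h hh)
  intro y hy
  have h := orbit_zpowers_dvd g 8 y (h8 y hy)
  have h' : ¬ Nat.card (orbit (Subgroup.zpowers g) y) ∣ 2 := fun h => h2 y hy (orbit_zpowers g 2 y h)
  generalize Nat.card (orbit (Subgroup.zpowers g) y) = n at h h'
  have : n ≤ 8 := Nat.le_of_dvd (by norm_num) h
  interval_cases n <;> simp_all

lemma four_fix (g : G) (s : Finset Ω) (hs : ∀ y ∈ s, g • y ∈ s) (hc : s.card = 4)
    (h8 : ∀ y ∈ s, g ^ 8 • y = y) : ∀ y ∈ s, g ^ 4 • y = y := by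
  intro y hy
  apply orbit_zpowers
  have h := orbit_zpowers_dvd g 8 y (h8 y hy)
  have h' : Nat.card (orbit (Subgroup.zpowers g) y) ≤ 4 := by
    rw [← hc, ← Set.ncard_coe_finset]
    apply Set.ncard_le_ncard _ (Set.toFinite _)
    rintro _ ⟨k, rfl⟩
    exact stable_all g s hs k.1 k.2 y hy
  generalize Nat.card (orbit (Subgroup.zpowers g) y) = n at h h'
  interval_cases n <;> simp_all

lemma trans_of (J : Subgroup G) (s : Finset Ω) (hs : ∀ g ∈ J, ∀ y ∈ s, g • y ∈ s)
    (hO : ∀ O : Finset Ω, O ⊆ s → O.Nonempty → (∀ g ∈ J, ∀ y ∈ O, g • y ∈ O) → O.card = s.card) :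
    ∀ y ∈ s, ∀ z ∈ s, ∃ g ∈ J, g • y = z := by
  classical
  intro y hy z hz
  have := hO (s.filter (fun z => ∃ g ∈ J, g • y = z)) (Finset.filter_subset _ _)
    ⟨y, by simp only [Finset.mem_filter]; exact ⟨hy, 1, J.one_mem, one_smul _ _⟩⟩ (by
      intro g hg w hw
      simp only [Finset.mem_filter] at hw ⊢
      obtain ⟨hw, k, hk, rfl⟩ := hw
      exact ⟨hs g hg _ hw, g * k, J.mul_mem hg hk, mul_smul _ _ _⟩)
  have := Finset.eq_of_subset_of_card_le (Finset.filter_subset _ _) this.ge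
  rw [← this] at hz
  simpa using (Finset.mem_filter.1 hz).2

lemma card_chain (J : Subgroup G) (s : Finset Ω) (hs : ∀ g ∈ J, ∀ y ∈ s, g • y ∈ s)
    (y : Ω) (hy : y ∈ s) (ht : ∀ z ∈ s, ∃ g ∈ J, g • y = z) :
    Nat.card J = s.card * Nat.card (J ⊓ stabilizer G y : Subgroup G) := by
  have h1 := Nat.card_congr (orbitProdStabilizerEquivGroup J y)
  rw [Nat.card_prod] at h1
  rw [← h1]
  congr 1
  · rw [← Set.ncard_coe_finset]
    show Set.ncard _ = _
    congr 1
    ext z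
    constructor
    · rintro ⟨k, rfl⟩; exact hs k.1 k.2 y hy
    · intro hz; obtain ⟨g, hg, rfl⟩ := ht z hz; exact ⟨⟨g, hg⟩, rfl⟩
  · apply Nat.card_congr
    refine ⟨fun k => ⟨k.1.1, k.1.2, k.2⟩, fun k => ⟨⟨k.1, k.2.1⟩, k.2.2⟩, fun k => rfl, fun k => rfl⟩

end tools
end HSproof

namespace HSproof
open MulAction
set_option linter.unusedSectionVars false

instance fact5 : Fact (Nat.Prime 5) := ⟨by norm_num⟩
instance fact7 : Fact (Nat.Prime 7) := ⟨by norm_num⟩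
instance fact11 : Fact (Nat.Prime 11) := ⟨by norm_num⟩

section core
variable {G Ω : Type*} [Group G] [Finite G] [Fintype Ω] [DecidableEq Ω] [MulAction G Ω]
  [FaithfulSMul G Ω]

def Nb (E : Ω → Ω → Prop) [DecidableRel E] (y : Ω) : Finset Ω := Finset.univ.filter (E y)
def Wb (E : Ω → Ω → Prop) [DecidableRel E] (x : Ω) : Finset Ω :=
  Finset.univ.filter (fun w => w ≠ x ∧ ¬ E x w)
def fx (E : Ω → Ω → Prop) [DecidableRel E] (x : Ω) (s : G) (k : ℕ) : ℕ :=
  ((Nb E x).filter (fun z => s ^ k • z = z)).card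

structure Hyp (G : Type*) {Ω : Type*} [Group G] [Fintype Ω] [DecidableEq Ω] [MulAction G Ω]
    (E : Ω → Ω → Prop) [DecidableRel E] (x : Ω) : Prop where
  c : Fintype.card Ω = 100
  tr : ∀ y z : Ω, ∃ g : G, g • y = z
  sy : ∀ y z, E y z → E z y
  inv : ∀ (g : G) y z, E y z → E (g • y) (g • z)
  n22 : (Nb E x).card = 22
  s11 : ∃ s : G, s • x = x ∧ (∀ y : Ω, s ^ 11 • y = y) ∧ ∀ y : Ω, s • y = y → y = x
  s7 : ∃ s : G, s • x = x ∧ (∀ y : Ω, s ^ 7 • y = y) ∧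
    (Finset.univ.filter (fun y : Ω => s • y = y)).card = 2
  s5 : ∃ s : G, s • x = x ∧ fx E x s 1 = 2 ∧ fx E x s 5 = 22
  s8 : ∃ s : G, s • x = x ∧ fx E x s 1 = 2 ∧ fx E x s 2 = 2 ∧ fx E x s 4 = 6 ∧ fx E x s 8 = 22
  s6 : ∃ s : G, s • x = x ∧ fx E x s 2 = 4 ∧ fx E x s 3 = 8 ∧ fx E x s 6 = 22

variable {E : Ω → Ω → Prop} [DecidableRel E] {x : Ω}

@[simp] lemma mem_Nb {y z : Ω} : z ∈ Nb E y ↔ E y z := by simp [Nb]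
@[simp] lemma mem_Wb {y z : Ω} : z ∈ Wb E y ↔ z ≠ y ∧ ¬ E y z := by simp [Wb]

namespace Hyp
variable (h : Hyp G E x)
include h

lemma inv_iff (g : G) (y z : Ω) : E (g • y) (g • z) ↔ E y z := by
  refine ⟨fun hh => ?_, h.inv g y z⟩
  simpa using h.inv g⁻¹ _ _ hh

lemma irr : ¬ E x x := by
  intro hx
  obtain ⟨s, hs, h11, hf⟩ := h.s11
  have := modfix s (Nb E x) (fun y hy => by
    rw [mem_Nb] at hy ⊢; have := h.inv s _ _ hy; rwa [hs] at this) 11 1 (by simpa using fun y _ => h11 y)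
  rw [h.n22] at this
  have h2 : (Nb E x).filter (fun y => s • y = y) = {x} := by
    ext y
    simp only [Finset.mem_filter, mem_Nb, Finset.mem_singleton]
    constructor
    · exact fun hh => hf y hh.2
    · rintro rfl; exact ⟨hx, hs⟩
  rw [h2] at this
  simp [Nat.ModEq] at this

lemma stN {g : G} (hg : g ∈ stabilizer G x) : ∀ y ∈ Nb E x, g • y ∈ Nb E x := by
  intro y hy
  rw [mem_Nb] at hy ⊢
  have := h.inv g _ _ hy
  rwa [mem_stabilizer_iff.1 hg] at this

lemma stW {g : G} (hg : g ∈ stabilizer G x) : ∀ y ∈ Wb E x, g • y ∈ Wb E x := by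
  intro y hy
  rw [mem_Wb] at hy ⊢
  have hx := mem_stabilizer_iff.1 hg
  refine ⟨fun hh => hy.1 ?_, fun hh => hy.2 ?_⟩
  · rw [← hx] at hh; exact smul_left_cancel g hh
  · rw [← hx] at hh; exact (h.inv_iff g _ _).1 hh

lemma cW : (Wb E x).card = 77 := by
  have h1 : (Finset.univ : Finset Ω) = insert x (Nb E x ∪ Wb E x) := by
    ext y; simp; tauto
  have h2 := congrArg Finset.card h1
  rw [Finset.card_univ, h.c, Finset.card_insert_of_notMem (by simp [h.irr]), Finset.card_union_of_disjoint,
    h.n22] at h2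
  · omega
  · rw [Finset.disjoint_left]; intro y; simp; tauto

/-- the order-7 element, in usable form -/
lemma s7' : ∃ s ∈ stabilizer G x, (∀ y : Ω, s ^ 7 • y = y) ∧
    ((Nb E x).filter (fun y => s • y = y)).card = 1 ∧ ∀ w ∈ Wb E x, s • w ≠ w := by
  obtain ⟨s, hs, h7, hf⟩ := h.s7
  refine ⟨s, hs, h7, ?_⟩
  have hN := modfix s (Nb E x) (h.stN hs) 7 1 (by simpa using fun y _ => h7 y)
  have h3 : (Finset.univ.filter (fun y : Ω => s • y = y)) =
     insert x ((Nb E x).filter (fun y => s • y = y) ∪ (Wb E x).filter (fun y => s • y = y)) := by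
    ext y
    simp only [Finset.mem_filter, Finset.mem_insert, Finset.mem_union, mem_Nb, mem_Wb, Finset.mem_univ]
    by_cases hy : y = x
    · subst hy; simp [hs]
    · simp only [true_and, hy]; tauto
  rw [h3, Finset.card_insert_of_notMem (by simp [h.irr]), Finset.card_union_of_disjoint] at hf
  · rw [h.n22] at hN
    unfold Nat.ModEq at hN
    have h4 : ((Nb E x).filter (fun y => s • y = y)).card = 1 := by omega
    refine ⟨h4, fun w hw hh => ?_⟩
    have : ((Wb E x).filter (fun y => s • y = y)).card = 0 := by omega
    rw [Finset.card_eq_zero] at this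
    have h5 : w ∈ (Wb E x).filter (fun y => s • y = y) := Finset.mem_filter.2 ⟨hw, hh⟩
    rw [this] at h5; simp at h5
  · rw [Finset.disjoint_left]; intro y; simp; tauto

lemma div11 (O : Finset Ω) (hx : x ∉ O) (hO : ∀ g ∈ stabilizer G x, ∀ y ∈ O, g • y ∈ O) :
    11 ∣ O.card := by
  obtain ⟨s, hs, h11, hf⟩ := h.s11
  have := modfix s O (hO s hs) 11 1 (by simpa using fun y _ => h11 y)
  have h2 : O.filter (fun y => s • y = y) = ∅ := by
    ext y
    simp only [Finset.mem_filter, Finset.notMem_empty, iff_false]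
    rintro ⟨h1, h2⟩
    exact hx (hf y h2 ▸ h1)
  rw [h2] at this
  exact (Nat.modEq_zero_iff_dvd).1 this

lemma T22 : ∀ y ∈ Nb E x, ∀ z ∈ Nb E x, ∃ g ∈ stabilizer G x, g • y = z := by
  apply trans_of _ _ (fun g hg => h.stN hg)
  intro O hO hne hst
  have h11 := h.div11 O (fun hx => h.irr (by simpa using hO hx)) hst
  obtain ⟨s, hs, h7, hf, -⟩ := h.s7'
  have h1 := modfix s O (hst s hs) 7 1 (by simpa using fun y _ => h7 y)
  have h2 : (O.filter (fun y => s • y = y)).card ≤ 1 := by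
    rw [← hf]; exact Finset.card_le_card (Finset.filter_subset_filter _ hO)
  have h3 := Finset.card_le_card hO
  have h4 := hne.card_pos
  rw [h.n22] at h3 ⊢
  unfold Nat.ModEq at h1
  omega

lemma T77 : ∀ y ∈ Wb E x, ∀ z ∈ Wb E x, ∃ g ∈ stabilizer G x, g • y = z := by
  apply trans_of _ _ (fun g hg => h.stW hg)
  intro O hO hne hst
  have h11 := h.div11 O (fun hx => by simpa using hO hx) hst
  obtain ⟨s, hs, h7, -, hf⟩ := h.s7'
  have h1 := modfix s O (hst s hs) 7 1 (by simpa using fun y _ => h7 y)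
  have h2 : (O.filter (fun y => s • y = y)).card = 0 := by
    rw [Finset.card_eq_zero]
    ext y
    simp only [Finset.mem_filter, Finset.notMem_empty, iff_false]
    exact fun hh => hf y (hO hh.1) hh.2
  have h3 := Finset.card_le_card hO
  have h4 := hne.card_pos
  rw [h.cW] at h3 ⊢
  unfold Nat.ModEq at h1
  omega

lemma conj_pow_smul (g s : G) (k : ℕ) (z : Ω) :
    (g * s * g⁻¹) ^ k • z = z ↔ s ^ k • (g⁻¹ • z) = g⁻¹ • z := by
  rw [conj_pow, mul_smul, mul_smul, smul_eq_iff_eq_inv_smul]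

lemma fx_conj {g : G} (hg : g ∈ stabilizer G x) (s : G) (k : ℕ) :
    fx E x (g * s * g⁻¹) k = fx E x s k := by
  unfold fx
  symm
  apply Finset.card_bij (fun z _ => g • z)
  · intro z hz
    rw [Finset.mem_filter] at hz ⊢
    refine ⟨h.stN hg z hz.1, ?_⟩
    rw [h.conj_pow_smul]; simpa using hz.2
  · intro a _ b _ hh; exact smul_left_cancel g hh
  · intro z hz
    rw [Finset.mem_filter, h.conj_pow_smul] at hz
    exact ⟨g⁻¹ • z, Finset.mem_filter.2 ⟨h.stN (inv_mem hg) z hz.1, hz.2⟩, by simp⟩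

lemma fx_full {s : G} {k : ℕ} (hs : fx E x s k = 22) : ∀ z ∈ Nb E x, s ^ k • z = z := by
  unfold fx at hs
  rw [← h.n22] at hs
  intro z hz
  have := Finset.eq_of_subset_of_card_le (Finset.filter_subset _ _) hs.ge
  rw [← this] at hz
  exact (Finset.mem_filter.1 hz).2

lemma mem_conj {g s : G} (hg : g ∈ stabilizer G x) (hs : s ∈ stabilizer G x) :
    g * s * g⁻¹ ∈ stabilizer G x := mul_mem (mul_mem hg hs) (inv_mem hg)

lemma T21 {y : Ω} (hy : y ∈ Nb E x) : ∀ a ∈ (Nb E x).erase y, ∀ b ∈ (Nb E x).erase y,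
    ∃ g ∈ stabilizer G x ⊓ stabilizer G y, g • a = b := by
  apply trans_of
  · rintro g ⟨hg, hgy⟩ z hz
    rw [Finset.mem_erase] at hz ⊢
    refine ⟨fun hh => hz.1 ?_, h.stN hg z hz.2⟩
    rw [← mem_stabilizer_iff.1 hgy] at hh; exact smul_left_cancel g hh
  intro O hO hne hst
  have h3 := Finset.card_le_card hO
  have h4 := hne.card_pos
  rw [Finset.card_erase_of_mem hy, h.n22] at h3 ⊢
  -- order 7
  have h7 : 7 ∣ O.card := by
    obtain ⟨s, hs, h7, hf, -⟩ := h.s7'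
    obtain ⟨y0, hy0⟩ := Finset.card_eq_one.1 hf
    have hy0' : y0 ∈ (Nb E x).filter (fun y => s • y = y) := by rw [hy0]; simp
    rw [Finset.mem_filter] at hy0'
    obtain ⟨g, hg, hgy⟩ := h.T22 y0 hy0'.1 y hy
    have hs' := h.mem_conj hg hs
    have hsy : (g * s * g⁻¹) • y = y := by
      rw [← hgy, mul_smul, mul_smul, inv_smul_smul, hy0'.2]
    have h1 := modfix (g * s * g⁻¹) O (hst _ ⟨hs', hsy⟩) 7 1 (by
      intro z _; rw [pow_one, h.conj_pow_smul]; exact h7 _)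
    have h2 : (O.filter (fun y => (g * s * g⁻¹) • y = y)).card = 0 := by
      rw [Finset.card_eq_zero]
      ext z
      simp only [Finset.mem_filter, Finset.notMem_empty, iff_false]
      rintro ⟨hz, hz2⟩
      have hz1 := Finset.mem_erase.1 (hO hz)
      have := (h.conj_pow_smul g s 1 z).1 (by simpa using hz2)
      have h5 : g⁻¹ • z ∈ (Nb E x).filter (fun y => s • y = y) :=
        Finset.mem_filter.2 ⟨h.stN (inv_mem hg) z hz1.2, by simpa using this⟩
      rw [hy0, Finset.mem_singleton, inv_smul_eq_iff, hgy] at h5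
      exact hz1.1 h5
    rw [h2] at h1
    exact (Nat.modEq_zero_iff_dvd).1 h1
  obtain ⟨s, hs, hs1, hs5⟩ := h.s5
  obtain ⟨a, ha⟩ : ((Nb E x).filter (fun z => s ^ 1 • z = z)).Nonempty := by
    rw [← Finset.card_pos]; unfold fx at hs1; omega
  rw [Finset.mem_filter, pow_one] at ha
  obtain ⟨g, hg, hgy⟩ := h.T22 a ha.1 y hy
  have hs' := h.mem_conj hg hs
  have hsy : (g * s * g⁻¹) • y = y := by
    rw [← hgy, mul_smul, mul_smul, inv_smul_smul, ha.2]
  rw [← h.fx_conj hg] at hs1 hs5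
  have h1 := modfix (g * s * g⁻¹) O (hst _ ⟨hs', hsy⟩) 5 1 (fun z hz =>
      h.fx_full hs5 z (Finset.mem_erase.1 (hO hz)).2)
  have h2 : (O.filter (fun y => (g * s * g⁻¹) • y = y)).card < 2 := by
    rw [← hs1]
    apply Finset.card_lt_card
    rw [Finset.ssubset_iff]
    refine ⟨y, fun hh => ?_, ?_⟩
    · exact (Finset.mem_erase.1 (hO (Finset.mem_filter.1 hh).1)).1 rfl
    · intro z hz
      rw [Finset.mem_insert] at hz
      rw [Finset.mem_filter, pow_one]
      rcases hz with rfl | hz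
      · exact ⟨hy, hsy⟩
      · rw [Finset.mem_filter] at hz
        exact ⟨(Finset.mem_erase.1 (hO hz.1)).2, hz.2⟩
  unfold Nat.ModEq at h1
  obtain ⟨m, hm⟩ := h7
  have hm3 : m ≤ 3 := by omega
  interval_cases m <;> omega

/-- 2-transitivity -/
lemma T2 {a b a' b' : Ω} (ha : a ∈ Nb E x) (hb : b ∈ Nb E x) (hab : a ≠ b) (ha' : a' ∈ Nb E x)
    (hb' : b' ∈ Nb E x) (hab' : a' ≠ b') : ∃ g ∈ stabilizer G x, g • a = a' ∧ g • b = b' := by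
  obtain ⟨g, hg, hga⟩ := h.T22 a ha a' ha'
  have : g • b ∈ (Nb E x).erase a' := Finset.mem_erase.2
    ⟨fun hh => hab (smul_left_cancel g (hga.trans hh.symm)), h.stN hg b hb⟩
  obtain ⟨k, hk, hkb⟩ := h.T21 ha' _ this b' (Finset.mem_erase.2 ⟨hab'.symm, hb'⟩)
  refine ⟨k * g, mul_mem hk.1 hg, ?_, ?_⟩
  · rw [mul_smul, hga]; exact hk.2
  · rw [mul_smul, hkb]

/-- conjugate an element with exactly two fixed points -/
lemma conj2 {s : G} (hs : s ∈ stabilizer G x) (hs1 : fx E x s 1 = 2) {y z : Ω} (hy : y ∈ Nb E x)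
    (hz : z ∈ Nb E x) (hyz : y ≠ z) : ∃ s' ∈ stabilizer G x, (∀ k, fx E x s' k = fx E x s k) ∧
      (Nb E x).filter (fun u => s' • u = u) = {y, z} := by
  have hs1' := hs1
  unfold fx at hs1
  obtain ⟨a, b, hab, hf⟩ := Finset.card_eq_two.1 hs1
  have ha : a ∈ (Nb E x).filter (fun z => s ^ 1 • z = z) := by rw [hf]; simp
  have hb : b ∈ (Nb E x).filter (fun z => s ^ 1 • z = z) := by rw [hf]; simp
  rw [Finset.mem_filter, pow_one] at ha hb
  obtain ⟨g, hg, hga, hgb⟩ := h.T2 ha.1 hb.1 hab hy hz hyz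
  refine ⟨g * s * g⁻¹, h.mem_conj hg hs, fun k => h.fx_conj hg s k, ?_⟩
  symm
  apply Finset.eq_of_subset_of_card_le
  · intro u hu
    simp only [Finset.mem_insert, Finset.mem_singleton] at hu
    rw [Finset.mem_filter]
    rcases hu with rfl | rfl
    · refine ⟨hy, ?_⟩; rw [← hga, mul_smul, mul_smul, inv_smul_smul, ha.2]
    · refine ⟨hz, ?_⟩; rw [← hgb, mul_smul, mul_smul, inv_smul_smul, hb.2]
  · rw [Finset.card_pair hyz]
    have := h.fx_conj hg s 1
    unfold fx at this
    simp only [pow_one] at this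
    rw [this]
    simpa using hs1.le

lemma T20 {y z : Ω} (hy : y ∈ Nb E x) (hz : z ∈ Nb E x) (hyz : y ≠ z) :
    ∀ a ∈ ((Nb E x).erase y).erase z, ∀ b ∈ ((Nb E x).erase y).erase z,
    ∃ g ∈ stabilizer G x ⊓ stabilizer G y ⊓ stabilizer G z, g • a = b := by
  apply trans_of
  · rintro g ⟨⟨hg, hgy⟩, hgz⟩ u hu
    simp only [Finset.mem_erase] at hu ⊢
    refine ⟨fun hh => hu.1 ?_, fun hh => hu.2.1 ?_, h.stN hg u hu.2.2⟩
    · rw [← mem_stabilizer_iff.1 hgz] at hh; exact smul_left_cancel g hh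
    · rw [← mem_stabilizer_iff.1 hgy] at hh; exact smul_left_cancel g hh
  intro O hO hne hst
  have h3 := Finset.card_le_card hO
  have h4 := hne.card_pos
  have hON : ∀ u ∈ O, u ≠ z ∧ u ≠ y ∧ u ∈ Nb E x := by
    intro u hu; simpa only [Finset.mem_erase] using hO hu
  rw [Finset.card_erase_of_mem (Finset.mem_erase.2 ⟨hyz.symm, hz⟩),
    Finset.card_erase_of_mem hy, h.n22] at h3 ⊢
  have h5 : 5 ∣ O.card := by
    obtain ⟨s, hs, hs1, hs5⟩ := h.s5
    obtain ⟨s', hs', hfx, hff⟩ := h.conj2 hs hs1 hy hz hyz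
    have hy' : y ∈ (Nb E x).filter (fun u => s' • u = u) := by rw [hff]; simp
    have hz' : z ∈ (Nb E x).filter (fun u => s' • u = u) := by rw [hff]; simp
    have h1 := modfix s' O (hst _ ⟨⟨hs', (Finset.mem_filter.1 hy').2⟩, (Finset.mem_filter.1 hz').2⟩) 5 1
      (fun u hu => h.fx_full ((hfx 5).trans hs5) u (hON u hu).2.2)
    have h2 : (O.filter (fun y => s' • y = y)).card = 0 := by
      rw [Finset.card_eq_zero]
      ext u
      simp only [Finset.mem_filter, Finset.notMem_empty, iff_false]
      rintro ⟨hu, hu2⟩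
      have : u ∈ (Nb E x).filter (fun u => s' • u = u) := Finset.mem_filter.2 ⟨(hON u hu).2.2, hu2⟩
      rw [hff] at this
      simp only [Finset.mem_insert, Finset.mem_singleton] at this
      have := hON u hu
      tauto
    rw [h2] at h1
    exact (Nat.modEq_zero_iff_dvd).1 h1
  have h6 : 4 ∣ O.card := by
    obtain ⟨s, hs, hs1, hs2, -, hs8⟩ := h.s8
    obtain ⟨s', hs', hfx, hff⟩ := h.conj2 hs hs1 hy hz hyz
    have hy' : y ∈ (Nb E x).filter (fun u => s' • u = u) := by rw [hff]; simp
    have hz' : z ∈ (Nb E x).filter (fun u => s' • u = u) := by rw [hff]; simp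
    rw [Finset.mem_filter] at hy' hz'
    have h22 : {y, z} = (Nb E x).filter (fun u => s' ^ 2 • u = u) := by
      apply Finset.eq_of_subset_of_card_le
      · intro u hu
        simp only [Finset.mem_insert, Finset.mem_singleton] at hu
        rw [Finset.mem_filter]
        rcases hu with rfl | rfl
        · exact ⟨hy, by rw [pow_two, mul_smul, hy'.2, hy'.2]⟩
        · exact ⟨hz, by rw [pow_two, mul_smul, hz'.2, hz'.2]⟩
      · rw [Finset.card_pair hyz]; exact ((hfx 2).trans hs2).le
    apply four_dvd s' O (hst _ ⟨⟨hs', hy'.2⟩, hz'.2⟩)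
      (fun u hu => h.fx_full ((hfx 8).trans hs8) u (hON u hu).2.2)
    intro u hu hu2
    have : u ∈ (Nb E x).filter (fun u => s' ^ 2 • u = u) := Finset.mem_filter.2 ⟨(hON u hu).2.2, hu2⟩
    rw [← h22] at this
    simp only [Finset.mem_insert, Finset.mem_singleton] at this
    have := hON u hu
    tauto
  omega

/-- 3-transitivity -/
lemma T3 {a b c a' b' c' : Ω} (ha : a ∈ Nb E x) (hb : b ∈ Nb E x) (hc : c ∈ Nb E x) (hab : a ≠ b)
    (hac : a ≠ c) (hbc : b ≠ c) (ha' : a' ∈ Nb E x) (hb' : b' ∈ Nb E x) (hc' : c' ∈ Nb E x)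
    (hab' : a' ≠ b') (hac' : a' ≠ c') (hbc' : b' ≠ c') :
    ∃ g ∈ stabilizer G x, g • a = a' ∧ g • b = b' ∧ g • c = c' := by
  obtain ⟨g, hg, hga, hgb⟩ := h.T2 ha hb hab ha' hb' hab'
  have : g • c ∈ ((Nb E x).erase a').erase b' := by
    simp only [Finset.mem_erase]
    exact ⟨fun hh => hbc (smul_left_cancel g (hgb.trans hh.symm)),
      fun hh => hac (smul_left_cancel g (hga.trans hh.symm)), h.stN hg c hc⟩
  obtain ⟨k, hk, hkc⟩ := h.T20 ha' hb' hab' _ this c' (by simp only [Finset.mem_erase]; exact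
    ⟨hbc'.symm, hac'.symm, hc'⟩)
  refine ⟨k * g, mul_mem hk.1.1 hg, ?_, ?_, ?_⟩
  · rw [mul_smul, hga]; exact hk.1.2
  · rw [mul_smul, hgb]; exact hk.2
  · rw [mul_smul, hkc]

end Hyp
end core
end HSproof

namespace HSproof
open MulAction
set_option linter.unusedSectionVars false

section core2
variable {G Ω : Type*} [Group G] [Finite G] [Fintype Ω] [DecidableEq Ω] [MulAction G Ω]
  [FaithfulSMul G Ω]
variable {E : Ω → Ω → Prop} [DecidableRel E] {x : Ω}

def Bl (E : Ω → Ω → Prop) [DecidableRel E] (x w : Ω) : Finset Ω := (Nb E x).filter (E w)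

@[simp] lemma mem_Bl {w z : Ω} : z ∈ Bl E x w ↔ E x z ∧ E w z := by simp [Bl]

namespace Hyp
variable (h : Hyp G E x)
include h

lemma irr' (y : Ω) : ¬ E y y := by
  obtain ⟨g, rfl⟩ := h.tr x y
  rw [h.inv_iff]; exact h.irr

lemma ne {y z : Ω} (hh : E y z) : y ≠ z := by rintro rfl; exact h.irr' _ hh

lemma deg (y : Ω) : (Nb E y).card = 22 := by
  obtain ⟨g, rfl⟩ := h.tr x y
  rw [← h.n22]
  symm
  apply Finset.card_bij (fun z _ => g • z)
  · intro z hz; rw [mem_Nb] at hz ⊢; exact h.inv g _ _ hz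
  · intro a _ b _ hh; exact smul_left_cancel g hh
  · intro z hz
    refine ⟨g⁻¹ • z, ?_, by simp⟩
    rw [mem_Nb] at hz ⊢
    rw [← h.inv_iff g]; simpa using hz

lemma lam0 {y z : Ω} (hy : E x y) (hz : E x z) : ¬ E y z := by
  intro hyz
  have all : ∀ u v, E x u → E x v → u ≠ v → E u v := by
    intro u v hu hv huv
    obtain ⟨g, -, rfl, rfl⟩ := h.T2 (mem_Nb.2 hy) (mem_Nb.2 hz) (h.ne hyz) (mem_Nb.2 hu) (mem_Nb.2 hv) huv
    exact h.inv g _ _ hyz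
  have all' : ∀ y z u, E y z → E y u → z ≠ u → E z u := by
    intro y z u
    obtain ⟨g, rfl⟩ := h.tr x y
    intro hz hu hzu
    have := all (g⁻¹ • z) (g⁻¹ • u) (by rw [← h.inv_iff g]; simpa using hz)
      (by rw [← h.inv_iff g]; simpa using hu) (fun hh => hzu (smul_left_cancel _ hh))
    rw [h.inv_iff] at this; exact this
  let f : Ω → Finset Ω := fun y => insert y (Nb E y)
  have hf : ∀ y, (f y).card = 23 := by
    intro y
    rw [Finset.card_insert_of_notMem (by simpa using h.irr' y), h.deg]
  have hsub : ∀ y z, z ∈ f y → f z ⊆ f y := by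
    intro y z hz u hu
    simp only [f, Finset.mem_insert, mem_Nb] at hz hu ⊢
    by_cases h1 : u = y
    · exact Or.inl h1
    right
    rcases hz with rfl | hz
    · exact hu.resolve_left h1
    rcases hu with rfl | hu
    · exact hz
    · exact all' z y u (h.sy _ _ hz) hu (Ne.symm h1)
  have heq : ∀ y z, z ∈ f y → f z = f y := fun y z hz =>
    Finset.eq_of_subset_of_card_le (hsub y z hz) (by rw [hf, hf])
  have := Finset.card_eq_sum_card_image f Finset.univ
  rw [Finset.sum_const_nat (m := 23)] at this
  · rw [Finset.card_univ, h.c] at this; omega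
  · intro b hb
    obtain ⟨y, -, rfl⟩ := Finset.mem_image.1 hb
    rw [← hf y]
    congr 1
    ext a
    simp only [Finset.mem_filter, Finset.mem_univ, true_and]
    exact ⟨fun hh => by rw [← hh]; simp [f], heq y a⟩

lemma Bl_smul {g : G} (hg : g ∈ stabilizer G x) (w : Ω) : (Bl E x (g • w)).card = (Bl E x w).card := by
  symm
  apply Finset.card_bij (fun z _ => g • z)
  · intro z hz
    rw [mem_Bl] at hz ⊢
    exact ⟨mem_Nb.1 (h.stN hg z (mem_Nb.2 hz.1)), h.inv g _ _ hz.2⟩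
  · intro a _ b _ hh; exact smul_left_cancel g hh
  · intro z hz
    rw [mem_Bl] at hz
    refine ⟨g⁻¹ • z, mem_Bl.2 ⟨mem_Nb.1 (h.stN (inv_mem hg) z (mem_Nb.2 hz.1)), ?_⟩, by simp⟩
    rw [← h.inv_iff g]; simpa using hz.2

lemma cB {w : Ω} (hw : w ∈ Wb E x) : (Bl E x w).card = 6 := by
  have hc : ∀ w' ∈ Wb E x, (Bl E x w').card = (Bl E x w).card := by
    intro w' hw'
    obtain ⟨g, hg, rfl⟩ := h.T77 w hw w' hw'
    exact h.Bl_smul hg w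
  have := Finset.sum_card_bipartiteAbove_eq_sum_card_bipartiteBelow E (s := Wb E x) (t := Nb E x)
  rw [Finset.sum_const_nat (m := (Bl E x w).card), Finset.sum_const_nat (m := 21), h.cW, h.n22] at this
  · omega
  · intro u hu
    rw [mem_Nb] at hu
    have h1 : Nb E u = insert x (Finset.bipartiteBelow E (Wb E x) u) := by
      ext z
      simp only [mem_Nb, Finset.mem_insert, Finset.mem_bipartiteBelow, mem_Wb]
      constructor
      · intro hz
        by_cases hzx : z = x
        · exact Or.inl hzx
        · exact Or.inr ⟨⟨hzx, fun hh => h.lam0 hu hh hz⟩, h.sy _ _ hz⟩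
      · rintro (rfl | ⟨-, hz⟩)
        · exact h.sy _ _ hu
        · exact h.sy _ _ hz
    have h2 := congrArg Finset.card h1
    rw [h.deg, Finset.card_insert_of_notMem (by simp)] at h2
    omega
  · intro w' hw'
    rw [← hc w' hw']; rfl

lemma three_distinct {s : Finset Ω} (hs : 3 ≤ s.card) : ∃ a b c, a ∈ s ∧ b ∈ s ∧ c ∈ s ∧ a ≠ b ∧ a ≠ c ∧ b ≠ c :=
  let ⟨a, b, c, ha, hb, hc, h1⟩ := Finset.two_lt_card_iff.1 hs
  ⟨a, b, c, ha, hb, hc, h1⟩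

lemma kap (t : Finset Ω) (ht : t ∈ (Nb E x).powersetCard 3) :
    ((Wb E x).filter (fun w => t ⊆ Bl E x w)).card = 1 := by
  have hc : ∀ t' ∈ (Nb E x).powersetCard 3, ((Wb E x).filter (fun w => t' ⊆ Bl E x w)).card =
      ((Wb E x).filter (fun w => t ⊆ Bl E x w)).card := by
    intro t' ht'
    rw [Finset.mem_powersetCard] at ht ht'
    obtain ⟨a, b, c, hab, hac, hbc, rfl⟩ := Finset.card_eq_three.1 ht.2
    obtain ⟨a', b', c', hab', hac', hbc', rfl⟩ := Finset.card_eq_three.1 ht'.2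
    obtain ⟨g, hg, rfl, rfl, rfl⟩ := h.T3 (ht.1 (by simp)) (ht.1 (by simp)) (ht.1 (by simp)) hab hac hbc
      (ht'.1 (by simp : a' ∈ _)) (ht'.1 (by simp : b' ∈ _)) (ht'.1 (by simp : c' ∈ _)) hab' hac' hbc'
    have key : ∀ z w, z ∈ Nb E x → (g • z ∈ Bl E x w ↔ z ∈ Bl E x (g⁻¹ • w)) := by
      intro z w hz
      rw [mem_Bl, mem_Bl]
      have := h.inv_iff g (g⁻¹ • w) z
      rw [smul_inv_smul] at this
      rw [this]
      simp only [mem_Nb.1 (h.stN hg z hz), mem_Nb.1 hz]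
    symm
    apply Finset.card_bij (fun w _ => g • w)
    · intro w hw
      simp only [Finset.mem_filter, Finset.insert_subset_iff, Finset.singleton_subset_iff] at hw ⊢
      refine ⟨h.stW hg w hw.1, ?_⟩
      rw [key _ _ (ht.1 (by simp)), key _ _ (ht.1 (by simp)), key _ _ (ht.1 (by simp)), inv_smul_smul]
      exact hw.2
    · intro a _ b _ hh; exact smul_left_cancel g hh
    · intro w hw
      simp only [Finset.mem_filter, Finset.insert_subset_iff, Finset.singleton_subset_iff] at hw
      refine ⟨g⁻¹ • w, ?_, by simp⟩
      simp only [Finset.mem_filter, Finset.insert_subset_iff, Finset.singleton_subset_iff]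
      rw [key _ _ (ht.1 (by simp)), key _ _ (ht.1 (by simp)), key _ _ (ht.1 (by simp))] at hw
      exact ⟨h.stW (inv_mem hg) w hw.1, hw.2⟩
  have := Finset.sum_card_bipartiteAbove_eq_sum_card_bipartiteBelow
    (fun (w : Ω) (t : Finset Ω) => t ⊆ Bl E x w) (s := Wb E x) (t := (Nb E x).powersetCard 3)
  rw [Finset.sum_const_nat (m := 20), Finset.sum_const_nat
    (m := ((Wb E x).filter (fun w => t ⊆ Bl E x w)).card), h.cW, Finset.card_powersetCard, h.n22] at this
  · have h2 : Nat.choose 22 3 = 1540 := by decide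
    rw [h2] at this
    omega
  · intro t' ht'
    exact hc t' ht'
  · intro w hw
    have : Finset.bipartiteAbove (fun (w : Ω) (t : Finset Ω) => t ⊆ Bl E x w) ((Nb E x).powersetCard 3) w
        = (Bl E x w).powersetCard 3 := by
      ext t'
      simp only [Finset.mem_bipartiteAbove, Finset.mem_powersetCard]
      constructor
      · rintro ⟨⟨h1, h2⟩, h3⟩; exact ⟨h3, h2⟩
      · rintro ⟨h1, h2⟩; exact ⟨⟨h1.trans (Finset.filter_subset _ _), h2⟩, h1⟩
    rw [this, Finset.card_powersetCard, h.cB hw]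
    decide

lemma stei {a b c : Ω} (ha : E x a) (hb : E x b) (hc : E x c) (hab : a ≠ b) (hac : a ≠ c) (hbc : b ≠ c) :
    ∃ w ∈ Wb E x, E w a ∧ E w b ∧ E w c := by
  have := h.kap {a, b, c} (Finset.mem_powersetCard.2 ⟨by
    simp only [Finset.insert_subset_iff, Finset.singleton_subset_iff, mem_Nb]; exact ⟨ha, hb, hc⟩,
    Finset.card_eq_three.2 ⟨a, b, c, hab, hac, hbc, rfl⟩⟩)
  obtain ⟨w, hw⟩ := Finset.card_eq_one.1 this
  have hw' : w ∈ (Wb E x).filter (fun w => {a, b, c} ⊆ Bl E x w) := by rw [hw]; simp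
  simp only [Finset.mem_filter, Finset.insert_subset_iff, Finset.singleton_subset_iff, mem_Bl] at hw'
  exact ⟨w, hw'.1, hw'.2.1.2, hw'.2.2.1.2, hw'.2.2.2.2⟩

lemma uniq {a b c : Ω} (ha : E x a) (hb : E x b) (hc : E x c) (hab : a ≠ b) (hac : a ≠ c) (hbc : b ≠ c)
    {w w' : Ω} (hw : w ∈ Wb E x) (hw' : w' ∈ Wb E x) (h1 : E w a ∧ E w b ∧ E w c)
    (h2 : E w' a ∧ E w' b ∧ E w' c) : w = w' := by
  have := h.kap {a, b, c} (Finset.mem_powersetCard.2 ⟨by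
    simp only [Finset.insert_subset_iff, Finset.singleton_subset_iff, mem_Nb]; exact ⟨ha, hb, hc⟩,
    Finset.card_eq_three.2 ⟨a, b, c, hab, hac, hbc, rfl⟩⟩)
  obtain ⟨v, hv⟩ := Finset.card_eq_one.1 this
  have e1 : w ∈ (Wb E x).filter (fun w => {a, b, c} ⊆ Bl E x w) := by
    simp only [Finset.mem_filter, Finset.insert_subset_iff, Finset.singleton_subset_iff, mem_Bl]
    tauto
  have e2 : w' ∈ (Wb E x).filter (fun w => {a, b, c} ⊆ Bl E x w) := by
    simp only [Finset.mem_filter, Finset.insert_subset_iff, Finset.singleton_subset_iff, mem_Bl]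
    tauto
  rw [hv, Finset.mem_singleton] at e1 e2
  rw [e1, e2]

lemma pair5 {u v : Ω} (hu : E x u) (hv : E x v) (huv : u ≠ v) :
    ((Wb E x).filter (fun w => E w u ∧ E w v)).card = 5 := by
  have := Finset.sum_card_bipartiteAbove_eq_sum_card_bipartiteBelow E
    (s := (Wb E x).filter (fun w => E w u ∧ E w v)) (t := ((Nb E x).erase u).erase v)
  rw [Finset.sum_const_nat (m := 4), Finset.sum_const_nat (m := 1),
    Finset.card_erase_of_mem (Finset.mem_erase.2 ⟨huv.symm, mem_Nb.2 hv⟩),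
    Finset.card_erase_of_mem (mem_Nb.2 hu), h.n22] at this
  · omega
  · intro z hz
    simp only [Finset.mem_erase, mem_Nb] at hz
    rw [Finset.card_eq_one]
    obtain ⟨w, hw, h1, h2, h3⟩ := h.stei hu hv hz.2.2 huv (Ne.symm hz.2.1) (Ne.symm hz.1)
    refine ⟨w, ?_⟩
    ext w'
    simp only [Finset.mem_bipartiteBelow, Finset.mem_filter, Finset.mem_singleton]
    constructor
    · rintro ⟨⟨h4, h5, h6⟩, h7⟩
      exact h.uniq hu hv hz.2.2 huv (Ne.symm hz.2.1) (Ne.symm hz.1) h4 hw ⟨h5, h6, h7⟩ ⟨h1, h2, h3⟩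
    · rintro rfl; exact ⟨⟨hw, h1, h2⟩, h3⟩
  · intro w hw
    rw [Finset.mem_filter] at hw
    have h1 : Finset.bipartiteAbove E (((Nb E x).erase u).erase v) w = ((Bl E x w).erase u).erase v := by
      ext z
      simp only [Finset.mem_bipartiteAbove, Finset.mem_erase, mem_Nb, mem_Bl]
      tauto
    rw [h1, Finset.card_erase_of_mem (Finset.mem_erase.2 ⟨huv.symm, mem_Bl.2 ⟨hv, hw.2.2⟩⟩),
      Finset.card_erase_of_mem (mem_Bl.2 ⟨hu, hw.2.1⟩), h.cB hw.1]

lemma second {w w' u d : Ω} (hw : w ∈ Wb E x) (hw' : w' ∈ Wb E x) (hu : E x u) (hwu : E w u) (hd : E x d)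
    (hwd : ¬ E w d) (hu' : E w' u) (hd' : E w' d) : ∃ v, v ≠ u ∧ E x v ∧ E w v ∧ E w' v := by
  have hud : u ≠ d := by rintro rfl; exact hwd hwu
  have hex : ∀ v ∈ (Bl E x w).erase u, ∃ w'', w'' ∈ Wb E x ∧ E w'' u ∧ E w'' d ∧ E w'' v := by
    intro v hv
    simp only [Finset.mem_erase, mem_Bl] at hv
    exact h.stei hu hd hv.2.1 hud (Ne.symm hv.1) (by rintro rfl; exact hwd hv.2.2)
  choose! f hf using hex
  have himg : ((Bl E x w).erase u).image f = (Wb E x).filter (fun w => E w u ∧ E w d) := by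
    apply Finset.eq_of_subset_of_card_le
    · intro z hz
      obtain ⟨v, hv, rfl⟩ := Finset.mem_image.1 hz
      have := hf v hv
      rw [Finset.mem_filter]; tauto
    · rw [h.pair5 hu hd hud, Finset.card_image_of_injOn,
        Finset.card_erase_of_mem (mem_Bl.2 ⟨hu, hwu⟩), h.cB hw]
      intro v hv v' hv' hh
      have e1 := hf v hv
      have e2 := hf v' hv'
      rw [← show f v = f v' from hh] at e2
      rw [Finset.mem_coe, Finset.mem_erase, mem_Bl] at hv hv'
      by_contra hvv
      have := h.uniq hu hv.2.1 hv'.2.1 (Ne.symm hv.1) (Ne.symm hv'.1) hvv hw e1.1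
        ⟨hwu, hv.2.2, hv'.2.2⟩ ⟨e1.2.1, e1.2.2.2, e2.2.2.2⟩
      rw [← this] at e1
      exact hwd e1.2.2.1
  have : w' ∈ ((Bl E x w).erase u).image f := by rw [himg, Finset.mem_filter]; tauto
  obtain ⟨v, hv, rfl⟩ := Finset.mem_image.1 this
  have e1 := hf v hv
  rw [Finset.mem_erase, mem_Bl] at hv
  exact ⟨v, hv.1, hv.2.1, hv.2.2, e1.2.2.2⟩

/-- blocks with three fixed points are fixed -/
lemma fixW {g : G} (hg : g ∈ stabilizer G x) {w a b c : Ω} (hw : w ∈ Wb E x) (ha : E x a) (hb : E x b)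
    (hc : E x c) (hab : a ≠ b) (hac : a ≠ c) (hbc : b ≠ c) (h1 : E w a ∧ E w b ∧ E w c)
    (ga : g • a = a) (gb : g • b = b) (gc : g • c = c) : g • w = w := by
  apply h.uniq ha hb hc hab hac hbc (h.stW hg w hw) hw ⟨?_, ?_, ?_⟩ h1
  · rw [← ga]; exact h.inv g _ _ h1.1
  · rw [← gb]; exact h.inv g _ _ h1.2.1
  · rw [← gc]; exact h.inv g _ _ h1.2.2

lemma faith {g : G} (hg : g ∈ stabilizer G x) (hN : ∀ z ∈ Nb E x, g • z = z) : g = 1 := by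
  apply FaithfulSMul.eq_of_smul_eq_smul (M := G) (α := Ω)
  intro w
  rw [one_smul]
  by_cases h1 : w = x
  · rw [h1]; exact hg
  by_cases h2 : E x w
  · exact hN w (mem_Nb.2 h2)
  have hw : w ∈ Wb E x := mem_Wb.2 ⟨h1, h2⟩
  obtain ⟨a, b, c, ha, hb, hc, hab, hac, hbc⟩ := h.three_distinct (s := Bl E x w) (by rw [h.cB hw]; norm_num)
  rw [mem_Bl] at ha hb hc
  exact h.fixW hg hw ha.1 hb.1 hc.1 hab hac hbc ⟨ha.2, hb.2, hc.2⟩ (hN a (mem_Nb.2 ha.1))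
    (hN b (mem_Nb.2 hb.1)) (hN c (mem_Nb.2 hc.1))

lemma free {g : G} (hg : g ∈ stabilizer G x) {w d : Ω} (hw : w ∈ Wb E x)
    (hB : ∀ z ∈ Bl E x w, g • z = z) (hd : E x d) (hwd : ¬ E w d) (gd : g • d = d) : g = 1 := by
  apply h.faith hg
  intro z hz
  rw [mem_Nb] at hz
  by_cases hwz : E w z
  · exact hB z (mem_Bl.2 ⟨hz, hwz⟩)
  by_cases hzd : z = d
  · rw [hzd]; exact gd
  -- a block through u in B, d and z
  have blk : ∀ u ∈ Bl E x w, ∃ w' v, w' ∈ Wb E x ∧ E w' u ∧ E w' d ∧ E w' z ∧ v ∈ Bl E x w ∧ v ≠ u ∧ E w' v ∧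
      g • w' = w' := by
    intro u hu
    have hu0 := hB u hu
    rw [mem_Bl] at hu
    have hud : u ≠ d := by rintro rfl; exact hwd hu.2
    have huz : u ≠ z := by rintro rfl; exact hwz hu.2
    obtain ⟨w', hw', h1, h2, h3⟩ := h.stei hu.1 hd hz hud huz (Ne.symm hzd)
    obtain ⟨v, h4, h5, h6, h7⟩ := h.second hw hw' hu.1 hu.2 hd hwd h1 h2
    have hvd : v ≠ d := by rintro rfl; exact hwd h6
    refine ⟨w', v, hw', h1, h2, h3, mem_Bl.2 ⟨h5, h6⟩, h4, h7, ?_⟩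
    exact h.fixW hg hw' hu.1 h5 hd h4.symm hud hvd ⟨h1, h7, h2⟩ hu0 (hB v (mem_Bl.2 ⟨h5, h6⟩)) gd
  obtain ⟨u1, hu1⟩ : (Bl E x w).Nonempty := by rw [← Finset.card_pos, h.cB hw]; norm_num
  obtain ⟨w1, v1, a1, a2, a3, a4, a5, a6, a7, a8⟩ := blk u1 hu1
  obtain ⟨u2, hu2⟩ : (((Bl E x w).erase u1).erase v1).Nonempty := by
    rw [← Finset.card_pos, Finset.card_erase_of_mem (Finset.mem_erase.2 ⟨a6, a5⟩),
      Finset.card_erase_of_mem hu1, h.cB hw]; norm_num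
  rw [Finset.mem_erase, Finset.mem_erase] at hu2
  obtain ⟨w2, v2, b1, b2, b3, b4, b5, b6, b7, b8⟩ := blk u2 hu2.2.2
  by_contra hgz
  have hgz1 : E x (g • z) := mem_Nb.1 (h.stN hg z (mem_Nb.2 hz))
  have hgd : d ≠ g • z := by
    intro hh; rw [← gd] at hh; exact hzd (smul_left_cancel g hh).symm
  have e1 : E w1 (g • z) := by rw [← a8]; exact h.inv g _ _ a4
  have e2 : E w2 (g • z) := by rw [← b8]; exact h.inv g _ _ b4
  have e3 : w1 = w2 := h.uniq hd hz hgz1 (Ne.symm hzd) hgd (Ne.symm hgz) a1 b1 ⟨a3, a4, e1⟩ ⟨b3, b4, e2⟩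
  rw [← e3] at b2
  rw [mem_Bl] at hu1 hu2 a5
  have e4 := h.uniq hu1.1 a5.1 hu2.2.2.1 a6.symm (Ne.symm hu2.2.1) (Ne.symm hu2.1) hw a1
    ⟨hu1.2, a5.2, hu2.2.2.2⟩ ⟨a2, a7, b2⟩
  rw [← e4] at a3
  exact hwd a3

end Hyp
end core2
end HSproof

namespace HSproof
open MulAction
set_option linter.unusedSectionVars false

section core3
variable {G Ω : Type*} [Group G] [Finite G] [Fintype Ω] [DecidableEq Ω] [MulAction G Ω]
  [FaithfulSMul G Ω]
variable {E : Ω → Ω → Prop} [DecidableRel E] {x : Ω}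

/-- pointwise stabilizer of a block -/
def N0 (G : Type*) {Ω : Type*} [Group G] [Fintype Ω] [DecidableEq Ω] [MulAction G Ω]
    (E : Ω → Ω → Prop) [DecidableRel E] (x w : Ω) : Subgroup G where
  carrier := {g | g • x = x ∧ ∀ z ∈ Bl E x w, g • z = z}
  one_mem' := ⟨one_smul _ _, fun _ _ => one_smul _ _⟩
  mul_mem' := by
    rintro a b ⟨h1, h2⟩ ⟨h3, h4⟩
    refine ⟨by rw [mul_smul, h3, h1], fun z hz => by rw [mul_smul, h4 z hz, h2 z hz]⟩
  inv_mem' := by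
    rintro a ⟨h1, h2⟩
    exact ⟨by rw [inv_smul_eq_iff, h1], fun z hz => by rw [inv_smul_eq_iff, h2 z hz]⟩

lemma mem_N0 {w : Ω} {g : G} : g ∈ N0 G E x w ↔ g • x = x ∧ ∀ z ∈ Bl E x w, g • z = z := Iff.rfl

namespace Hyp
variable (h : Hyp G E x)
include h

lemma N0_dvd {w : Ω} (hw : w ∈ Wb E x) : Nat.card (N0 G E x w) ∣ 16 := by
  have h1 := dvd_of_orbits (N0 G E x w) (Nat.card (N0 G E x w)) (Nb E x \ Bl E x w) (by
    intro g hg z hz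
    rw [Finset.mem_sdiff] at hz ⊢
    refine ⟨h.stN hg.1 z hz.1, fun hh => hz.2 ?_⟩
    have := hg.2 _ hh
    rw [smul_left_cancel g this] at hh; exact hh) (by
    intro z hz
    rw [Finset.mem_sdiff, mem_Nb, mem_Bl, not_and] at hz
    have h1 := Nat.card_congr (orbitProdStabilizerEquivGroup (N0 G E x w) z)
    rw [Nat.card_prod] at h1
    have h2 : Nat.card (stabilizer (N0 G E x w) z) = 1 := by
      rw [Subgroup.card_eq_one, eq_bot_iff]
      intro g hg
      rw [Subgroup.mem_bot]
      apply Subtype.ext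
      exact h.free g.2.1 hw g.2.2 hz.1 (hz.2 hz.1) hg
    rw [h2, mul_one] at h1
    rw [h1])
  rwa [Finset.card_sdiff_of_subset (show Bl E x w ⊆ Nb E x from Finset.filter_subset _ _), h.n22, h.cB hw] at h1

lemma stB {g : G} (hg : g ∈ stabilizer G x) {w : Ω} (gw : g • w = w) :
    ∀ z ∈ Bl E x w, g • z ∈ Bl E x w := by
  intro z hz
  rw [mem_Bl] at hz ⊢
  refine ⟨mem_Nb.1 (h.stN hg z (mem_Nb.2 hz.1)), ?_⟩
  rw [← gw]; exact h.inv g _ _ hz.2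

lemma stB' {g : G} (hg : g ∈ stabilizer G x) {w : Ω} (gw : g • w = w) :
    ∀ z ∈ Nb E x \ Bl E x w, g • z ∈ Nb E x \ Bl E x w := by
  intro z hz
  rw [Finset.mem_sdiff] at hz ⊢
  refine ⟨h.stN hg z hz.1, fun hh => hz.2 ?_⟩
  have := h.stB (inv_mem hg) (inv_smul_eq_iff.2 gw.symm) _ hh
  simpa using this

lemma pow_one_of {s : G} {k : ℕ} (hs : s ∈ stabilizer G x) (hk : fx E x s k = 22) : s ^ k = 1 :=
  h.faith (pow_mem hs k) (h.fx_full hk)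

lemma N0_mod {w : Ω} (hw : w ∈ Wb E x) : Nat.card (N0 G E x w) % 5 = 1 := by
  classical
  obtain ⟨s, hs, hs1, hs5⟩ := h.s5
  have h5 := h.pow_one_of hs hs5
  have h1 := modfix s (Wb E x) (h.stW hs) 5 1 (by intro y _; rw [pow_one, h5, one_smul])
  obtain ⟨w5, hw5⟩ : ((Wb E x).filter (fun y => s • y = y)).Nonempty := by
    rw [← Finset.card_pos]
    rw [h.cW] at h1
    unfold Nat.ModEq at h1; omega
  rw [Finset.mem_filter] at hw5
  obtain ⟨g, hg, hgw⟩ := h.T77 w5 hw5.1 w hw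
  rw [← h.fx_conj hg] at hs1 hs5
  have hs' := h.mem_conj hg hs
  have hsw : (g * s * g⁻¹) • w = w := by
    rw [← hgw, mul_smul, mul_smul, inv_smul_smul, hw5.2]
  have h5' := h.pow_one_of hs' hs5
  generalize g * s * g⁻¹ = r at *
  have m1 := modfix r (Bl E x w) (h.stB hs' hsw) 5 1 (by intro y _; rw [pow_one, h5', one_smul])
  have m2 := modfix r (Nb E x \ Bl E x w) (h.stB' hs' hsw) 5 1 (by intro y _; rw [pow_one, h5', one_smul])
  rw [h.cB hw] at m1
  rw [Finset.card_sdiff_of_subset (show Bl E x w ⊆ Nb E x from Finset.filter_subset _ _), h.n22, h.cB hw] at m2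
  have m3 : ((Bl E x w).filter (fun y => r • y = y)).card +
      ((Nb E x \ Bl E x w).filter (fun y => r • y = y)).card = 2 := by
    rw [← hs1, ← Finset.card_union_of_disjoint]
    · unfold fx
      congr 1
      ext z
      simp only [Finset.mem_union, Finset.mem_filter, Finset.mem_sdiff, mem_Bl, mem_Nb, pow_one]
      tauto
    · rw [Finset.disjoint_left]; intro y; simp; tauto
  unfold Nat.ModEq at m1 m2
  have m4 : ((Nb E x \ Bl E x w).filter (fun y => r • y = y)).card = 1 := by omega
  obtain ⟨d, hd⟩ := Finset.card_eq_one.1 m4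
  have hd1 : d ∈ (Nb E x \ Bl E x w).filter (fun y => r • y = y) := by rw [hd]; simp
  rw [Finset.mem_filter] at hd1
  haveI : Fintype G := Fintype.ofFinite G
  have m5 := modfixF (fun k : G => r * k * r⁻¹) (Finset.univ.filter (· ∈ N0 G E x w)) (by
    intro k hk
    simp only [Finset.mem_filter, Finset.mem_univ, true_and] at hk ⊢
    refine ⟨h.mem_conj hs' hk.1, fun z hz => ?_⟩
    have h2 := h.stB (inv_mem hs') (inv_smul_eq_iff.2 hsw.symm) z hz
    rw [mul_smul, mul_smul, hk.2 _ h2, smul_inv_smul]) 5 1 (by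
    intro k _
    have : ∀ n : ℕ, (fun k : G => r * k * r⁻¹)^[n] k = r ^ n * k * (r ^ n)⁻¹ := by
      intro n
      induction n with
      | zero => simp
      | succ n ih => rw [Function.iterate_succ_apply', ih]; group
    rw [this, pow_one, h5']; simp)
  have m6 : (Finset.univ.filter (· ∈ N0 G E x w)).filter (fun k : G => r * k * r⁻¹ = k) = {1} := by
    ext k
    simp only [Finset.mem_filter, Finset.mem_univ, true_and, Finset.mem_singleton]
    constructor
    · rintro ⟨h1, h2⟩
      have h3 : k • d ∈ (Nb E x \ Bl E x w).filter (fun y => r • y = y) := by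
        rw [Finset.mem_filter, Finset.mem_sdiff]
        rw [Finset.mem_sdiff] at hd1
        refine ⟨⟨h.stN h1.1 d hd1.1.1, fun hh => hd1.1.2 ?_⟩, ?_⟩
        · have := h1.2 _ hh
          rw [smul_left_cancel k this] at hh; exact hh
        · rw [← mul_smul, mul_inv_eq_iff_eq_mul.1 h2, mul_smul, hd1.2]
      rw [hd, Finset.mem_singleton] at h3
      rw [Finset.mem_sdiff, mem_Nb, mem_Bl, not_and] at hd1
      exact h.free h1.1 hw h1.2 hd1.1.1 (hd1.1.2 hd1.1.1) h3
    · rintro rfl; exact ⟨one_mem _, by simp⟩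
  rw [m6, Finset.card_singleton] at m5
  have m7 : Nat.card (N0 G E x w) = (Finset.univ.filter (· ∈ N0 G E x w)).card := by
    rw [Nat.card_eq_fintype_card, Fintype.card_of_subtype]; simp
  rw [m7]; exact m5

lemma N0_ne {w : Ω} (hw : w ∈ Wb E x) : Nat.card (N0 G E x w) ≠ 1 := by
  obtain ⟨s, hs, hs1, -, hs4, hs8⟩ := h.s8
  have h8 := h.pow_one_of hs hs8
  obtain ⟨u, v, huv, hf⟩ := Finset.card_eq_two.1 hs1
  have hu : u ∈ (Nb E x).filter (fun z => s ^ 1 • z = z) := by rw [hf]; simp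
  have hv : v ∈ (Nb E x).filter (fun z => s ^ 1 • z = z) := by rw [hf]; simp
  rw [Finset.mem_filter, mem_Nb, pow_one] at hu hv
  have m1 := modfix s ((Wb E x).filter (fun w => E w u ∧ E w v)) (by
    intro z hz
    rw [Finset.mem_filter] at hz ⊢
    refine ⟨h.stW hs z hz.1, ?_, ?_⟩
    · have := h.inv s _ _ hz.2.1; rwa [hu.2] at this
    · have := h.inv s _ _ hz.2.2; rwa [hv.2] at this) 2 3 (by
    intro y _; rw [show 2 ^ 3 = 8 from rfl, h8, one_smul])
  rw [h.pair5 hu.1 hv.1 huv] at m1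
  obtain ⟨w8, hw8⟩ : (((Wb E x).filter (fun w => E w u ∧ E w v)).filter (fun y => s • y = y)).Nonempty := by
    rw [← Finset.card_pos]
    unfold Nat.ModEq at m1; omega
  rw [Finset.mem_filter, Finset.mem_filter] at hw8
  obtain ⟨⟨hw8, hw8u, hw8v⟩, hsw8⟩ := hw8
  have m2 := four_fix s (((Bl E x w8).erase u).erase v) (by
    intro z hz
    simp only [Finset.mem_erase] at hz ⊢
    refine ⟨fun hh => hz.1 ?_, fun hh => hz.2.1 ?_, h.stB hs hsw8 z hz.2.2⟩
    · rw [← hv.2] at hh; exact smul_left_cancel s hh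
    · rw [← hu.2] at hh; exact smul_left_cancel s hh) (by
    rw [Finset.card_erase_of_mem (Finset.mem_erase.2 ⟨huv.symm, mem_Bl.2 ⟨hv.1, hw8v⟩⟩),
      Finset.card_erase_of_mem (mem_Bl.2 ⟨hu.1, hw8u⟩), h.cB hw8]) (by
    intro y _; rw [h8, one_smul])
  have m3 : ∀ z ∈ Bl E x w8, s ^ 4 • z = z := by
    intro z hz
    by_cases h1 : z = u
    · rw [h1]; simp only [pow_succ, pow_zero, one_mul, mul_smul, hu.2]
    by_cases h2 : z = v
    · rw [h2]; simp only [pow_succ, pow_zero, one_mul, mul_smul, hv.2]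
    exact m2 z (by simp only [Finset.mem_erase]; exact ⟨h2, h1, hz⟩)
  obtain ⟨g, hg, hgw⟩ := h.T77 w8 hw8 w hw
  intro hc
  rw [Subgroup.card_eq_one, eq_bot_iff] at hc
  have m4 : g * s ^ 4 * g⁻¹ ∈ N0 G E x w := by
    refine ⟨h.mem_conj hg (pow_mem hs 4), fun z hz => ?_⟩
    have : g⁻¹ • z ∈ Bl E x w8 := by
      rw [mem_Bl] at hz ⊢
      refine ⟨mem_Nb.1 (h.stN (inv_mem hg) z (mem_Nb.2 hz.1)), ?_⟩
      rw [← h.inv_iff g, hgw, smul_inv_smul]; exact hz.2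
    rw [mul_smul, mul_smul, m3 _ this, smul_inv_smul]
  have m5 := hc m4
  rw [Subgroup.mem_bot, mul_inv_eq_one, mul_eq_left] at m5
  unfold fx at hs4
  rw [m5, Finset.filter_true_of_mem (fun z _ => one_smul _ z), h.n22] at hs4
  omega

lemma N0_card {w : Ω} (hw : w ∈ Wb E x) : Nat.card (N0 G E x w) = 16 := by
  have h1 := h.N0_dvd hw
  have h2 := h.N0_mod hw
  have h3 := h.N0_ne hw
  generalize Nat.card (N0 G E x w) = n at *
  have : n ≤ 16 := Nat.le_of_dvd (by norm_num) h1
  interval_cases n <;> omega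

/-- transport by conjugation an element fixing three points -/
lemma conj3 {s : G} {a b c a' b' c' : Ω} (ha : E x a) (hb : E x b) (hc : E x c)
    (hab : a ≠ b) (hac : a ≠ c) (hbc : b ≠ c) (ha' : E x a') (hb' : E x b') (hc' : E x c')
    (hab' : a' ≠ b') (hac' : a' ≠ c') (hbc' : b' ≠ c') (sa : s • a = a) (sb : s • b = b) (sc : s • c = c) :
    ∃ g ∈ stabilizer G x, g • a = a' ∧ g • b = b' ∧ g • c = c' ∧ (g * s * g⁻¹) • a' = a' ∧
      (g * s * g⁻¹) • b' = b' ∧ (g * s * g⁻¹) • c' = c' := by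
  obtain ⟨g, hg, rfl, rfl, rfl⟩ := h.T3 (mem_Nb.2 ha) (mem_Nb.2 hb) (mem_Nb.2 hc) hab hac hbc
    (mem_Nb.2 ha') (mem_Nb.2 hb') (mem_Nb.2 hc') hab' hac' hbc'
  refine ⟨g, hg, rfl, rfl, rfl, ?_, ?_, ?_⟩ <;>
  rw [mul_smul, mul_smul, inv_smul_smul] <;> congr 1

lemma ex_nonfix {s : G} (h8 : fx E x s 3 = 8) : ∃ a b c w, E x a ∧ E x b ∧ E x c ∧
    a ≠ b ∧ a ≠ c ∧ b ≠ c ∧ s ^ 3 • a = a ∧ s ^ 3 • b = b ∧ s ^ 3 • c = c ∧ w ∈ Wb E x ∧ E w a ∧ E w b ∧ E w c ∧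
    ∃ z ∈ Bl E x w, s ^ 3 • z ≠ z := by
  by_contra hno
  push Not at hno
  unfold fx at h8
  set F := (Nb E x).filter (fun z => s ^ 3 • z = z) with hF
  have hmem : ∀ z, z ∈ F ↔ E x z ∧ s ^ 3 • z = z := by intro z; simp [hF]
  have key : ∀ a b c, a ∈ F → b ∈ F → c ∈ F → a ≠ b → a ≠ c → b ≠ c →
      ∃ w ∈ Wb E x, E w a ∧ E w b ∧ E w c ∧ Bl E x w ⊆ F := by
    intro a b c ha hb hc hab hac hbc
    rw [hmem] at ha hb hc
    obtain ⟨w, hw, h1, h2, h3⟩ := h.stei ha.1 hb.1 hc.1 hab hac hbc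
    refine ⟨w, hw, h1, h2, h3, fun z hz => (hmem z).2 ⟨(mem_Bl.1 hz).1, ?_⟩⟩
    exact hno a b c w ha.1 hb.1 hc.1 hab hac hbc ha.2 hb.2 hc.2 hw h1 h2 h3 z hz
  obtain ⟨a, b, c, ha, hb, hc, hab, hac, hbc⟩ := h.three_distinct (s := F) (by rw [h8]; norm_num)
  obtain ⟨w1, hw1, e1, e2, e3, hs1⟩ := key a b c ha hb hc hab hac hbc
  have hc2 : (F \ Bl E x w1).card = 2 := by
    rw [Finset.card_sdiff_of_subset hs1, h8, h.cB hw1]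
  obtain ⟨y, z, hyz, hyz2⟩ := Finset.card_eq_two.1 hc2
  have hy : y ∈ F \ Bl E x w1 := by rw [hyz2]; simp
  have hz : z ∈ F \ Bl E x w1 := by rw [hyz2]; simp
  rw [Finset.mem_sdiff] at hy hz
  have ha1 : a ∈ Bl E x w1 := mem_Bl.2 ⟨((hmem a).1 ha).1, e1⟩
  have hya : y ≠ a := by rintro rfl; exact hy.2 ha1
  have hza : z ≠ a := by rintro rfl; exact hz.2 ha1
  obtain ⟨w2, hw2, f1, f2, f3, hs2⟩ := key y z a hy.1 hz.1 ha hyz hya hza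
  have hne : w1 ≠ w2 := by
    rintro rfl; exact hy.2 (mem_Bl.2 ⟨((hmem y).1 hy.1).1, f1⟩)
  have i1 : (Bl E x w2 ∩ Bl E x w1).card ≤ 2 := by
    by_contra hh
    obtain ⟨a, b, c, ha, hb, hc, hab, hac, hbc⟩ := h.three_distinct (s := Bl E x w2 ∩ Bl E x w1) (by omega)
    simp only [Finset.mem_inter, mem_Bl] at ha hb hc
    exact hne (h.uniq ha.1.1 hb.1.1 hc.1.1 hab hac hbc hw1 hw2 ⟨ha.2.2, hb.2.2, hc.2.2⟩
      ⟨ha.1.2, hb.1.2, hc.1.2⟩)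
  have i2 : (Bl E x w2 \ Bl E x w1).card ≤ 2 := by
    rw [← hc2]; exact Finset.card_le_card (Finset.sdiff_subset_sdiff hs2 le_rfl)
  have i3 := Finset.card_inter_add_card_sdiff (Bl E x w2) (Bl E x w1)
  rw [h.cB hw2] at i3
  omega

end Hyp
end core3
end HSproof

namespace HSproof
open MulAction
set_option linter.unusedSectionVars false

section core4
variable {G Ω : Type*} [Group G] [Finite G] [Fintype Ω] [DecidableEq Ω] [MulAction G Ω]
  [FaithfulSMul G Ω]
variable {E : Ω → Ω → Prop} [DecidableRel E] {x : Ω}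
namespace Hyp
variable (h : Hyp G E x)
include h

lemma card_G : Nat.card G = 88704000 := by
  classical
  obtain ⟨s, hs, hs2, hs3, hs6⟩ := h.s6
  have h6 := h.pow_one_of hs hs6
  obtain ⟨a, b, c, w, ha, hb, hc, hab, hac, hbc, sa, sb, sc, hw, wa, wb, wc, z0, hz0, hz0'⟩ :=
    h.ex_nonfix hs3
  set H := stabilizer G x with hH
  set T := H ⊓ stabilizer G a ⊓ stabilizer G b ⊓ stabilizer G c with hT
  have c1 : Nat.card G = 100 * Nat.card H := by
    have := card_chain (⊤ : Subgroup G) (Finset.univ : Finset Ω) (by simp) x (by simp) (by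
      intro z _; obtain ⟨g, hg⟩ := h.tr x z; exact ⟨g, trivial, hg⟩)
    rwa [Finset.card_univ, h.c, top_inf_eq, Subgroup.card_top] at this
  have c2 : Nat.card H = 22 * Nat.card (H ⊓ stabilizer G a : Subgroup G) := by
    rw [← h.n22]
    exact card_chain H (Nb E x) (fun g hg => h.stN hg) a (mem_Nb.2 ha) (h.T22 a (mem_Nb.2 ha))
  have c3 : Nat.card (H ⊓ stabilizer G a : Subgroup G) =
      21 * Nat.card (H ⊓ stabilizer G a ⊓ stabilizer G b : Subgroup G) := by
    have hb' : b ∈ (Nb E x).erase a := Finset.mem_erase.2 ⟨hab.symm, mem_Nb.2 hb⟩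
    have := card_chain (H ⊓ stabilizer G a) ((Nb E x).erase a) (by
      rintro g ⟨hg, hga⟩ z hz
      rw [Finset.mem_erase] at hz ⊢
      refine ⟨fun hh => hz.1 ?_, h.stN hg z hz.2⟩
      rw [← mem_stabilizer_iff.1 hga] at hh; exact smul_left_cancel g hh) b hb'
      (h.T21 (mem_Nb.2 ha) b hb')
    rwa [Finset.card_erase_of_mem (mem_Nb.2 ha), h.n22] at this
  have c4 : Nat.card (H ⊓ stabilizer G a ⊓ stabilizer G b : Subgroup G) = 20 * Nat.card T := by
    have hc' : c ∈ ((Nb E x).erase a).erase b := by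
      simp only [Finset.mem_erase]; exact ⟨hbc.symm, hac.symm, mem_Nb.2 hc⟩
    have := card_chain (H ⊓ stabilizer G a ⊓ stabilizer G b) (((Nb E x).erase a).erase b) (by
      rintro g ⟨⟨hg, hga⟩, hgb⟩ z hz
      simp only [Finset.mem_erase] at hz ⊢
      refine ⟨fun hh => hz.1 ?_, fun hh => hz.2.1 ?_, h.stN hg z hz.2.2⟩
      · rw [← mem_stabilizer_iff.1 hgb] at hh; exact smul_left_cancel g hh
      · rw [← mem_stabilizer_iff.1 hga] at hh; exact smul_left_cancel g hh) c hc'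
      (h.T20 (mem_Nb.2 ha) (mem_Nb.2 hb) hab c hc')
    rwa [Finset.card_erase_of_mem (Finset.mem_erase.2 ⟨hab.symm, mem_Nb.2 hb⟩),
      Finset.card_erase_of_mem (mem_Nb.2 ha), h.n22] at this
  -- now T
  set R := (((Bl E x w).erase a).erase b).erase c with hR
  have hRm : ∀ z, z ∈ R ↔ z ≠ c ∧ z ≠ b ∧ z ≠ a ∧ z ∈ Bl E x w := by
    intro z; simp only [hR, Finset.mem_erase]
  have hRc : R.card = 3 := by
    rw [hR, Finset.card_erase_of_mem, Finset.card_erase_of_mem, Finset.card_erase_of_mem, h.cB hw]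
    · exact mem_Bl.2 ⟨ha, wa⟩
    · exact Finset.mem_erase.2 ⟨hab.symm, mem_Bl.2 ⟨hb, wb⟩⟩
    · simp only [Finset.mem_erase]; exact ⟨hbc.symm, hac.symm, mem_Bl.2 ⟨hc, wc⟩⟩
  have hTw : ∀ g ∈ T, g • w = w := by
    rintro g ⟨⟨⟨g1, g2⟩, g3⟩, g4⟩
    exact h.fixW g1 hw ha hb hc hab hac hbc ⟨wa, wb, wc⟩ g2 g3 g4
  have hTR : ∀ g ∈ T, ∀ z ∈ R, g • z ∈ R := by
    intro g hg z hz
    rw [hRm] at hz ⊢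
    have hgw := hTw g hg
    obtain ⟨⟨⟨g1, g2⟩, g3⟩, g4⟩ := hg
    refine ⟨fun hh => hz.1 ?_, fun hh => hz.2.1 ?_, fun hh => hz.2.2.1 ?_, h.stB g1 hgw z hz.2.2.2⟩
    · rw [← mem_stabilizer_iff.1 g4] at hh; exact smul_left_cancel g hh
    · rw [← mem_stabilizer_iff.1 g3] at hh; exact smul_left_cancel g hh
    · rw [← mem_stabilizer_iff.1 g2] at hh; exact smul_left_cancel g hh
  have t3 : ∀ y ∈ R, ∀ z ∈ R, ∃ g ∈ T, g • y = z := by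
    apply trans_of T R hTR
    -- element of order 3
    obtain ⟨a1, b1, c1, ha1, hb1, hc1, hab1, hac1, hbc1⟩ := h.three_distinct
      (s := (Nb E x).filter (fun z => s ^ 2 • z = z)) (by
        unfold fx at hs2
        omega)
    simp only [Finset.mem_filter, mem_Nb] at ha1 hb1 hc1
    obtain ⟨g, hg, -, -, -, ga, gb, gc⟩ := h.conj3 ha1.1 hb1.1 hc1.1 hab1 hac1 hbc1 ha hb hc hab hac hbc
      ha1.2 hb1.2 hc1.2
    have hr : g * s ^ 2 * g⁻¹ ∈ T := ⟨⟨⟨h.mem_conj hg (pow_mem hs 2), ga⟩, gb⟩, gc⟩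
    have hr3 : (g * s ^ 2 * g⁻¹) ^ 3 = 1 := by
      rw [conj_pow, ← pow_mul, h6]; simp
    have hrf : ((Nb E x).filter (fun z => (g * s ^ 2 * g⁻¹) • z = z)).card = 4 := by
      have := h.fx_conj hg (s ^ 2) 1
      unfold fx at this
      simp only [pow_one] at this
      rw [this]; exact hs2
    generalize g * s ^ 2 * g⁻¹ = r at *
    have m1 := modfix r R (hTR r hr) 3 1 (by intro y _; rw [pow_one, hr3, one_smul])
    have m2 : (R.filter (fun z => r • z = z)).card + 3 ≤ 4 := by
      have e : ({a, b, c} : Finset Ω).card = 3 := Finset.card_eq_three.2 ⟨a, b, c, hab, hac, hbc, rfl⟩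
      rw [← e, ← hrf, ← Finset.card_union_of_disjoint]
      · apply Finset.card_le_card
        intro z hz
        rw [Finset.mem_filter, mem_Nb]
        rcases Finset.mem_union.1 hz with hz | hz
        · rw [Finset.mem_filter, hRm, mem_Bl] at hz; exact ⟨hz.1.2.2.2.1, hz.2⟩
        · simp only [Finset.mem_insert, Finset.mem_singleton] at hz
          rcases hz with rfl | rfl | rfl
          · exact ⟨ha, ga⟩
          · exact ⟨hb, gb⟩
          · exact ⟨hc, gc⟩
      · rw [Finset.disjoint_left]
        intro z hz
        rw [Finset.mem_filter, hRm] at hz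
        simp only [Finset.mem_insert, Finset.mem_singleton]
        tauto
    have m3 : (R.filter (fun z => r • z = z)).card = 0 := by
      rw [hRc] at m1
      unfold Nat.ModEq at m1; omega
    intro O hO hne hst
    have m4 := modfix r O (hst r hr) 3 1 (by intro y _; rw [pow_one, hr3, one_smul])
    have m5 : (O.filter (fun z => r • z = z)).card ≤ 0 := by
      rw [← m3]; exact Finset.card_le_card (Finset.filter_subset_filter _ hO)
    have m6 := Finset.card_le_card hO
    have m7 := hne.card_pos
    rw [hRc] at m6 ⊢
    unfold Nat.ModEq at m4
    omega
  -- the involution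
  have hsT : s ^ 3 ∈ T := ⟨⟨⟨pow_mem hs 3, sa⟩, sb⟩, sc⟩
  have hs32 : (s ^ 3) ^ 2 = 1 := by rw [← pow_mul, h6]
  have n1 := modfix (s ^ 3) R (hTR _ hsT) 2 1 (by intro y _; rw [pow_one, hs32, one_smul])
  have n2 : (R.filter (fun z => s ^ 3 • z = z)).card < 3 := by
    refine lt_of_lt_of_eq ?_ hRc
    apply Finset.card_lt_card
    rw [Finset.filter_ssubset]
    refine ⟨z0, ?_, hz0'⟩
    rw [hRm]
    refine ⟨?_, ?_, ?_, hz0⟩ <;> rintro rfl <;> contradiction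
  rw [hRc] at n1
  have n3 : (R.filter (fun z => s ^ 3 • z = z)).card = 1 := by
    unfold Nat.ModEq at n1; omega
  obtain ⟨d, hd⟩ := Finset.card_eq_one.1 n3
  have hd1 : d ∈ R.filter (fun z => s ^ 3 • z = z) := by rw [hd]; simp
  rw [Finset.mem_filter] at hd1
  have c5 : Nat.card T = 3 * Nat.card (T ⊓ stabilizer G d : Subgroup G) := by
    rw [← hRc]; exact card_chain T R hTR d hd1.1 (t3 d hd1.1)
  have hD : ∀ g ∈ T ⊓ stabilizer G d, ∀ z ∈ R.erase d, g • z ∈ R.erase d := by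
    rintro g ⟨hg, hgd⟩ z hz
    rw [Finset.mem_erase] at hz ⊢
    refine ⟨fun hh => hz.1 ?_, hTR g hg z hz.2⟩
    rw [← mem_stabilizer_iff.1 hgd] at hh; exact smul_left_cancel g hh
  have hDc : (R.erase d).card = 2 := by rw [Finset.card_erase_of_mem hd1.1, hRc]
  obtain ⟨e, e', hee, hRe⟩ := Finset.card_eq_two.1 hDc
  have he : e ∈ R.erase d := by rw [hRe]; simp
  have c6 : Nat.card (T ⊓ stabilizer G d : Subgroup G) =
      2 * Nat.card (T ⊓ stabilizer G d ⊓ stabilizer G e : Subgroup G) := by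
    rw [← hDc]
    apply card_chain _ _ hD e he
    intro z hz
    have hsd : s ^ 3 ∈ T ⊓ stabilizer G d := ⟨hsT, hd1.2⟩
    have hse := hD _ hsd e he
    have hse' : s ^ 3 • e ≠ e := by
      intro hh
      have : e ∈ R.filter (fun z => s ^ 3 • z = z) := Finset.mem_filter.2 ⟨(Finset.mem_erase.1 he).2, hh⟩
      rw [hd, Finset.mem_singleton] at this
      exact (Finset.mem_erase.1 he).1 this
    rw [hRe] at hz hse
    simp only [Finset.mem_insert, Finset.mem_singleton] at hz hse
    rcases hz with rfl | rfl
    · exact ⟨1, one_mem _, one_smul _ _⟩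
    · exact ⟨_, hsd, hse.resolve_left hse'⟩
  have c7 : T ⊓ stabilizer G d ⊓ stabilizer G e = N0 G E x w := by
    ext g
    constructor
    · intro hg
      have hgD := hD g hg.1
      obtain ⟨⟨hgT, gd⟩, ge⟩ := hg
      obtain ⟨⟨⟨g1, g2⟩, g3⟩, g4⟩ := hgT
      refine ⟨g1, fun z hz => ?_⟩
      by_cases h1 : z = a
      · rw [h1]; exact g2
      by_cases h2 : z = b
      · rw [h2]; exact g3
      by_cases h3 : z = c
      · rw [h3]; exact g4
      by_cases h4 : z = d
      · rw [h4]; exact gd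
      have h5 : z ∈ R.erase d := Finset.mem_erase.2 ⟨h4, (hRm z).2 ⟨h3, h2, h1, hz⟩⟩
      have h6 := hgD z h5
      rw [hRe] at h5 h6
      simp only [Finset.mem_insert, Finset.mem_singleton] at h5 h6
      rcases h5 with rfl | rfl
      · exact ge
      · rcases h6 with h6 | h6
        · rw [← mem_stabilizer_iff.1 ge] at h6
          exact absurd (smul_left_cancel g h6).symm hee
        · exact h6
    · rintro ⟨g1, g2⟩
      have hdB := ((hRm d).1 hd1.1).2.2.2
      have heB := ((hRm e).1 (Finset.mem_erase.1 he).2).2.2.2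
      exact ⟨⟨⟨⟨⟨g1, g2 a (mem_Bl.2 ⟨ha, wa⟩)⟩, g2 b (mem_Bl.2 ⟨hb, wb⟩)⟩, g2 c (mem_Bl.2 ⟨hc, wc⟩)⟩,
        g2 d hdB⟩, g2 e heB⟩
  rw [c1, c2, c3, c4, c5, c6, c7, h.N0_card hw]

end Hyp
end core4
end HSproof

namespace HSproof
open Polynomial

section frob
universe u
variable {M L : Type u} [Field M] [Field L] [Algebra M L] [FiniteDimensional M L] [IsGalois M L]
  [Algebra ℤ[X] M] [IsFractionRing ℤ[X] M] [Algebra ℤ[X] L] [IsScalarTower ℤ[X] M L]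

lemma frobA (l : ℕ) [Fact l.Prime] (θ : ℤ[X] →+* ZMod l) :
    ∃ (κ : Type u) (_ : Field κ) (π : integralClosure ℤ[X] L →+* κ) (η : ZMod l →+* κ) (σ : L ≃ₐ[M] L),
      (∀ r : ℤ[X], η (θ r) = π (algebraMap ℤ[X] _ r)) ∧
      ∀ s s' : integralClosure ℤ[X] L, (s' : L) = σ s → π s' = π s ^ l := by
  classical
  have hθ : Function.Surjective θ := ZMod.ringHom_surjective θ
  let P := RingHom.ker θ
  have hP : P.IsMaximal := RingHom.ker_isMaximal_of_surjective θ hθ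
  let S := integralClosure ℤ[X] L
  have : CharZero M := by
    have := IsFractionRing.injective ℤ[X] M
    exact charZero_of_injective_algebraMap this
  have : Module.Finite ℤ[X] S := IsIntegralClosure.finite ℤ[X] M L S
  have : IsIntegralClosure S ℤ[X] L := inferInstance
  have : IsFractionRing S L := integralClosure.isFractionRing_of_finite_extension M L
  let := IsIntegralClosure.MulSemiringAction ℤ[X] M L S
  have : SMulCommClass (L ≃ₐ[M] L) ℤ[X] S := ⟨fun g r s => map_smul (galRestrict ℤ[X] M L S g) r s⟩
  have hinv : Algebra.IsInvariant ℤ[X] S (L ≃ₐ[M] L) := Algebra.isInvariant_of_isGalois ℤ[X] M L S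
  have hinj : Function.Injective (algebraMap ℤ[X] L) := by
    rw [IsScalarTower.algebraMap_eq ℤ[X] M L]
    exact (algebraMap M L).injective.comp (IsFractionRing.injective ℤ[X] M)
  have hinjS : Function.Injective (algebraMap ℤ[X] S) := by
    have : algebraMap ℤ[X] L = (algebraMap S L).comp (algebraMap ℤ[X] S) := IsScalarTower.algebraMap_eq _ _ _
    rw [this, RingHom.coe_comp] at hinj
    exact Function.Injective.of_comp hinj
  obtain ⟨Q, hQ, hQP⟩ := Ideal.exists_ideal_over_maximal_of_isIntegral (S := S) P (by
    rw [(RingHom.injective_iff_ker_eq_bot _).1 hinjS]; exact bot_le)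
  have e : ℤ[X] ⧸ P ≃+* ZMod l := RingHom.quotientKerEquivOfSurjective hθ
  have : Finite (ℤ[X] ⧸ P) := Finite.of_equiv _ e.symm.toEquiv
  have hcard : Nat.card (ℤ[X] ⧸ P) = l := by rw [Nat.card_congr e.toEquiv, Nat.card_zmod]
  have : Q.LiesOver P := ⟨hQP.symm⟩
  have : Finite (S ⧸ Q) := Module.finite_of_finite (ℤ[X] ⧸ P)
  obtain ⟨σ, hσ⟩ := IsArithFrobAt.exists_of_isInvariant ℤ[X] (L ≃ₐ[M] L) Q
  let : Field (S ⧸ Q) := Ideal.Quotient.field Q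
  let π : S →+* S ⧸ Q := Ideal.Quotient.mk Q
  let η := RingHom.liftOfSurjective θ hθ ⟨π.comp (algebraMap ℤ[X] S), by
    intro r hr
    rw [RingHom.mem_ker, RingHom.comp_apply]
    apply Ideal.Quotient.eq_zero_iff_mem.2
    have : r ∈ Q.comap (algebraMap ℤ[X] S) := by rw [hQP]; exact hr
    exact this⟩
  refine ⟨S ⧸ Q, inferInstance, π, η, σ, ?_, ?_⟩
  · intro r
    exact RingHom.liftOfRightInverse_comp_apply θ _ _ _ r
  · intro s s' hs
    have h1 := hσ s
    have h2 : Q.under ℤ[X] = P := hQP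
    rw [h2, hcard] at h1
    have h3 : MulSemiringAction.toAlgHom ℤ[X] S σ s = s' := by
      apply Subtype.ext
      rw [hs]
      exact algebraMap_galRestrict_apply ℤ[X] σ s
    rw [h3] at h1
    rw [← map_pow]
    exact Ideal.Quotient.eq.2 h1

end frob
end HSproof

namespace HSproof
open Polynomial

section frobB
variable {M L : Type} [Field M] [Field L] [Algebra M L] [FiniteDimensional M L] [IsGalois M L]
  [Algebra ℤ[X] M] [IsFractionRing ℤ[X] M] [Algebra ℤ[X] L] [IsScalarTower ℤ[X] M L]

lemma frobB (l : ℕ) [Fact l.Prime] (θ : ℤ[X] →+* ZMod l) (f : ℤ[X][X])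
    (hs : (f.map (algebraMap ℤ[X] L)).Splits) (ha : θ f.leadingCoeff ≠ 0)
    (hsep : (f.map θ).Separable) :
    ∃ σ : L ≃ₐ[M] L, (f.map (algebraMap ℤ[X] L)).roots.Nodup ∧
      ∀ (d : ℕ) (h h' : (ZMod l)[X]), f.map θ = h * h' →
        (∀ (κ : Type) [Field κ] (η : ZMod l →+* κ) (r : κ), eval₂ η r h = 0 → r ^ (l ^ d) = r) →
        (∀ (κ : Type) [Field κ] (η : ZMod l →+* κ) (r : κ), eval₂ η r h' = 0 → r ^ (l ^ d) ≠ r) →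
        ∀ [DecidablePred fun y : L => (σ ^ d) y = y],
        ((f.map (algebraMap ℤ[X] L)).roots.filter (fun y => (σ ^ d) y = y)).card = h.natDegree := by
  classical
  obtain ⟨κ, hκ, π, η, σ, h1, h2⟩ := frobA (M := M) (L := L) l θ
  have hinj : Function.Injective (algebraMap ℤ[X] L) := by
    rw [IsScalarTower.algebraMap_eq ℤ[X] M L]
    exact (algebraMap M L).injective.comp (IsFractionRing.injective ℤ[X] M)
  let S := integralClosure ℤ[X] L
  set fL := f.map (algebraMap ℤ[X] L) with hfL
  set a := f.leadingCoeff with hadef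
  have ha0 : a ≠ 0 := by rintro h; rw [h, map_zero] at ha; exact ha rfl
  have hf0 : f ≠ 0 := fun h => ha0 (by rw [hadef, h, leadingCoeff_zero])
  have hfL0 : fL ≠ 0 := (Polynomial.map_ne_zero_iff hinj).2 hf0
  have hlc : fL.leadingCoeff = algebraMap ℤ[X] L a := leadingCoeff_map_of_injective hinj f
  let z : L → S := fun y => if h : aeval y f = 0 then ⟨a • y, isIntegral_leadingCoeff_smul f y h⟩ else 0
  have hz : ∀ y ∈ fL.roots, (z y : L) = algebraMap ℤ[X] L a * y := by
    intro y hy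
    have h : aeval y f = 0 := by
      rw [mem_roots hfL0, IsRoot, hfL, eval_map] at hy
      exact hy
    simp only [z, dif_pos h, Algebra.smul_def]
  let ab : κ := η (θ a)
  have hab : ab ≠ 0 := by
    simpa [ab] using ha
  have habl : ab ^ l = ab := by
    simp only [ab]; rw [← map_pow, ZMod.pow_card]
  have hπa : π (algebraMap ℤ[X] S a) = ab := (h1 a).symm
  let φ : L → κ := fun y => π (z y) / ab
  -- polynomial identity in S[Y]
  set n := fL.roots.card with hn
  have key : C (algebraMap ℤ[X] S a) ^ n * f.map (algebraMap ℤ[X] S) =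
      C (algebraMap ℤ[X] S a) * (fL.roots.map (fun y => C (algebraMap ℤ[X] S a) * X - C (z y))).prod := by
    apply Polynomial.map_injective (algebraMap S L) Subtype.val_injective
    rw [Polynomial.map_mul, Polynomial.map_mul, Polynomial.map_pow, map_C, Polynomial.map_map, ← IsScalarTower.algebraMap_eq,
      ← IsScalarTower.algebraMap_apply, Polynomial.map_multiset_prod, Multiset.map_map]
    have e1 : fL.roots.map (map (algebraMap S L) ∘ fun y => C (algebraMap ℤ[X] S a) * X - C (z y))
        = fL.roots.map (fun y => C (algebraMap ℤ[X] L a) * (X - C y)) := by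
      apply Multiset.map_congr rfl
      intro y hy
      simp only [Function.comp, Polynomial.map_sub, Polynomial.map_mul, map_C, map_X,
        ← IsScalarTower.algebraMap_apply]
      have : algebraMap S L (z y) = algebraMap ℤ[X] L a * y := hz y hy
      rw [this, C_mul, mul_sub]
    rw [e1, Multiset.prod_map_mul, Multiset.map_const', Multiset.prod_replicate]
    have e2 := hs.eq_prod_roots
    rw [hlc] at e2
    conv_lhs => rw [← hfL, e2]
    ring
  have key2 : f.map (η.comp θ) = C ab * (fL.roots.map (fun y => X - C (φ y))).prod := by
    have e3 : η.comp θ = π.comp (algebraMap ℤ[X] S) := RingHom.ext h1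
    have := congrArg (map π) key
    rw [Polynomial.map_mul, Polynomial.map_mul, Polynomial.map_pow, map_C, Polynomial.map_map, ← e3, hπa,
      Polynomial.map_multiset_prod, Multiset.map_map] at this
    have e1 : fL.roots.map (map π ∘ fun y => C (algebraMap ℤ[X] S a) * X - C (z y))
        = fL.roots.map (fun y => C ab * (X - C (φ y))) := by
      apply Multiset.map_congr rfl
      intro y hy
      simp only [Function.comp, Polynomial.map_sub, Polynomial.map_mul, map_C, map_X, hπa]
      rw [mul_sub, ← C_mul]
      simp only [φ]
      rw [mul_div_cancel₀ _ hab]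
    rw [e1, Multiset.prod_map_mul, Multiset.map_const', Multiset.prod_replicate, ← hn] at this
    have hc : (C ab : κ[X]) ^ n ≠ 0 := pow_ne_zero _ (C_ne_zero.2 hab)
    apply mul_left_cancel₀ hc
    rw [this]; ring
  have key2' : (f.map θ).map η = C ab * (fL.roots.map (fun y => X - C (φ y))).prod := by
    rw [Polynomial.map_map]; exact key2
  have hroots : ((f.map θ).map η).roots = fL.roots.map φ := by
    rw [key2', roots_C_mul _ hab]
    have := Polynomial.roots_multiset_prod_X_sub_C (fL.roots.map φ)
    rw [Multiset.map_map] at this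
    exact this
  have hsep' : ((f.map θ).map η).Separable := hsep.map
  have hne : (f.map θ).map η ≠ 0 := hsep'.ne_zero
  have hnd : (fL.roots.map φ).Nodup := by rw [← hroots]; exact nodup_roots hsep'
  have hspl : ((f.map θ).map η).Splits := by
    rw [key2']
    refine Splits.mul (Splits.C _) (Splits.multisetProd ?_)
    intro g hg
    obtain ⟨y, _, rfl⟩ := Multiset.mem_map.1 hg
    exact Splits.X_sub_C _
  have hσr : ∀ (τ : L ≃ₐ[M] L) y, y ∈ fL.roots → τ y ∈ fL.roots := by
    intro τ y hy
    rw [mem_roots hfL0, IsRoot, hfL, eval_map, ← aeval_def] at hy ⊢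
    have : (aeval (τ y)) f = τ ((aeval y) f) := by
      have := Polynomial.aeval_algHom_apply (τ.toAlgHom.restrictScalars ℤ[X]) y f
      exact this
    rw [this, hy, map_zero]
  have hσ1 : ∀ y ∈ fL.roots, φ (σ y) = φ y ^ l := by
    intro y hy
    have e := h2 (z y) (z (σ y)) (by
      rw [hz _ (hσr σ y hy), hz y hy, map_mul]
      congr 1
      rw [IsScalarTower.algebraMap_apply ℤ[X] M L, AlgEquiv.commutes])
    simp only [φ]
    rw [e, div_pow, habl]
  have hσd : ∀ d, ∀ y ∈ fL.roots, φ ((σ ^ d) y) = φ y ^ (l ^ d) := by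
    intro d
    induction d with
    | zero => intro y _; simp
    | succ d ih =>
      intro y hy
      rw [pow_succ', AlgEquiv.mul_apply, hσ1 _ (hσr _ y hy), ih y hy, pow_succ, pow_mul]
  have hinjφ : ∀ y ∈ fL.roots, ∀ y' ∈ fL.roots, φ y = φ y' → y = y' := by
    intro y hy y' hy' h
    exact Multiset.inj_on_of_nodup_map hnd y hy y' hy' h
  refine ⟨σ, Multiset.Nodup.of_map φ hnd, ?_⟩
  intro d h h' hh hh1 hh2 _
  have c1 : (fL.roots.filter (fun y => (σ ^ d) y = y)).card =
      ((fL.roots.map φ).filter (fun r => r ^ (l ^ d) = r)).card := by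
    rw [Multiset.filter_map, Multiset.card_map]
    congr 1
    apply Multiset.filter_congr
    intro y hy
    simp only [Function.comp]
    rw [← hσd d y hy]
    exact ⟨fun h => by rw [h], fun h => hinjφ _ (hσr _ y hy) _ hy h⟩
  rw [c1, ← hroots, hh, Polynomial.map_mul]
  rw [hh, Polynomial.map_mul] at hne hspl
  rw [roots_mul hne, Multiset.filter_add]
  rw [Multiset.filter_eq_self.2, Multiset.filter_eq_nil.2, add_zero]
  · have : (h.map η).Splits := Splits.of_dvd hspl hne (Dvd.intro _ rfl)
    rw [← this.natDegree_eq_card_roots, natDegree_map]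
  · intro r hr
    apply hh2 κ η r
    rw [mem_roots (right_ne_zero_of_mul hne), IsRoot, eval_map] at hr
    exact hr
  · intro r hr
    apply hh1 κ η r
    rw [mem_roots (left_ne_zero_of_mul hne), IsRoot, eval_map] at hr
    exact hr

end frobB
end HSproof

namespace HSproof
open Polynomial

/-! list arithmetic modulo `l` -/
def padd (l : ℕ) : List ℕ → List ℕ → List ℕ
  | [], b => b
  | x::a, [] => x::a
  | x::a, y::b => Nat.mod (Nat.add x y) l :: padd l a b
def psc (l c : ℕ) : List ℕ → List ℕ
  | [] => []
  | x::a => Nat.mod (Nat.mul c x) l :: psc l c a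
def pmul (l : ℕ) : List ℕ → List ℕ → List ℕ
  | [], _ => []
  | x::a, b => padd l (psc l x b) (0 :: pmul l a b)
def pder (l : ℕ) : List ℕ → List ℕ
  | [] => []
  | _::a => padd l a (0 :: pder l a)
def allz : List ℕ → Bool
  | [] => true
  | x::a => x == 0 && allz a
def isone : List ℕ → Bool
  | [] => false
  | x::a => x == 1 && allz a
def step (l c b : ℕ) : List ℕ → List ℕ → List ℕ → List ℕ
  | x::xs, m::ms, y::ys => Nat.mod (Nat.add (Nat.add x (Nat.mul c m)) (Nat.mul b y)) l :: step l c b xs ms ys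
  | [], m::_, y::_ => [Nat.mod (Nat.add (Nat.mul c m) (Nat.mul b y)) l]
  | _, _, _ => []
def mulmod (l : ℕ) (ng : List ℕ) : List ℕ → List ℕ → List ℕ → List ℕ
  | acc, [], _ => acc
  | [], _, _ => []
  | c::xs, a::as, b => mulmod l ng (step l c a xs ng b) as b
def powb (l : ℕ) (ng z a : List ℕ) : List Bool → List ℕ → List ℕ
  | [], acc => acc
  | true::bs, acc => powb l ng z a bs (mulmod l ng z (mulmod l ng z acc acc) a)
  | false::bs, acc => powb l ng z a bs (mulmod l ng z acc acc)
def bval : List Bool → ℕ → ℕ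
  | [], e => e
  | true::bs, e => bval bs (e + e + 1)
  | false::bs, e => bval bs (e + e)
def frob (l : ℕ) (ng z : List ℕ) (bs : List Bool) : ℕ → List ℕ → List ℕ
  | 0, a => a
  | d+1, a => frob l ng z bs d (powb l ng z a bs a)
def zl : List ℕ → List ℕ
  | [] => []
  | _::t => 0 :: zl t
def xl : List ℕ → List ℕ
  | [] => []
  | [a] => [a]
  | _::_::t => zl t ++ [1, 0]
def onel : List ℕ → List ℕ
  | [] => []
  | _::t => zl t ++ [1]
def zadd (l : ℕ) : List ℕ → List ℕ → List ℕ
  | x::a, y::b => ((x+y) % l) :: zadd l a b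
  | _, _ => []
/-- monic factor, low first -/
def gl (l : ℕ) (ng : List ℕ) : List ℕ := (psc l (l-1) ng).reverse ++ [1]
def gprod (l : ℕ) : List (List ℕ) → List ℕ
  | [] => [1]
  | g::gs => pmul l (gl l g) (gprod l gs)
def chkfix (l : ℕ) (bs : List Bool) (d : ℕ) (g : List ℕ) : Bool :=
  frob l g (zl g) bs d (xl g) == xl g
def chkmov (l : ℕ) (bs : List Bool) (d : ℕ) (g u : List ℕ) : Bool :=
  mulmod l g (zl g) u (frob l g (zl g) bs d (xl g)) == zadd l (onel g) (mulmod l g (zl g) u (xl g))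
def chk2 (l : ℕ) (bs : List Bool) (d : ℕ) : List (List ℕ) → List (List ℕ) → Bool
  | [], [] => true
  | g::gs, []::cs => chkfix l bs d g && chk2 l bs d gs cs
  | g::gs, (a::u)::cs => chkmov l bs d g (a::u) && chk2 l bs d gs cs
  | _, _ => false
def cnt : List (List ℕ) → List (List ℕ) → ℕ
  | g::gs, []::cs => g.length + cnt gs cs
  | _::gs, (_::_)::cs => cnt gs cs
  | _, _ => 0
def lensum : List (List ℕ) → ℕ
  | [] => 0
  | g::gs => g.length + lensum gs
def chk1 (l u : ℕ) (fl : List ℕ) (gs : List (List ℕ)) (U V : List ℕ) (bs : List Bool) : Bool :=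
  psc l u (gprod l gs) == fl && isone (padd l (pmul l U fl) (pmul l V (pder l fl))) &&
  bval bs 1 == l && (u % l != 0) && gs.all (fun g => g.length != 0) && fl.length == lensum gs + 1

/-! semantics -/
lemma nm (a b : ℕ) : Nat.mod a b = a % b := rfl
lemma na (a b : ℕ) : Nat.add a b = a + b := rfl
lemma nu (a b : ℕ) : Nat.mul a b = a * b := rfl
section sem
variable (l : ℕ)
noncomputable def tP : List ℕ → (ZMod l)[X]
  | [] => 0
  | c::cs => C (c : ZMod l) + X * tP cs

lemma tP_padd (a b : List ℕ) : tP l (padd l a b) = tP l a + tP l b := by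
  induction a generalizing b with
  | nil => simp [padd, tP]
  | cons x a ih =>
    cases b with
    | nil => simp [padd, tP]
    | cons y b =>
      simp only [padd, tP, ih, nm, na, ZMod.natCast_mod, Nat.cast_add, C_add]; ring
lemma tP_psc (c : ℕ) (a : List ℕ) : tP l (psc l c a) = C (c : ZMod l) * tP l a := by
  induction a with
  | nil => simp [psc, tP]
  | cons x a ih => simp only [psc, tP, ih, nm, nu, ZMod.natCast_mod, Nat.cast_mul, C_mul]; ring
lemma tP_pmul (a b : List ℕ) : tP l (pmul l a b) = tP l a * tP l b := by
  induction a with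
  | nil => simp [pmul, tP]
  | cons x a ih => simp only [pmul, tP, tP_padd, tP_psc, ih, Nat.cast_zero, C_0]; ring
lemma tP_pder (a : List ℕ) : tP l (pder l a) = derivative (tP l a) := by
  induction a with
  | nil => simp [pder, tP]
  | cons x a ih => simp only [pder, tP, tP_padd, ih, Nat.cast_zero, C_0, derivative_add, derivative_C, derivative_mul, derivative_X]; ring
lemma tP_allz (a : List ℕ) (h : allz a = true) : tP l a = 0 := by
  induction a with
  | nil => simp [tP]
  | cons x a ih =>
    simp only [allz, Bool.and_eq_true, beq_iff_eq] at h
    simp [tP, h.1, ih h.2]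
lemma tP_isone (a : List ℕ) (h : isone a = true) : tP l a = 1 := by
  cases a with
  | nil => simp [isone] at h
  | cons x a =>
    simp only [isone, Bool.and_eq_true, beq_iff_eq] at h
    simp [tP, h.1, tP_allz l a h.2]
lemma tP_append (a b : List ℕ) : tP l (a ++ b) = tP l a + X ^ a.length * tP l b := by
  induction a with
  | nil => simp [tP]
  | cons x a ih => simp only [List.cons_append, tP, ih, List.length_cons]; ring
lemma tP_deg (a : List ℕ) : (tP l a).degree < (a.length : WithBot ℕ) := by
  induction a with
  | nil => simp [tP]
  | cons x a ih =>
    refine (degree_lt_iff_coeff_zero _ _).2 fun m hm => ?_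
    rw [degree_lt_iff_coeff_zero] at ih
    simp only [List.length_cons] at hm
    obtain ⟨m, rfl⟩ : ∃ k, m = k + 1 := ⟨m - 1, by omega⟩
    simp [tP, coeff_X_mul, ih m (by omega)]
lemma psc_length (c : ℕ) (a : List ℕ) : (psc l c a).length = a.length := by
  induction a with
  | nil => rfl
  | cons x a ih => simp [psc, ih]
lemma psc_eq_map (c : ℕ) (a : List ℕ) : psc l c a = a.map (fun x => (c*x) % l) := by
  induction a with
  | nil => rfl
  | cons x a ih => simp [psc, ih, nm]

lemma tP_gl [NeZero l] (g : List ℕ) : tP l (gl l g) = X ^ g.length - tP l g.reverse := by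
  unfold gl
  rw [tP_append, psc_eq_map, ← List.map_reverse, ← psc_eq_map, tP_psc]
  have : ((l - 1 : ℕ) : ZMod l) = -1 := by
    rw [Nat.cast_sub (Nat.one_le_iff_ne_zero.2 (NeZero.ne l))]; simp
  rw [this]
  simp [tP, psc_length]
  ring

variable {l} {κ : Type} [Field κ] (η : ZMod l →+* κ) (r : κ)
noncomputable def evh (a : List ℕ) : κ := eval₂ η r (tP l a.reverse)
lemma evh_nil : evh η r [] = 0 := by simp [evh, tP]
lemma evh_cons (x : ℕ) (a : List ℕ) : evh η r (x::a) = x * r ^ a.length + evh η r a := by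
  simp only [evh, List.reverse_cons, tP_append, eval₂_add, eval₂_mul, eval₂_pow, eval₂_X, tP, eval₂_C,
    List.length_reverse, mul_zero, add_zero]
  rw [map_natCast]
  ring
lemma castmod {l : ℕ} {κ : Type} [Field κ] (η : ZMod l →+* κ) (x : ℕ) : ((x % l : ℕ) : κ) = x := by
  have := congrArg η (ZMod.natCast_mod x l)
  rwa [map_natCast, map_natCast] at this

lemma step_spec (c b : ℕ) : ∀ (xs ms ys : List ℕ), xs.length + 1 = ms.length → ms.length = ys.length →
    (step l c b xs ms ys).length = ms.length ∧
    evh η r (step l c b xs ms ys) = r * evh η r xs + c * evh η r ms + b * evh η r ys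
  | _, [], _, h, _ => by simp at h
  | _, _ :: _, [], _, h => by simp at h
  | [], m::ms, y::ys, h1, h2 => by
    have : ms = [] := by
      apply List.eq_nil_of_length_eq_zero; simpa using h1.symm
    subst this
    have : ys = [] := by
      apply List.eq_nil_of_length_eq_zero; simpa using h2.symm
    subst this
    simp [step, evh_cons, evh_nil, castmod η, nm]
  | x::xs, m::ms, y::ys, h1, h2 => by
    simp only [List.length_cons] at h1 h2
    obtain ⟨e1, e2⟩ := step_spec c b xs ms ys (by omega) (by omega)
    refine ⟨by simp [step, e1], ?_⟩
    simp only [step, evh_cons, e1, e2, nm, na, nu, castmod η]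
    have h3 : ms.length = xs.length + 1 := by omega
    have h4 : ys.length = xs.length + 1 := by omega
    rw [h3, h4]; push_cast; ring

lemma mulmod_spec (g : List ℕ) (hg : g ≠ []) (hr : r ^ g.length = evh η r g) :
    ∀ (as acc b : List ℕ), acc.length = g.length → b.length = g.length →
    (mulmod l g acc as b).length = g.length ∧
    evh η r (mulmod l g acc as b) = evh η r acc * r ^ as.length + evh η r as * evh η r b
  | [], acc, b, h1, h2 => by cases acc <;> simp_all [mulmod, evh_nil]
  | a::as, [], b, h1, h2 => by
    exfalso; apply hg; apply List.eq_nil_of_length_eq_zero; simpa using h1.symm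
  | a::as, c::xs, b, h1, h2 => by
    simp only [List.length_cons] at h1
    obtain ⟨e1, e2⟩ := step_spec η r c a xs g b h1 h2.symm
    obtain ⟨e3, e4⟩ := mulmod_spec g hg hr as (step l c a xs g b) b e1 h2
    refine ⟨by simpa [mulmod] using e3, ?_⟩
    simp only [mulmod, e4, e2, evh_cons, List.length_cons]
    rw [← hr, ← h1]; ring

lemma zl_length (g : List ℕ) : (zl g).length = g.length := by
  induction g with
  | nil => rfl
  | cons x a ih => simp [zl, ih]
lemma evh_zl (g : List ℕ) : evh η r (zl g) = 0 := by
  induction g with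
  | nil => simp [zl, evh_nil]
  | cons x a ih => simp [zl, evh_cons, ih]
lemma evh_zl_append (g a : List ℕ) : evh η r (zl g ++ a) = evh η r a := by
  induction g with
  | nil => simp [zl]
  | cons x g ih => simp [zl, evh_cons, ih]

lemma mm_spec (g : List ℕ) (hg : g ≠ []) (hr : r ^ g.length = evh η r g) (a b : List ℕ)
    (hb : b.length = g.length) : (mulmod l g (zl g) a b).length = g.length ∧
    evh η r (mulmod l g (zl g) a b) = evh η r a * evh η r b := by
  have := mulmod_spec η r g hg hr a (zl g) b (zl_length g) hb
  rwa [evh_zl, zero_mul, zero_add] at this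

lemma powb_spec (g : List ℕ) (hg : g ≠ []) (hr : r ^ g.length = evh η r g) (a : List ℕ)
    (ha : a.length = g.length) : ∀ (bs : List Bool) (acc : List ℕ) (e : ℕ), acc.length = g.length →
    evh η r acc = evh η r a ^ e →
    (powb l g (zl g) a bs acc).length = g.length ∧
    evh η r (powb l g (zl g) a bs acc) = evh η r a ^ (bval bs e)
  | [], acc, e, h1, h2 => ⟨h1, h2⟩
  | true::bs, acc, e, h1, h2 => by
    obtain ⟨e1, e2⟩ := mm_spec η r g hg hr acc acc h1
    obtain ⟨e3, e4⟩ := mm_spec η r g hg hr (mulmod l g (zl g) acc acc) a ha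
    exact powb_spec g hg hr a ha bs _ (e+e+1) e3 (by rw [e4, e2, h2]; ring)
  | false::bs, acc, e, h1, h2 => by
    obtain ⟨e1, e2⟩ := mm_spec η r g hg hr acc acc h1
    exact powb_spec g hg hr a ha bs _ (e+e) e1 (by rw [e2, h2]; ring)

lemma frob_spec (g : List ℕ) (hg : g ≠ []) (hr : r ^ g.length = evh η r g) (bs : List Bool)
    (hb : bval bs 1 = l) : ∀ (d : ℕ) (a : List ℕ), a.length = g.length →
    (frob l g (zl g) bs d a).length = g.length ∧
    evh η r (frob l g (zl g) bs d a) = evh η r a ^ (l ^ d)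
  | 0, a, h => by simp [frob, h]
  | d+1, a, h => by
    obtain ⟨e1, e2⟩ := powb_spec η r g hg hr a h bs a 1 h (by simp)
    obtain ⟨e3, e4⟩ := frob_spec g hg hr bs hb d _ e1
    refine ⟨e3, ?_⟩
    simp only [frob]
    rw [e4, e2, hb, ← pow_mul, pow_succ']

lemma xl_spec (g : List ℕ) (hg : g ≠ []) (hr : r ^ g.length = evh η r g) :
    (xl g).length = g.length ∧ evh η r (xl g) = r := by
  match g, hg, hr with
  | [a], _, hr => exact ⟨rfl, by simpa [xl] using hr.symm⟩
  | a::b::t, _, _ =>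
    refine ⟨by simp [xl, zl_length], ?_⟩
    rw [xl, evh_zl_append]; simp [evh_cons, evh_nil]
lemma onel_spec (g : List ℕ) (hg : g ≠ []) :
    (onel g).length = g.length ∧ evh η r (onel g) = 1 := by
  match g, hg with
  | a::t, _ =>
    refine ⟨by simp [onel, zl_length], ?_⟩
    rw [onel, evh_zl_append]; simp [evh_cons, evh_nil]
lemma zadd_spec : ∀ (a b : List ℕ), a.length = b.length →
    (zadd l a b).length = a.length ∧ evh η r (zadd l a b) = evh η r a + evh η r b
  | [], [], _ => by simp [zadd, evh_nil]
  | [], _::_, h => by simp at h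
  | _::_, [], h => by simp at h
  | x::a, y::b, h => by
    simp only [List.length_cons, Nat.add_right_cancel_iff] at h
    obtain ⟨e1, e2⟩ := zadd_spec a b h
    refine ⟨by simp [zadd, e1], ?_⟩
    simp only [zadd, evh_cons, e1, e2, castmod η, h]; push_cast; ring

lemma chkfix_spec (bs : List Bool) (hb : bval bs 1 = l) (d : ℕ) (g : List ℕ) (hg : g ≠ [])
    (hr : r ^ g.length = evh η r g) (h : chkfix l bs d g = true) : r ^ (l ^ d) = r := by
  obtain ⟨e1, e2⟩ := xl_spec η r g hg hr
  obtain ⟨e3, e4⟩ := frob_spec η r g hg hr bs hb d (xl g) e1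
  rw [chkfix, beq_iff_eq] at h
  rw [h, e2] at e4
  exact e4.symm
lemma chkmov_spec (bs : List Bool) (hb : bval bs 1 = l) (d : ℕ) (g u : List ℕ) (hg : g ≠ [])
    (hr : r ^ g.length = evh η r g) (h : chkmov l bs d g u = true) : r ^ (l ^ d) ≠ r := by
  obtain ⟨e1, e2⟩ := xl_spec η r g hg hr
  obtain ⟨e3, e4⟩ := frob_spec η r g hg hr bs hb d (xl g) e1
  obtain ⟨e5, e6⟩ := mm_spec η r g hg hr u _ e3
  obtain ⟨e7, e8⟩ := mm_spec η r g hg hr u _ e1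
  obtain ⟨e9, e10⟩ := onel_spec η r g hg
  obtain ⟨_, e11⟩ := zadd_spec η r _ _ (e9.trans e7.symm)
  rw [chkmov, beq_iff_eq] at h
  rw [← h, e6, e8, e10, e4, e2] at e11
  intro h'
  rw [h'] at e11
  have : (1 : κ) = 0 := by linear_combination -e11
  exact one_ne_zero this
end sem

lemma gl_monic (l : ℕ) [Fact l.Prime] (g : List ℕ) : (tP l (gl l g)).Monic ∧ (tP l (gl l g)).natDegree = g.length := by
  have hd := tP_deg l g.reverse
  rw [List.length_reverse] at hd
  rw [tP_gl]
  refine ⟨monic_X_pow_sub hd, ?_⟩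
  apply natDegree_eq_of_degree_eq_some
  rw [degree_sub_eq_left_of_degree_lt (by rwa [degree_X_pow]), degree_X_pow]

end HSproof

namespace HSproof
open Polynomial

lemma gprod_spec (l : ℕ) [Fact l.Prime] (gs : List (List ℕ)) :
    (tP l (gprod l gs)).Monic ∧ (tP l (gprod l gs)).natDegree = lensum gs := by
  induction gs with
  | nil => simp [gprod, tP, lensum]
  | cons g gs ih =>
    obtain ⟨h1, h2⟩ := gl_monic l g
    rw [gprod, tP_pmul]
    exact ⟨h1.mul ih.1, by rw [h1.natDegree_mul ih.1, h2, ih.2, lensum]⟩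

lemma chk2_spec (l : ℕ) [Fact l.Prime] (bs : List Bool) (hb : bval bs 1 = l) (d : ℕ) :
    ∀ (gs cs : List (List ℕ)), (∀ g ∈ gs, g ≠ []) → chk2 l bs d gs cs = true →
    ∃ h h' : (ZMod l)[X], tP l (gprod l gs) = h * h' ∧ h.Monic ∧ h.natDegree = cnt gs cs ∧
      (∀ (κ : Type) [Field κ] (η : ZMod l →+* κ) (r : κ), eval₂ η r h = 0 → r ^ (l ^ d) = r) ∧
      (∀ (κ : Type) [Field κ] (η : ZMod l →+* κ) (r : κ), eval₂ η r h' = 0 → r ^ (l ^ d) ≠ r)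
  | [], [], _, _ => by
    refine ⟨1, 1, by simp [gprod, tP], monic_one, by simp [cnt], ?_, ?_⟩ <;>
    · intro κ _ η r h; simp at h
  | [], _::_, _, h => by simp [chk2] at h
  | _::_, [], _, h => by simp [chk2] at h
  | g::gs, []::cs, hg, h => by
    simp only [chk2, Bool.and_eq_true] at h
    obtain ⟨k, k', h1, h2, h3, h4, h5⟩ := chk2_spec l bs hb d gs cs (fun g hg' => hg g (List.mem_cons_of_mem _ hg')) h.2
    obtain ⟨m1, m2⟩ := gl_monic l g
    refine ⟨tP l (gl l g) * k, k', by rw [gprod, tP_pmul, h1, mul_assoc], m1.mul h2,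
      by rw [m1.natDegree_mul h2, m2, h3, cnt], ?_, h5⟩
    intro κ _ η r hr
    rw [eval₂_mul, mul_eq_zero] at hr
    rcases hr with hr | hr
    · apply chkfix_spec η r bs hb d g (hg g List.mem_cons_self) _ h.1
      rw [tP_gl, eval₂_sub, eval₂_pow, eval₂_X, sub_eq_zero] at hr
      exact hr
    · exact h4 κ η r hr
  | g::gs, (a::u)::cs, hg, h => by
    simp only [chk2, Bool.and_eq_true] at h
    obtain ⟨k, k', h1, h2, h3, h4, h5⟩ := chk2_spec l bs hb d gs cs (fun g hg' => hg g (List.mem_cons_of_mem _ hg')) h.2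
    refine ⟨k, tP l (gl l g) * k', by rw [gprod, tP_pmul, h1]; ring, h2,
      by rw [h3, cnt], h4, ?_⟩
    intro κ _ η r hr
    rw [eval₂_mul, mul_eq_zero] at hr
    rcases hr with hr | hr
    · apply chkmov_spec η r bs hb d g (a::u) (hg g List.mem_cons_self) _ h.1
      rw [tP_gl, eval₂_sub, eval₂_pow, eval₂_X, sub_eq_zero] at hr
      exact hr
    · exact h5 κ η r hr

section frobC
variable {M L : Type} [Field M] [Field L] [Algebra M L] [FiniteDimensional M L] [IsGalois M L]
  [Algebra ℤ[X] M] [IsFractionRing ℤ[X] M] [Algebra ℤ[X] L] [IsScalarTower ℤ[X] M L]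

lemma frobC (l : ℕ) [Fact l.Prime] (θ : ℤ[X] →+* ZMod l) (f : ℤ[X][X])
    (hs : (f.map (algebraMap ℤ[X] L)).Splits) (u : ℕ) (fl : List ℕ) (gs : List (List ℕ)) (U V : List ℕ)
    (bs : List Bool) (hf : f.map θ = tP l fl) (hdeg : f.natDegree + 1 ≤ fl.length)
    (h1 : chk1 l u fl gs U V bs = true) :
    ∃ σ : L ≃ₐ[M] L, (f.map (algebraMap ℤ[X] L)).roots.Nodup ∧
      ∀ (d : ℕ) (cs : List (List ℕ)), chk2 l bs d gs cs = true →
        ∀ [DecidablePred fun y : L => (σ ^ d) y = y],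
        ((f.map (algebraMap ℤ[X] L)).roots.filter (fun y => (σ ^ d) y = y)).card = cnt gs cs := by
  simp only [chk1, Bool.and_eq_true, beq_iff_eq, bne_iff_ne, List.all_eq_true] at h1
  obtain ⟨⟨⟨⟨⟨h1, h2⟩, h3⟩, h4⟩, h5⟩, h6⟩ := h1
  have hu : (u : ZMod l) ≠ 0 := by
    intro h; rw [ZMod.natCast_eq_zero_iff] at h; exact h4 (Nat.mod_eq_zero_of_dvd h)
  have e1 : f.map θ = C (u : ZMod l) * tP l (gprod l gs) := by rw [hf, ← h1, tP_psc]
  obtain ⟨m1, m2⟩ := gprod_spec l gs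
  have hsep : (f.map θ).Separable := by
    rw [hf]
    refine ⟨tP l U, tP l V, ?_⟩
    rw [← tP_pder, ← tP_pmul, ← tP_pmul, ← tP_padd]
    exact tP_isone l _ h2
  have hnd : (f.map θ).natDegree = lensum gs := by
    rw [e1, natDegree_C_mul hu, m2]
  have hnd2 : f.natDegree = lensum gs := by
    apply le_antisymm (by omega)
    rw [← hnd]; exact natDegree_map_le
  have hlc : θ f.leadingCoeff ≠ 0 := by
    rw [leadingCoeff, ← coeff_map, hnd2, ← hnd]
    exact leadingCoeff_ne_zero.2 hsep.ne_zero
  obtain ⟨σ, hσ1, hσ2⟩ := frobB (M := M) (L := L) l θ f hs hlc hsep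
  refine ⟨σ, hσ1, ?_⟩
  intro d cs hc _
  obtain ⟨h, h', k1, k2, k3, k4, k5⟩ := chk2_spec l bs h3 d gs cs (fun g hg => by
    have := h5 g hg
    rintro rfl; simp at this) hc
  have := hσ2 d (C (u : ZMod l) * h) h' (by rw [e1, k1, mul_assoc]) (by
    intro κ _ η r hr
    rw [eval₂_mul, eval₂_C, mul_eq_zero] at hr
    rcases hr with hr | hr
    · exact absurd ((map_eq_zero η).1 hr) hu
    · exact k4 κ η r hr) k5
  rw [this, natDegree_C_mul hu, k3]
end frobC
end HSproof

namespace HSproof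
open Polynomial

/-- polynomial from an integer list, low first -/
noncomputable def tZ : List ℤ → ℤ[X]
  | [] => 0
  | c::cs => C c + X * tZ cs
noncomputable def tZ2 : List (List ℤ) → ℤ[X][X]
  | [] => 0
  | c::cs => C (tZ c) + X * tZ2 cs

/-! integer list arithmetic -/
def zpadd : List ℤ → List ℤ → List ℤ
  | [], b => b
  | x::a, [] => x::a
  | x::a, y::b => (x+y) :: zpadd a b
def zpsc (c : ℤ) : List ℤ → List ℤ
  | [] => []
  | x::a => (c*x) :: zpsc c a
def zpmul : List ℤ → List ℤ → List ℤ
  | [], _ => []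
  | x::a, b => zpadd (zpsc x b) (0 :: zpmul a b)
lemma tZ_zpadd (a b : List ℤ) : tZ (zpadd a b) = tZ a + tZ b := by
  induction a generalizing b with
  | nil => simp [zpadd, tZ]
  | cons x a ih =>
    cases b with
    | nil => simp [zpadd, tZ]
    | cons y b => simp only [zpadd, tZ, ih, C_add]; ring
lemma tZ_zpsc (c : ℤ) (a : List ℤ) : tZ (zpsc c a) = C c * tZ a := by
  induction a with
  | nil => simp [zpsc, tZ]
  | cons x a ih => simp only [zpsc, tZ, ih, C_mul]; ring
lemma tZ_zpmul (a b : List ℤ) : tZ (zpmul a b) = tZ a * tZ b := by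
  induction a with
  | nil => simp [zpmul, tZ]
  | cons x a ih => simp only [zpmul, tZ, tZ_zpadd, tZ_zpsc, ih, C_0]; ring

/-- evaluation -/
def zev (x : ℤ) : List ℤ → ℤ
  | [] => 0
  | c::cs => c + x * zev x cs
lemma zev_spec (x : ℤ) (a : List ℤ) : (tZ a).eval x = zev x a := by
  induction a with
  | nil => simp [tZ, zev]
  | cons c a ih => simp [tZ, zev, ih]
def zev2 (x y : ℤ) : List (List ℤ) → ℤ
  | [] => 0
  | c::cs => zev x c + y * zev2 x y cs
/-- two-variable evaluation -/
noncomputable def ev2 (x y : ℤ) : ℤ[X][X] →+* ℤ := (evalRingHom y).comp (mapRingHom (evalRingHom x))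
lemma zev2_spec (x y : ℤ) (a : List (List ℤ)) : ev2 x y (tZ2 a) = zev2 x y a := by
  induction a with
  | nil => simp [tZ2, zev2]
  | cons c a ih =>
    rw [tZ2, zev2, map_add, map_mul, ih]
    simp [ev2, zev_spec]

/-- a polynomial with small coefficients vanishing at a large point is zero -/
lemma small_zero (m : ℤ) : ∀ (n : ℕ) (f : ℤ[X]), f.natDegree < n → (∀ i, |f.coeff i| < m) → f.eval m = 0 → f = 0
  | 0, f, h, _, _ => by omega
  | n+1, f, h, hb, he => by
    have e1 : f = X * f.divX + C (f.coeff 0) := (X_mul_divX_add f).symm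
    have hm : 0 < m := lt_of_le_of_lt (abs_nonneg _) (hb 0)
    have e2 : m * f.divX.eval m + f.coeff 0 = 0 := by
      rw [e1] at he; simpa using he
    have e3 : f.coeff 0 = 0 := by
      apply Int.eq_zero_of_abs_lt_dvd (m := m) _ (hb 0)
      exact ⟨-f.divX.eval m, by linear_combination e2⟩
    rw [e3, add_zero] at e2
    have e4 : f.divX.eval m = 0 := by
      rcases mul_eq_zero.1 e2 with h | h
      · omega
      · exact h
    have e5 : f.divX = 0 ∨ f.divX.natDegree < n := by
      by_cases h0 : f.natDegree = 0
      · left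
        rw [eq_C_of_natDegree_eq_zero h0, divX_C]
      · right
        rw [natDegree_divX_eq_natDegree_tsub_one]; omega
    have e6 : f.divX = 0 := by
      rcases e5 with h | h
      · exact h
      · exact small_zero m n f.divX h (fun i => by rw [coeff_divX]; exact hb _) e4
    rw [e1, e6, e3]; simp

lemma eval_bound (m c : ℤ) (hm : 2 ≤ m) (hc : 0 ≤ c) : ∀ (n : ℕ) (f : ℤ[X]), f.natDegree < n → (∀ i, |f.coeff i| ≤ c) → |f.eval m| ≤ c * (m ^ n - 1)
  | 0, f, h, _ => by omega
  | n+1, f, h, hb => by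
    have e1 : f = X * f.divX + C (f.coeff 0) := (X_mul_divX_add f).symm
    have e2 : f.eval m = m * f.divX.eval m + f.coeff 0 := by
      conv_lhs => rw [e1]
      simp
    have e6 : |f.divX.eval m| ≤ c * (m ^ n - 1) := by
      by_cases h0 : f.natDegree = 0
      · rw [eq_C_of_natDegree_eq_zero h0, divX_C]
        simp
        apply mul_nonneg hc
        have : (1:ℤ) ≤ m ^ n := one_le_pow₀ (by omega)
        omega
      · apply eval_bound m c hm hc n
        · rw [natDegree_divX_eq_natDegree_tsub_one]; omega
        · intro i; rw [coeff_divX]; exact hb _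
    rw [e2]
    calc |m * f.divX.eval m + f.coeff 0| ≤ |m * f.divX.eval m| + |f.coeff 0| := abs_add_le _ _
      _ ≤ m * (c * (m^n - 1)) + c := by
        rw [abs_mul, abs_of_pos (show 0 < m by omega)]
        have := mul_le_mul_of_nonneg_left e6 (show 0 ≤ m by omega)
        have := hb 0
        omega
      _ ≤ c * (m^(n+1) - 1) := by
        rw [pow_succ]
        have : 0 ≤ c * (m - 2) := mul_nonneg hc (by omega)
        nlinarith

/-- bivariate version -/
lemma small_zero2 (m c : ℤ) (hm : 2 ≤ m) (hcm : c < m) (hc : 0 ≤ c) (n : ℕ) (N : ℤ) (hN : c * m ^ n < N) (f : ℤ[X][X]) (hd : ∀ j, (f.coeff j).natDegree < n)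
    (hb : ∀ j i, |(f.coeff j).coeff i| ≤ c) (he : ev2 m N f = 0) : f = 0 := by
  have h1 : f.map (evalRingHom m) = 0 := by
    apply small_zero N _ _ (Nat.lt_succ_self _)
    · intro j
      rw [coeff_map, coe_evalRingHom]
      have := eval_bound m c hm hc n _ (hd j) (hb j)
      have : c * (m ^ n - 1) ≤ c * m ^ n := by nlinarith
      omega
    · exact he
  ext1 j
  rw [coeff_zero]
  apply small_zero m _ _ (Nat.lt_succ_self _)
  · intro i; exact lt_of_le_of_lt (hb j i) hcm
  · have := congrArg (fun g => g.coeff j) h1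
    simpa using this

/-! coefficient bounds -/
def l1 : List ℤ → ℤ
  | [] => 0
  | c::cs => |c| + l1 cs
def l12 : List (List ℤ) → ℤ
  | [] => 0
  | c::cs => l1 c + l12 cs
lemma l1_nonneg (a : List ℤ) : 0 ≤ l1 a := by
  induction a with
  | nil => simp [l1]
  | cons c a ih => simp only [l1]; positivity
lemma tZ_mul_bound (c : ℤ) (a : List ℤ) (g : ℤ[X]) (hg : ∀ i, |g.coeff i| ≤ c) (i : ℕ) :
    |(tZ a * g).coeff i| ≤ l1 a * c := by
  have hc : 0 ≤ c := (abs_nonneg _).trans (hg 0)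
  induction a generalizing i with
  | nil => simp [tZ, l1]
  | cons x a ih =>
    rw [tZ, l1, add_mul, coeff_add, coeff_C_mul, mul_assoc, add_mul]
    refine (abs_add_le _ _).trans (add_le_add ?_ ?_)
    · rw [abs_mul]; exact mul_le_mul_of_nonneg_left (hg i) (abs_nonneg _)
    · cases i with
      | zero => simp; exact mul_nonneg (l1_nonneg a) hc
      | succ i => rw [coeff_X_mul]; exact ih i
lemma tZ2_mul_bound (c : ℤ) (a : List (List ℤ)) (g : ℤ[X][X]) (hg : ∀ j i, |(g.coeff j).coeff i| ≤ c) (j i : ℕ) :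
    |((tZ2 a * g).coeff j).coeff i| ≤ l12 a * c := by
  have hc : 0 ≤ c := (abs_nonneg _).trans (hg 0 0)
  have hl : ∀ a, 0 ≤ l12 a := by
    intro a
    induction a with
    | nil => simp [l12]
    | cons c a ih => simp only [l12]; have := l1_nonneg c; omega
  induction a generalizing j with
  | nil => simp [tZ2, l12]
  | cons x a ih =>
    rw [tZ2, l12, add_mul, coeff_add, coeff_add, coeff_C_mul, mul_assoc, add_mul]
    refine (abs_add_le _ _).trans (add_le_add ?_ ?_)
    · exact tZ_mul_bound c x _ (hg j) i
    · cases j with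
      | zero => simp; exact mul_nonneg (hl a) hc
      | succ j => rw [coeff_X_mul]; exact ih j
lemma tZ_natDegree (a : List ℤ) : (tZ a).natDegree ≤ a.length - 1 := by
  induction a with
  | nil => simp [tZ]
  | cons c a ih =>
    rw [tZ]
    refine (natDegree_add_le _ _).trans ?_
    simp only [natDegree_C, List.length_cons]
    by_cases h : a = []
    · subst h; simp [tZ]
    · have : 0 < a.length := List.length_pos_iff.2 h
      refine max_le (by omega) (natDegree_mul_le.trans ?_)
      rw [natDegree_X]; omega
lemma tZ2_natDegree (a : List (List ℤ)) : (tZ2 a).natDegree ≤ a.length - 1 := by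
  induction a with
  | nil => simp [tZ2]
  | cons c a ih =>
    rw [tZ2]
    refine (natDegree_add_le _ _).trans ?_
    simp only [natDegree_C, List.length_cons]
    by_cases h : a = []
    · subst h; simp [tZ2]
    · have : 0 < a.length := List.length_pos_iff.2 h
      refine max_le (by omega) (natDegree_mul_le.trans ?_)
      rw [natDegree_X]; omega
lemma tZ_coeff_bound (c : ℤ) (hc : 0 ≤ c) (a : List ℤ) (h : ∀ x ∈ a, |x| ≤ c) (i : ℕ) : |(tZ a).coeff i| ≤ c := by
  induction a generalizing i with
  | nil => simpa [tZ] using hc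
  | cons x a ih =>
    rw [tZ, coeff_add]
    cases i with
    | zero => simpa using h x (by simp)
    | succ i =>
      rw [coeff_X_mul, coeff_C_succ, zero_add]
      exact ih (fun y hy => h y (by simp [hy])) i
end HSproof

namespace HSproof
open Polynomial
def rowchk (m h : ℕ) : ℕ → ℕ → Bool
  | 0, w => Nat.beq w 0
  | n+1, w => and (Nat.ble (Nat.mod w m) h) (rowchk m h n (Nat.div w m))
def outchk (N m h k : ℕ) : ℕ → ℕ → Bool
  | 0, w => Nat.beq w 0
  | n+1, w => and (rowchk m h k (Nat.mod w N)) (outchk N m h k n (Nat.div w N))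
def Al : List (List ℤ) := [[9765625000, -57617187500, 144580078125, -195507812500, 138417968750, -10234375000, -86818359375, 98968750000, -53390625000, 5546875000, 15375781250, -13721875000, 5389062500, -200000000, -879218750, 398750000, -26250000, -32187500, 7390625, 1187500, -281250, -125000, 28125],
  [-57617187500, 289062500000, -595507812500, 600390625000, -181523437500, -288906250000, 433960937500, -263343750000, 28859375000, 86175000000, -78371875000, 30087500000, 1246875000, -7815000000, 3925625000, -561250000, -242187500, 91500000, 7687500, -3125000, -3437500, 1450000, -162500],
  [144580078125, -595507812500, 915703125000, -444335937500, -495779296875, 935890625000, -598246093750, 17343750000, 281069531250, -235134375000, 75015625000, 19096875000, -30737343750, 13495000000, -1742812500, -681250000, 50140625, 178687500, -12500000, -54437500, 26790625, -5125000, 356250],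
  [-195507812500, 600390625000, -444335937500, -587812500000, 1348210937500, -940328125000, -26304687500, 569562500000, -472984375000, 135481250000, 63159375000, -72052500000, 22828125000, 808750000, -653125000, -2402500000, 1798187500, -147875000, -421437500, 247400000, -61062500, 6575000, -187500],
  [138417968750, -181523437500, -495779296875, 1348210937500, -1103507812500, -16984375000, 746017578125, -638243750000, 185182812500, 91509375000, -97016718750, 17898125000, 8812500000, 5015000000, -13169093750, 7687250000, -506531250, -1930437500, 1236965625, -336762500, 31562500, 3275000, -654375],
  [-10234375000, -288906250000, 935890625000, -940328125000, -16984375000, 772087500000, -641434375000, 153931250000, 99406250000, -67597500000, -17953750000, 15000000000, 29471250000, -39872500000, 18661250000, 1051750000, -6617875000, 3943950000, -926875000, -73675000, 92725000, -19440000, 1365000],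
  [-86818359375, 433960937500, -598246093750, -26304687500, 746017578125, -641434375000, 107795312500, 131818750000, -47538593750, -53224375000, 15548437500, 72794375000, -84866343750, 32134500000, 10822000000, -19166250000, 10085003125, -1644062500, -1012393750, 690012500, -176144375, 20055000, -722500],
  [98968750000, -263343750000, 17343750000, 569562500000, -638243750000, 153931250000, 131818750000, -57220000000, -40267500000, -7572500000, 116857500000, -135985000000, 51047500000, 27929500000, -43206500000, 22615200000, -3246050000, -3379750000, 2477950000, -732700000, 88890000, 1330000, -890000],
  [-53390625000, 28859375000, 281069531250, -472984375000, 185182812500, 99406250000, -47538593750, -40267500000, -30340000000, 149451250000, -172315687500, 72249750000, 40231875000, -70716000000, 39893612500, -5982700000, -7134275000, 5726375000, -1771663750, 101385000, 85372500, -22530000, 1753250],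
  [5546875000, 86175000000, -235134375000, 135481250000, 91509375000, -67597500000, -53224375000, -7572500000, 149451250000, -184728000000, 81687750000, 51416000000, -96409750000, 56497600000, -6518650000, -13940700000, 11231475000, -3455400000, -222975000, 525550000, -167305000, 22636000, -1071000],
  [15375781250, -78371875000, 75015625000, 63159375000, -97016718750, -17953750000, 15548437500, 116857500000, -172315687500, 81687750000, 59449000000, -120323750000, 75271662500, -6450600000, -23981175000, 19755100000, -6570353750, -676555000, 1540675000, -606065000, 104940250, -5866000, -266500],
  [-13721875000, 30087500000, 19096875000, -72052500000, 17898125000, 15000000000, 72794375000, -135985000000, 72249750000, 51416000000, -120323750000, 86652800000, -10351450000, -31076200000, 27938450000, -10232600000, -942915000, 2922100000, -1360645000, 252436000, 5773000, -9176000, 999000],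
  [5389062500, 1246875000, -30737343750, 22828125000, 8812500000, 29471250000, -84866343750, 51047500000, 40231875000, -96409750000, 75271662500, -10351450000, -32652550000, 31785200000, -12146827500, -1636260000, 4523642500, -2321565000, 413933250, 97253000, -63594000, 12070000, -803950],
  [-200000000, -7815000000, 13495000000, 808750000, 5015000000, -39872500000, 32134500000, 27929500000, -70716000000, 56497600000, -6450600000, -31076200000, 31785200000, -12483120000, -2523040000, 6095220000, -3403680000, 621064000, 281808000, -205942000, 54264000, -6392800, 213600],
  [-879218750, 3925625000, -1742812500, -653125000, -13169093750, 18661250000, 10822000000, -43206500000, 39893612500, -6518650000, -23981175000, 27938450000, -12146827500, -2523040000, 6770310000, -4204740000, 902778250, 446297000, -404768500, 132811000, -19207550, 156400, 194800],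
  [398750000, -561250000, -681250000, -2402500000, 7687250000, 1051750000, -19166250000, 22615200000, -5982700000, -13940700000, 19755100000, -10232600000, -1636260000, 6095220000, -4204740000, 1055328000, 498286000, -554242000, 211622000, -29732000, -4954800, 2406000, -254800],
  [-26250000, -242187500, 50140625, 1798187500, -506531250, -6617875000, 10085003125, -3246050000, -7134275000, 11231475000, -6570353750, -942915000, 4523642500, -3403680000, 902778250, 498286000, -599805000, 250612500, -28032875, -19375700, 9864350, -1898600, 131345],
  [-32187500, 91500000, 178687500, -147875000, -1930437500, 3943950000, -1644062500, -3379750000, 5726375000, -3455400000, -676555000, 2922100000, -2321565000, 621064000, 446297000, -554242000, 250612500, -23746400, -34004500, 20455000, -5437500, 664400, -21380],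
  [7390625, 7687500, -12500000, -421437500, 1236965625, -926875000, -1012393750, 2477950000, -1771663750, -222975000, 1540675000, -1360645000, 413933250, 281808000, -404768500, 211622000, -28032875, -34004500, 25567800, -8505500, 1289205, -4840, -13990],
  [1187500, -3125000, -54437500, 247400000, -336762500, -73675000, 690012500, -732700000, 101385000, 525550000, -606065000, 252436000, 97253000, -205942000, 132811000, -29732000, -19375700, 20455000, -8505500, 1501600, 138620, -95000, 8500],
  [-281250, -3437500, 26790625, -61062500, 31562500, 92725000, -176144375, 88890000, 85372500, -167305000, 104940250, 5773000, -63594000, 54264000, -19207550, -4954800, 9864350, -5437500, 1289205, 138620, -167460, 32280, -475],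
  [-125000, 1450000, -5125000, 6575000, 3275000, -19440000, 20055000, 1330000, -22530000, 22636000, -5866000, -9176000, 12070000, -6392800, 156400, 2406000, -1898600, 664400, -4840, -95000, 32280, -1120, -840],
  [28125, -162500, 356250, -187500, -654375, 1365000, -722500, -890000, 1753250, -1071000, -266500, 999000, -803950, 213600, 194800, -254800, 131345, -21380, -13990, 8500, -475, -840, 196]]
def pl : List ℤ := [372529029846191406250000, -5811452865600585937500000, 42341649532318115234375000, -187961757183074951171875000, 548383630812168121337890625, -1010408103466033935546875000, 745891481637954711914062500, 1902774155139923095703125000, -7926042714715003967285156250, 14429077374935150146484375000, -12908636897802352905273437500, -5869698052406311035156250000, 40297173929274082183837890625, -69913431861877441406250000000, 64506073539257049560546875000, -9647528627777099609375000000, -73381283585968017578125000000, 137251607891235351562500000000, -144124342545394897460937500000, 93675850781478881835937500000, -16034426769234085083007812500, -59187723568923950195312500000, 120966987458549499511718750000, -165357868804397583007812500000, 177609282664646148681640625000, -138305271417660522460937500000, 49263762140068054199218750000, 54765985919360351562500000000, -127554163685585861206054687500, 145103180991326904296875000000, -117160699520446777343750000000, 69438966150311279296875000000, -20793064310919372558593750000,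 -21845217839415039062500000000, 54023046806680603027343750000, -68163532428894348144531250000, 59435029249414006042480468750, -33336904282172277832031250000, 3815903341575091552734375000, 16501601494255065917968750000, -23621881995918379272460937500, 21151533192191818847656250000, -14524342549310621337890625000, 7118191655417846679687500000, -396179193100386047363281250, -4543010632635130859375000000, 6671378414735661621093750000, -5868840902907337890625000000, 3288182393527912207031250000, -604357374279779296875000000, -1053688860454646484375000000, 1519418845086971679687500000, -1241059182642994370117187500, 727433440989279960937500000, -265587322791731347656250000, -54257792216060976562500000, 221972362738609228515625000, -251459298482775054687500000, 181784194009073621093750000, -74731412907874468750000000, -11710794597154867929687500, 50002863828617178125000000, -46535864860051934375000000, 24504584110705203125000000, -4247628747955957812500000, -5773338775694454062500000, 6933934227628116796875000, -4155797198456053671875000, 1274173996250822259765625, 262719639783123203125000, -619443478704179335937500, 434848127678161953125000, -177614111013520885156250, 23936996475972534375000, 27232093219956976562500, -26992655892389981250000, 14117381953436873515625, -4497020311263615000000, 284269431120554375000, 715230800012720000000, -568430326446746650000, 268975540809723000000, -87159331382398500000, 14889087264070000000, 3706992525314875000, -4695024415237200000, 2565127500345000000, -1042322582645200000, 348955283544280000,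 -99796535712400000, 24738153079800000, -5338961263200000, 1001358152282000, -162102513536000, 22381865680000, -2588930048000, 244357078400, -18088806400, 985331200, -35123200, 614656]
def ql : List ℤ := [-76293945312500000000, 3051757812500000000000, -57983398437500000000000, 695800781250000000000000, -5912094116210937500000000, 37769775390625000000000000, -187825927734375000000000000, 741247558593750000000000000, -2337549865722656250000000000, 5844738525390625000000000000, -11190691162109375000000000000, 14601469238281250000000000000, -5919584167480468750000000000, -28321289404296875000000000000, 89716315673828125000000000000, -145056125097656250000000000000, 120690228421630859375000000000, 53038931523437500000000000000, -350314305625000000000000000000, 585840744511718750000000000000, -486228978596826171875000000000, -82366734791015625000000000000, 888570750974609375000000000000, -1365629906183593750000000000000, 993723819161230468750000000000, 209567329994921875000000000000, -1539392014048828125000000000000, 2035194978942968750000000000000, -1224627786319121093750000000000, -435126194486953125000000000000, 1838611215762421875000000000000, -2048239883161093750000000000000, 986141306901028320312500000000, 552466048619445312500000000000, -1538112608883273437500000000000, 1449098492918812500000000000000, -546635766496880664062500000000, -446438385934293750000000000000, 920219415302056250000000000000, -743713432071062500000000000000, 217669440401262687500000000000, 242608002273256250000000000000, -401135336766743750000000000000,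 283493948180812500000000000000, -65145684471404937500000000000, -91787782942628750000000000000, 128988643936461250000000000000, -81515907203602500000000000000, 15495126698618631250000000000, 24551703437057500000000000000, -30717148521927500000000000000, 17792117761117500000000000000, -3095724960283726250000000000, -4630328025737650000000000000, 5382290528619550000000000000, -2932442990925100000000000000, 526985876619239500000000000, 600906042200470000000000000, -680103697849610000000000000, 357554188061980000000000000, -72399596010004060000000000, -50561181403491600000000000, 59536756091980400000000000, -30918347088632800000000000, 7263087736152072500000000, 2390560086297660000000000, -3354342299760820000000000, 1755189890685200000000000, -468976166541326500000000, -36884914954872000000000, 106079595781448000000000, -56642673429584000000000, 16045400016775600000000, -877974605252800000000, -1511053292024000000000, 788788084035200000000, -182037986128880000000, -2770165146560000000, 17497279366720000000, -6013123320960000000, 635759426660800000, 242564936192000000, -114628603136000000, 15824440704000000, 2781519483200000, -1523835097600000, 189057728000000, 33708364800000, -14255401600000, 1032455680000, 353871360000, -80225280000, -714624000, 2110976000, -170496000, -27648000, 4422400, 153600, -51200, 0, 256]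

def bigM : ℕ := 2 ^ 256
def bigN : ℕ := 2 ^ (256 * 102)
def bigH : ℕ := 2 ^ 180
def Pint : ℤ := zev bigN pl * zev bigM ql - zev bigM pl * zev bigN ql
def Aint : ℤ := zev2 bigM bigN Al
def offs : ℕ := bigH * ((bigM ^ 79 - 1) / (bigM - 1)) * ((bigN ^ 79 - 1) / (bigN - 1))
def Vint : ℕ := (Pint / Aint + offs).toNat
set_option maxRecDepth 1000000
theorem V_chk : outchk bigN bigM (2 * bigH) 79 79 Vint = true := by decide +kernel
theorem V_eq : Aint * (Vint - offs) = Pint := by decide +kernel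
theorem bigM_ones : (bigM - 1) * ((bigM ^ 79 - 1) / (bigM - 1)) = bigM ^ 79 - 1 := by decide +kernel
theorem bigN_ones : (bigN - 1) * ((bigN ^ 79 - 1) / (bigN - 1)) = bigN ^ 79 - 1 := by decide +kernel
lemma tZ2_rows (a : List (List ℤ)) (n : ℕ) (h : ∀ x ∈ a, x.length ≤ n + 1) (j : ℕ) : ((tZ2 a).coeff j).natDegree ≤ n := by
  induction a generalizing j with
  | nil => simp [tZ2]
  | cons x a ih =>
    rw [tZ2, coeff_add]
    cases j with
    | zero => 
      simp only [coeff_C_zero, mul_coeff_zero, coeff_X_zero, zero_mul, add_zero]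
      have := tZ_natDegree x
      have := h x (by simp)
      omega
    | succ j =>
      rw [coeff_X_mul, coeff_C_succ, zero_add]
      exact ih (fun y hy => h y (by simp [hy])) j
lemma Al_deg (j : ℕ) : ((tZ2 Al).coeff j).natDegree ≤ 22 := tZ2_rows Al 22 (by decide +kernel) j

/-! soundness -/
lemma rowchk_spec (m h : ℕ) : ∀ (n w : ℕ), rowchk m h n w = true →
    ∃ r : ℤ[X], (∀ i, n ≤ i → r.coeff i = 0) ∧ (∀ i, 0 ≤ r.coeff i ∧ r.coeff i ≤ h) ∧ r.eval (m : ℤ) = w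
  | 0, w, hw => by
    have : w = 0 := Nat.eq_of_beq_eq_true hw
    exact ⟨0, by simp, by simp, by simp [this]⟩
  | n+1, w, hw => by
    rw [rowchk, Bool.and_eq_true] at hw
    have h1 : w % m ≤ h := Nat.le_of_ble_eq_true hw.1
    obtain ⟨r, r1, r2, r3⟩ := rowchk_spec m h n (w / m) hw.2
    refine ⟨C ((w % m : ℕ) : ℤ) + X * r, ?_, ?_, ?_⟩
    · intro i hi
      obtain ⟨i, rfl⟩ : ∃ k, i = k + 1 := ⟨i - 1, by omega⟩
      rw [coeff_add, coeff_X_mul, coeff_C_succ, zero_add]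
      exact r1 i (by omega)
    · intro i
      cases i with
      | zero => 
        simp only [coeff_add, coeff_C_zero, mul_coeff_zero, coeff_X_zero, zero_mul, add_zero]
        exact ⟨by positivity, by exact_mod_cast h1⟩
      | succ i => rw [coeff_add, coeff_X_mul, coeff_C_succ, zero_add]; exact r2 i
    · rw [eval_add, eval_C, eval_mul, eval_X, r3]
      exact_mod_cast Nat.mod_add_div w m

lemma outchk_spec (N m h k : ℕ) : ∀ (n w : ℕ), outchk N m h k n w = true →
    ∃ r : ℤ[X][X], (∀ j, n ≤ j → r.coeff j = 0) ∧ (∀ j i, k ≤ i → (r.coeff j).coeff i = 0) ∧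
      (∀ j i, 0 ≤ (r.coeff j).coeff i ∧ (r.coeff j).coeff i ≤ h) ∧ ev2 m N r = w
  | 0, w, hw => by
    have : w = 0 := Nat.eq_of_beq_eq_true hw
    exact ⟨0, by simp, by simp, by simp, by simp [this]⟩
  | n+1, w, hw => by
    rw [outchk, Bool.and_eq_true] at hw
    obtain ⟨s, s1, s2, s3⟩ := rowchk_spec m h k (w % N) hw.1
    obtain ⟨r, r0, r1, r2, r3⟩ := outchk_spec N m h k n (w / N) hw.2
    have c0 : (C s + X * r).coeff 0 = s := by simp
    have c1 : ∀ j, (C s + X * r).coeff (j+1) = r.coeff j := by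
      intro j; rw [coeff_add, coeff_X_mul, coeff_C_succ, zero_add]
    refine ⟨C s + X * r, ?_, ?_, ?_, ?_⟩
    · intro i hi
      obtain ⟨i, rfl⟩ : ∃ k, i = k + 1 := ⟨i - 1, by omega⟩
      rw [c1]
      exact r0 i (by omega)
    · intro j
      cases j with
      | zero => rw [c0]; exact s1
      | succ j => rw [c1]; exact r1 j
    · intro j
      cases j with
      | zero => rw [c0]; exact s2
      | succ j => rw [c1]; exact r2 j
    · rw [map_add, map_mul, r3]
      have : ev2 m N (C s) = (w % N : ℕ) := by simp [ev2, s3]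
      rw [this]
      have : ev2 m N X = N := by simp [ev2]
      rw [this]
      exact_mod_cast Nat.mod_add_div w N

noncomputable def PP : ℤ[X][X] :=
  (tZ pl).map C * C (tZ ql) - C (tZ pl) * (tZ ql).map C

lemma PP_coeff (j : ℕ) : PP.coeff j = C ((tZ pl).coeff j) * tZ ql - C ((tZ ql).coeff j) * tZ pl := by
  rw [PP, coeff_sub, coeff_mul_C, coeff_C_mul, coeff_map, coeff_map]; ring

lemma ev2_PP : ev2 bigM bigN PP = Pint := by
  have h1 : ∀ (x y : ℤ) (f : ℤ[X]), ev2 x y (f.map C) = f.eval y := by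
    intro x y f
    rw [ev2, RingHom.comp_apply, coe_mapRingHom, Polynomial.map_map]
    have : (evalRingHom x).comp (C : ℤ →+* ℤ[X]) = RingHom.id ℤ := RingHom.ext fun z => by simp
    rw [this, Polynomial.map_id]; rfl
  have h2 : ∀ (x y : ℤ) (f : ℤ[X]), ev2 x y (C f) = f.eval x := by
    intro x y f; simp [ev2]
  rw [PP, map_sub, map_mul, map_mul, h1, h1, h2, h2, zev_spec, zev_spec, zev_spec, zev_spec]
  rfl

/-- the polynomial with all coefficients equal to one -/
noncomputable def ones : ℤ[X] := ∑ i ∈ Finset.range 79, X ^ i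
lemma ones_coeff (i : ℕ) : ones.coeff i = if i < 79 then 1 else 0 := by
  simp [ones, coeff_X_pow]
lemma ones_eval (m w : ℕ) (hm : 2 ≤ m) (h : (m - 1) * w = m ^ 79 - 1) : ones.eval (m : ℤ) = w := by
  have h1 : (m : ℤ) - 1 ≠ 0 := by omega
  apply mul_left_cancel₀ h1
  have h2 := mul_geom_sum (m : ℤ) 79
  have h3 : ones.eval (m : ℤ) = ∑ i ∈ Finset.range 79, (m : ℤ) ^ i := by
    simp [ones, eval_finsetSum]
  rw [h3, h2]
  have h4 : 1 ≤ m ^ 79 := Nat.one_le_pow _ _ (by omega)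
  have := congrArg (fun n : ℕ => (n : ℤ)) h
  push_cast [Nat.cast_sub h4, Nat.cast_sub (show 1 ≤ m by omega)] at this
  exact this.symm

lemma Al_dvd : tZ2 Al ∣ PP := by
  obtain ⟨r, r0, r1, r2, r3⟩ := outchk_spec _ _ _ _ _ _ V_chk
  set b : ℤ[X][X] := r - C (C (bigH : ℤ)) * (C ones * ones.map C) with hb
  refine ⟨b, ?_⟩
  have bc : ∀ j, b.coeff j = r.coeff j - C (bigH : ℤ) * (ones * C (ones.coeff j)) := by
    intro j; rw [hb, coeff_sub, coeff_C_mul, coeff_C_mul, coeff_map]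
  have bci : ∀ j i, (b.coeff j).coeff i = (r.coeff j).coeff i - bigH * (ones.coeff i * ones.coeff j) := by
    intro j i; rw [bc, coeff_sub, coeff_C_mul, coeff_mul_C]
  have hbig : (0 : ℤ) ≤ bigH := by positivity
  have bb : ∀ j i, |(b.coeff j).coeff i| ≤ bigH := by
    intro j i
    rw [bci, ones_coeff, ones_coeff, abs_le]
    have := r2 j i
    push_cast at this
    by_cases hj : j < 79
    · by_cases hi : i < 79
      · rw [if_pos hj, if_pos hi]; constructor <;> linarith
      · rw [r1 j i (by omega), if_neg hi]; constructor <;> linarith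
    · rw [r0 j (by omega), if_neg hj]; simp
  have bd : ∀ j, (b.coeff j).natDegree ≤ 78 := by
    intro j
    rw [natDegree_le_iff_coeff_eq_zero]
    intro i hi
    rw [bci, r1 j i (by omega), ones_coeff, if_neg (by omega)]; simp
  have be : ev2 bigM bigN b = Vint - offs := by
    have h1 : ∀ (x y : ℤ) (f : ℤ[X]), ev2 x y (f.map C) = f.eval y := by
      intro x y f
      rw [ev2, RingHom.comp_apply, coe_mapRingHom, Polynomial.map_map]
      have : (evalRingHom x).comp (C : ℤ →+* ℤ[X]) = RingHom.id ℤ := RingHom.ext fun z => by simp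
      rw [this, Polynomial.map_id]; rfl
    have h2 : ∀ (x y : ℤ) (f : ℤ[X]), ev2 x y (C f) = f.eval x := by
      intro x y f; simp [ev2]
    rw [hb, map_sub, map_mul, map_mul, r3, h1, h2, h2, eval_C,
      ones_eval bigM _ (by decide +kernel) bigM_ones, ones_eval bigN _ (by decide +kernel) bigN_ones, offs]
    push_cast; ring
  have pb := tZ_coeff_bound (2 ^ 105) (by positivity) pl (by decide +kernel)
  have qb := tZ_coeff_bound (2 ^ 105) (by positivity) ql (by decide +kernel)
  symm
  rw [← sub_eq_zero]
  apply small_zero2 bigM (2 ^ 240) (by decide +kernel) (by decide +kernel) (by positivity) 101 bigN (by decide +kernel)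
  · intro j
    rw [coeff_sub]
    refine lt_of_le_of_lt (natDegree_sub_le _ _) (max_lt ?_ ?_)
    · refine lt_of_le_of_lt (b := 100) ?_ (by norm_num)
      rw [natDegree_le_iff_coeff_eq_zero]
      intro i hi
      rw [coeff_mul, finsetSum_coeff]
      apply Finset.sum_eq_zero
      intro uv _
      apply coeff_eq_zero_of_natDegree_lt
      refine lt_of_le_of_lt natDegree_mul_le ?_
      have := bd uv.2
      have := Al_deg uv.1
      omega
    · rw [PP_coeff]
      have d1 := tZ_natDegree pl
      have d2 := tZ_natDegree ql
      have d3 : pl.length = 101 := by decide +kernel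
      have d4 : ql.length = 101 := by decide +kernel
      refine lt_of_le_of_lt (natDegree_sub_le _ _) (max_lt ?_ ?_)
      · refine lt_of_le_of_lt (natDegree_C_mul_le _ _) (by omega)
      · refine lt_of_le_of_lt (natDegree_C_mul_le _ _) (by omega)
  · intro j i
    rw [coeff_sub, coeff_sub]
    have e1 := tZ2_mul_bound bigH Al b bb j i
    have e2 : |(PP.coeff j).coeff i| ≤ 2 ^ 211 := by
      rw [PP_coeff, coeff_sub, coeff_C_mul, coeff_C_mul]
      refine (abs_sub _ _).trans ?_
      rw [abs_mul, abs_mul]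
      have := mul_le_mul (pb j) (qb i) (abs_nonneg _) (by positivity)
      have := mul_le_mul (qb j) (pb i) (abs_nonneg _) (by positivity)
      linarith
    have e3 : l12 Al * bigH + 2 ^ 211 ≤ 2 ^ 240 := by decide +kernel
    exact (abs_sub _ _).trans (by linarith)
  · rw [map_sub, map_mul, zev2_spec, be, ev2_PP]
    have := V_eq
    rw [Aint] at this
    rw [this, sub_self]

end HSproof

namespace HSproof
set_option maxRecDepth 100000
def s11g : List (List ℕ) := [[1],[3,7,8,1,0,5,4,7,4,5,2],[10,7,5,0,0,7,1,9,10,10,1],[8,10,5,7,1,4,10,4,7,6,9],[10,1,6,9,3,7,6,0,5,5,3],[10,8,4,8,4,2,5,10,8,9,7],[3,1,1,0,5,6,9,4,4,4,2],[7,7,4,8,1,3,5,3,9,5,7],[1,6,2,3,10,6,2,0,2,10,10],[10,0,9,6,10,0,7,4,8,2,4]]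
def s11b : List Bool := [false,true,true]
def s11U : List ℕ := [3,9,3,2,2,7,2,0,8,8,7,4,3,6,5,2,3,9,8,8,8,0,3,5,1,8,6,6,8,1,0,1,7,6,6,2,1,5,10,6,10,6,7,0,8,8,2,8,4,8,7,7,6,9,1,10,6,10,1,10,0,4,4,0,10,7,7,3,2,9,7,1,10,4,3,3,0,3,6,7,8,8,6,6,1,7,0,6,8,6,4,0,3,2,0,10,6,3,4]
def s11V : List ℕ := [1,2,5,3,3,5,1,0,10,2,2,7,1,9,2,0,8,0,8,9,0,7,3,2,3,8,10,4,4,0,3,4,0,3,7,6,0,9,0,7,5,10,9,9,4,7,10,9,6,5,8,3,9,4,3,5,9,4,3,3,1,9,7,4,8,8,10,7,10,7,2,2,3,6,4,7,10,8,4,8,5,5,6,0,10,2,7,7,0,8,7,10,3,8,3,1,0,4,7,7]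
def s11f : List ℕ := [3,3,1,10,8,1,6,0,7,7,5,7,6,7,4,6,0,4,10,2,7,9,4,0,0,4,0,8,4,7,10,10,2,6,7,3,0,7,3,8,7,0,5,9,1,5,4,5,5,7,5,0,2,4,6,7,10,0,1,5,3,9,1,4,6,3,7,4,10,7,4,10,6,9,8,2,7,10,8,1,0,9,0,1,6,1,3,3,7,7,9,6,0,7,3,5,6,2,9,6,2]
theorem s11c1 : chk1 11 2 s11f s11g s11U s11V s11b = true := by decide +kernel
def s11e1 : List (List ℕ) := [[],[6,7,5,2,7,10,9,9,9,1,2],[1,4,5,5,1,5,3,6,6,10,7],[3,8,4,6,7,1,2,1,7,6,2],[4,0,3,2,4,2,8,5,8,3,2],[5,0,9,7,4,5,1,4,7,4,7],[1,7,10,9,10,10,9,8,1,9,2],[5,5,10,3,2,0,5,4,8,10,10],[6,6,2,2,2,6,10,7,8,5,2],[8,4,5,8,4,3,1,3,9,4,1]]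
theorem s11c21 : chk2 11 s11b 1 s11g s11e1 = true ∧ cnt s11g s11e1 = 1 := by decide +kernel
def s11e11 : List (List ℕ) := [[],[],[],[],[],[],[],[],[],[]]
theorem s11c211 : chk2 11 s11b 11 s11g s11e11 = true ∧ cnt s11g s11e11 = 100 := by decide +kernel
def s7g : List (List ℕ) := [[10],[0],[10,1,8,8,2,1,3],[0,0,2,4,0,4,3],[2,6,7,3,4,8,6],[3,7,8,6,1,9,1],[5,0,10,0,5,4,1],[9,7,1,6,7,2,10],[9,1,10,8,8,7,3],[4,2,10,2,6,0,2],[5,7,9,7,9,9,2],[1,9,4,7,9,0,3],[8,4,2,0,1,4,2],[2,3,9,8,4,7,5],[8,3,7,4,5,0,4],[2,3,4,1,10,8,4]]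
def s7b : List Bool := [false,true,true]
def s7U : List ℕ := [0,4,1,2,10,9,1,1,1,3,9,9,1,3,4,8,9,7,0,4,9,4,2,3,7,5,2,10,9,9,4,8,6,2,6,1,1,4,4,8,3,8,8,7,3,3,1,6,8,9,1,8,1,8,8,0,4,2,8,9,7,8,5,6,5,5,3,3,4,8,0,4,6,1,5,0,10,5,5,5,4,2,3,2,1,1,9,3,8,6,6,0,6,1,2,5,9,0,2]
def s7V : List ℕ := [6,1,2,6,0,4,6,6,4,5,5,10,7,9,9,7,2,3,1,4,8,5,0,7,0,4,0,4,0,7,3,7,5,1,5,1,1,1,9,5,7,9,6,10,10,10,1,3,9,7,0,10,6,3,0,3,10,6,5,5,6,4,1,9,5,6,9,10,2,0,0,0,3,2,5,7,7,9,3,9,0,9,7,4,5,3,9,2,3,7,9,9,4,4,2,0,1,4,2,9]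
def s7f : List ℕ := [0,2,9,2,9,4,10,10,2,10,1,2,7,10,0,1,1,7,1,1,10,4,6,4,1,2,1,3,9,5,4,3,1,1,9,9,3,10,10,5,4,4,10,8,2,6,0,3,6,7,10,9,9,10,2,3,9,6,0,2,9,4,10,9,0,1,1,2,9,2,1,10,4,9,9,9,5,1,7,4,9,5,8,7,10,3,5,3,7,4,2,9,9,8,10,10,10,9,3,6,5]
theorem s7c1 : chk1 11 5 s7f s7g s7U s7V s7b = true := by decide +kernel
def s7e1 : List (List ℕ) := [[],[],[5,3,7,1,0,5,5],[10,2,3,5,9,0,2],[3,1,0,8,0,10,0],[2,1,3,5,3,1,9],[5,7,1,5,9,10,6],[2,9,10,1,10,1,4],[7,4,10,6,2,7,3],[8,0,6,2,0,7,0],[1,8,2,2,5,3,5],[9,8,5,7,4,1,4],[7,6,0,9,6,5,9],[10,3,2,5,8,4,5],[5,9,9,5,3,7,6],[5,10,8,7,1,6,7]]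
theorem s7c21 : chk2 11 s7b 1 s7g s7e1 = true ∧ cnt s7g s7e1 = 2 := by decide +kernel
def s7e7 : List (List ℕ) := [[],[],[],[],[],[],[],[],[],[],[],[],[],[],[],[]]
theorem s7c27 : chk2 11 s7b 7 s7g s7e7 = true ∧ cnt s7g s7e7 = 100 := by decide +kernel
def s5g : List (List ℕ) := [[5],[4],[10,4,8,2,8],[11,3,5,3,11],[6,8,6,9,5],[10,12,1,2,11]]
def s5b : List Bool := [true,false,true]
def s5U : List ℕ := [3,3,8,2,6,1,6,10,6,11,0,2,1,5,10,12,3,5,4,2,6]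
def s5V : List ℕ := [6,4,2,8,7,12,8,10,8,0,9,8,1,2,12,8,4,8,1,9,8,8]
def s5f : List ℕ := [5,2,3,12,11,11,5,4,1,9,11,5,11,4,1,12,3,7,5,4,0,2,9]
theorem s5c1 : chk1 13 9 s5f s5g s5U s5V s5b = true := by decide +kernel
def s5e1 : List (List ℕ) := [[],[],[1,6,9,7,4],[10,9,2,11,2],[3,9,0,4,5],[7,4,11,2,5]]
theorem s5c21 : chk2 13 s5b 1 s5g s5e1 = true ∧ cnt s5g s5e1 = 2 := by decide +kernel
def s5e5 : List (List ℕ) := [[],[],[],[],[],[]]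
theorem s5c25 : chk2 13 s5b 5 s5g s5e5 = true ∧ cnt s5g s5e5 = 22 := by decide +kernel
def s8g : List (List ℕ) := [[21],[28],[29,27,36,17],[29,30,2,12,16,29,16,14],[24,1,12,28,25,3,16,21]]
def s8b : List Bool := [false,false,true,false,true]
def s8U : List ℕ := [5,18,26,19,30,22,11,26,6,10,30,20,22,28,26,22,24,17,20,10,20]
def s8V : List ℕ := [23,19,16,30,28,32,26,33,17,22,15,6,18,20,10,10,21,10,6,0,23,26]
def s8f : List ℕ := [1,32,36,7,24,17,1,35,2,29,10,35,20,3,30,0,15,19,18,21,7,23,34]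
theorem s8c1 : chk1 37 34 s8f s8g s8U s8V s8b = true := by decide +kernel
def s8e1 : List (List ℕ) := [[],[],[30,36,18,15],[35,2,21,14,12,3,23,9],[5,36,13,2,25,5,33,4]]
theorem s8c21 : chk2 37 s8b 1 s8g s8e1 = true ∧ cnt s8g s8e1 = 2 := by decide +kernel
def s8e2 : List (List ℕ) := [[],[],[3,36,18,22],[30,10,34,22,9,10,18,35],[27,36,5,2,5,21,29,32]]
theorem s8c22 : chk2 37 s8b 2 s8g s8e2 = true ∧ cnt s8g s8e2 = 2 := by decide +kernel
def s8e4 : List (List ℕ) := [[],[],[],[21,2,13,19,0,32,28,19],[3,15,27,6,20,5,21,28]]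
theorem s8c24 : chk2 37 s8b 4 s8g s8e4 = true ∧ cnt s8g s8e4 = 6 := by decide +kernel
def s8e8 : List (List ℕ) := [[],[],[],[],[]]
theorem s8c28 : chk2 37 s8b 8 s8g s8e8 = true ∧ cnt s8g s8e8 = 22 := by decide +kernel
def s6g : List (List ℕ) := [[25],[19],[3,15],[36,37,15],[42,35,5],[20,38,42,21,1,1],[7,23,9,23,41,4]]
def s6b : List Bool := [false,true,false,true,true]
def s6U : List ℕ := [13,22,18,9,29,14,25,35,33,19,1,28,2,13,18,41,24,31,11,13,27]
def s6V : List ℕ := [20,7,11,12,14,23,6,39,41,31,24,21,22,13,30,14,8,41,22,35,7,32]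
def s6f : List ℕ := [28,27,27,42,11,31,25,23,33,20,42,36,29,11,21,0,16,9,8,30,25,33,21]
theorem s6c1 : chk1 43 21 s6f s6g s6U s6V s6b = true := by decide +kernel
def s6e2 : List (List ℕ) := [[],[],[],[36,7,36],[8,32,10],[25,1,19,11,31,40],[3,24,30,28,0,25]]
theorem s6c22 : chk2 43 s6b 2 s6g s6e2 = true ∧ cnt s6g s6e2 = 4 := by decide +kernel
def s6e3 : List (List ℕ) := [[],[],[33,15],[],[],[18,25,42,30,24,17],[4,28,30,9,31,41]]
theorem s6c23 : chk2 43 s6b 3 s6g s6e3 = true ∧ cnt s6g s6e3 = 8 := by decide +kernel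
def s6e6 : List (List ℕ) := [[],[],[],[],[],[],[]]
theorem s6c26 : chk2 43 s6b 6 s6g s6e6 = true ∧ cnt s6g s6e6 = 22 := by decide +kernel
end HSproof

namespace HSproof
open Polynomial
instance fact13 : Fact (Nat.Prime 13) := ⟨by norm_num⟩
instance fact37 : Fact (Nat.Prime 37) := ⟨by norm_num⟩
instance fact43 : Fact (Nat.Prime 43) := ⟨by norm_num⟩

/-- specialisation of the parameter at an integer, modulo `l` -/
noncomputable def th (l : ℕ) (x : ℤ) : ℤ[X] →+* ZMod l := (Int.castRingHom (ZMod l)).comp (evalRingHom x)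
def toN (l : ℕ) (c : ℤ) : ℕ := (c % (l : ℤ)).toNat
lemma toN_cast (l : ℕ) [NeZero l] (c : ℤ) : ((toN l c : ℕ) : ZMod l) = (c : ZMod l) := by
  have h : 0 ≤ c % (l : ℤ) := Int.emod_nonneg _ (by exact_mod_cast NeZero.ne l)
  have h2 : (((toN l c : ℕ) : ℤ) : ZMod l) = (c : ZMod l) := by
    rw [toN, Int.toNat_of_nonneg h, ZMod.intCast_mod]
  exact_mod_cast h2
lemma th_tZ (l : ℕ) (x : ℤ) (a : List ℤ) : th l x (tZ a) = (zev x a : ZMod l) := by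
  simp [th, zev_spec]
lemma tZ2_th (l : ℕ) [NeZero l] (x : ℤ) (a : List (List ℤ)) :
    (tZ2 a).map (th l x) = tP l (a.map (fun r => toN l (zev x r))) := by
  induction a with
  | nil => simp [tZ2, tP]
  | cons c a ih => simp [tZ2, tP, ih, th_tZ, toN_cast]
def ppl (l : ℕ) (p0 q0 : ℤ) (a b : List ℤ) : List ℕ := List.zipWith (fun u v => toN l (u * q0 - p0 * v)) a b
lemma PP_th_aux (l : ℕ) [NeZero l] (x p0 q0 : ℤ) : ∀ a b : List ℤ, a.length = b.length →
    ((tZ a).map C * C (tZ [q0]) - C (tZ [p0]) * (tZ b).map C).map (th l x) = tP l (ppl l p0 q0 a b)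
  | [], [], _ => by simp [tZ, tP, ppl]
  | [], _::_, h => by simp at h
  | _::_, [], h => by simp at h
  | u::a, v::b, h => by
    have ih := PP_th_aux l x p0 q0 a b (by simpa using h)
    rw [ppl, List.zipWith_cons_cons, ← ppl, tP, ← ih, toN_cast]
    simp [tZ, th]
    ring
lemma PP_th (l : ℕ) [NeZero l] (x : ℤ) : PP.map (th l x) = tP l (ppl l (zev x pl) (zev x ql) pl ql) := by
  rw [← PP_th_aux l x _ _ _ _ (by decide +kernel)]
  simp [PP, tZ, th_tZ]
lemma PP_deg : PP.natDegree ≤ 100 := by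
  have h1 := tZ_natDegree pl
  have h2 := tZ_natDegree ql
  have e1 : pl.length = 101 := by decide +kernel
  have e2 : ql.length = 101 := by decide +kernel
  rw [PP]
  refine (natDegree_sub_le _ _).trans (max_le ?_ ?_)
  · refine (natDegree_mul_C_le _ _).trans (natDegree_map_le.trans (by omega))
  · refine (natDegree_C_mul_le _ _).trans (natDegree_map_le.trans (by omega))
lemma Al_deg2 : (tZ2 Al).natDegree ≤ 22 := tZ2_natDegree Al
set_option maxRecDepth 100000
lemma hf11 : PP.map (th 11 1) = tP 11 s11f := by
  rw [PP_th]; exact congrArg _ (by decide +kernel)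
lemma hf7 : PP.map (th 11 0) = tP 11 s7f := by
  rw [PP_th]; exact congrArg _ (by decide +kernel)
lemma hf5 : (tZ2 Al).map (th 13 1) = tP 13 s5f := by
  rw [tZ2_th]; exact congrArg _ (by decide +kernel)
lemma hf8 : (tZ2 Al).map (th 37 1) = tP 37 s8f := by
  rw [tZ2_th]; exact congrArg _ (by decide +kernel)
lemma hf6 : (tZ2 Al).map (th 43 12) = tP 43 s6f := by
  rw [tZ2_th]; exact congrArg _ (by decide +kernel)
end HSproof

namespace HSproof
open Polynomial
set_option maxRecDepth 100000
def fa : List ℤ := [50,-95,40,30,-30,7]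
def fb : List ℤ := [-125,250,-175,-100,425,-550,435,-240,90,-20,2]
def fc : List ℤ := [125,0,-50,0,50,0,-40,0,5,0,2]
def fd : List ℤ := [-5,0,0,0,1]
def fe : List ℤ := [25,-100,100,0,-70,60,-20,0,1]
def bzu : List ℤ := [-13936658875, 46758688625, -25530839125, -16628583075, 31089390800, -24472330950, 6430684100, 4197386370, -5649738605, 3031256245, -260130055, -171141919]
def bzv : List ℤ := [87104101968750, -283531456109375, 304551608078125, 84157242062500, -608393145218750, 762175995593750, -454045096781250, 85032672931250, 20701734117500, 30868826238750, 8731847048750, -144339967538750, 202232328046500, -122409395100000, 4151249524000, 55821752799250, -49605599106150, 20139140553625, -624779087075, -4395710039950, 3118926138690, -1299273845630, 360438363130, -61173126060, 4791973732]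
def bzN : ℤ := 2000000000
def zpow (a : List ℤ) : ℕ → List ℤ
  | 0 => [1]
  | n+1 => zpmul (zpow a n) a
lemma tZ_zpow (a : List ℤ) (n : ℕ) : tZ (zpow a n) = tZ a ^ n := by
  induction n with
  | zero => simp [zpow, tZ]
  | succ n ih => rw [zpow, tZ_zpmul, ih, pow_succ]
lemma pl_eq : pl = zpmul (zpmul (zpow fa 4) (zpow fb 4)) (zpow fc 4) := by decide +kernel
lemma ql_eq : ql = zpmul (zpmul (zpow [2] 8) (zpow fd 5)) (zpow fe 10) := by decide +kernel
lemma bz_eq : zpadd (zpmul bzu (zpmul (zpmul fa fb) fc)) (zpmul bzv (zpmul fd fe)) = bzN :: List.replicate 36 0 := by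
  decide +kernel
lemma p_eq : p = (tZ pl).map (Int.castRingHom ℚ) := by
  have h1 : (tZ fa).map (Int.castRingHom ℚ) = 7 * X ^ 5 - 30 * X ^ 4 + 30 * X ^ 3 + 40 * X ^ 2 - 95 * X + 50 := by
    simp [tZ, fa]; ring
  have h2 : (tZ fb).map (Int.castRingHom ℚ) = 2 * X ^ 10 - 20 *
    X ^ 9 + 90 * X ^ 8 - 240 * X ^ 7 + 435 * X ^ 6 - 550 * X ^ 5 + 425 * X ^ 4 - 100 * X ^ 3 -
    175 * X ^ 2 + 250 * X - 125 := by
    simp [tZ, fb]; ring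
  have h3 : (tZ fc).map (Int.castRingHom ℚ) = 2 * X ^ 10 + 5 * X ^ 8 - 40 * X ^ 6 + 50 * X ^ 4 - 50
    * X ^ 2 + 125 := by
    simp [tZ, fc]; ring
  rw [pl_eq]
  simp only [tZ_zpmul, tZ_zpow, Polynomial.map_mul, Polynomial.map_pow, h1, h2, h3]
  rfl
lemma q_eq : q = (tZ ql).map (Int.castRingHom ℚ) := by
  have h1 : (tZ fd).map (Int.castRingHom ℚ) = X ^ 4 - 5 := by
    simp [tZ, fd]; ring
  have h2 : (tZ fe).map (Int.castRingHom ℚ) = X ^ 8 - 20 * X ^ 6 + 60 * X ^ 5 - 70 * X ^ 4 + 100 * X ^ 2 -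
    100 * X + 25 := by
    simp [tZ, fe]; ring
  have h3 : (tZ [2]).map (Int.castRingHom ℚ) = 2 := by
    simp [tZ]
  rw [ql_eq]
  simp only [tZ_zpmul, tZ_zpow, Polynomial.map_mul, Polynomial.map_pow, h1, h2, h3]
  rfl
lemma tZ_zeros (n : ℕ) : tZ (List.replicate n 0) = 0 := by
  induction n with
  | zero => simp [tZ]
  | succ n ih => simp [List.replicate_succ, tZ, ih]
lemma pq_coprime : IsCoprime p q := by
  have h := congrArg (fun a => (tZ a).map (Int.castRingHom ℚ)) bz_eq
  simp only [tZ_zpadd, tZ_zpmul, tZ, tZ_zeros, mul_zero, add_zero, Polynomial.map_add, Polynomial.map_mul, map_C] at h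
  have hc : IsCoprime ((tZ fa).map (Int.castRingHom ℚ) * (tZ fb).map (Int.castRingHom ℚ) * (tZ fc).map (Int.castRingHom ℚ))
      ((tZ fd).map (Int.castRingHom ℚ) * (tZ fe).map (Int.castRingHom ℚ)) := by
    refine ⟨C ((bzN : ℚ)⁻¹) * (tZ bzu).map (Int.castRingHom ℚ), C ((bzN : ℚ)⁻¹) * (tZ bzv).map (Int.castRingHom ℚ), ?_⟩
    rw [mul_assoc (C _), mul_assoc (C _), ← mul_add, h, ← C_mul]
    simp [bzN]
  rw [p_eq, q_eq, pl_eq, ql_eq]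
  simp only [tZ_zpmul, tZ_zpow, Polynomial.map_mul, Polynomial.map_pow]
  rw [← mul_pow, ← mul_pow]
  refine IsCoprime.pow_left ?_
  refine IsCoprime.mul_right (IsCoprime.mul_right (IsCoprime.pow_right ?_) (IsCoprime.pow_right hc.of_mul_right_left)) (IsCoprime.pow_right hc.of_mul_right_right)
  refine ⟨0, C (2⁻¹), ?_⟩
  simp only [tZ, mul_zero, add_zero, zero_mul, zero_add, map_C, ← C_mul]
  norm_num
lemma tZ_coeff (a : List ℤ) (i : ℕ) : (tZ a).coeff i = a.getD i 0 := by
  induction a generalizing i with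
  | nil => simp [tZ]
  | cons c a ih =>
    cases i with
    | zero => simp [tZ]
    | succ i => rw [tZ, coeff_add, coeff_C_succ, coeff_X_mul, ih]; simp
lemma p_coeff : p.coeff 100 = 614656 := by
  have : pl.getD 100 0 = 614656 := by decide +kernel
  rw [p_eq, coeff_map, tZ_coeff, this]; simp
lemma q_coeff : q.coeff 100 = 256 := by
  have : ql.getD 100 0 = 256 := by decide +kernel
  rw [q_eq, coeff_map, tZ_coeff, this]; simp
lemma p_deg : p.natDegree ≤ 100 := by
  rw [p_eq]; exact natDegree_map_le.trans (tZ_natDegree pl)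
lemma q_deg : q.natDegree ≤ 100 := by
  rw [q_eq]; exact natDegree_map_le.trans (tZ_natDegree ql)
lemma F_natDegree : F.natDegree = 100 := by
  apply le_antisymm
  · rw [F]
    refine (natDegree_sub_le _ _).trans (max_le ?_ ?_)
    · exact natDegree_map_le.trans p_deg
    · exact (natDegree_C_mul_le _ _).trans (natDegree_map_le.trans q_deg)
  · apply le_natDegree_of_ne_zero
    rw [F, coeff_sub, coeff_C_mul, coeff_map, coeff_map, p_coeff, q_coeff]
    intro h
    have h2 : algebraMap ℚ[X] (RatFunc ℚ) (C 614656 - X * C 256) = algebraMap ℚ[X] (RatFunc ℚ) 0 := by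
      rw [map_sub, map_mul, RatFunc.algebraMap_X, RatFunc.algebraMap_C, RatFunc.algebraMap_C, map_zero]
      rw [show (RatFunc.C : ℚ →+* RatFunc ℚ) = algebraMap ℚ (RatFunc ℚ) from Subsingleton.elim _ _]; exact h
    have h3 := RatFunc.algebraMap_injective ℚ h2
    have h4 := congrArg (fun f => f.coeff 1) h3
    simp [coeff_C] at h4
lemma q_ne : q ≠ 0 := by
  intro h; have := q_coeff; rw [h] at this; norm_num at this
lemma F_irreducible : Irreducible F := by
  have e : F = (p.map C - C X * q.map C : ℚ[X][X]).map (algebraMap ℚ[X] (RatFunc ℚ)) := by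
    rw [F, Polynomial.map_sub, Polynomial.map_mul, map_C, RatFunc.algebraMap_X, Polynomial.map_map, Polynomial.map_map]
    have : (algebraMap ℚ[X] (RatFunc ℚ)).comp C = algebraMap ℚ (RatFunc ℚ) := by
      ext; simp
    rw [this]
  have hi : Irreducible (p.map C - C X * q.map C : ℚ[X][X]) := by
    have h0 : Irreducible (C (-q) * X + C p : ℚ[X][X]) :=
      irreducible_C_mul_X_add_C (neg_ne_zero.mpr q_ne) (pq_coprime.symm.neg_left.isRelPrime)
    have h1 : Bivariate.swap (R := ℚ) (C (-q) * X + C p) = p.map C - C X * q.map C := by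
      simp [Bivariate.swap_C, Bivariate.swap_Y]
      ring
    rw [← h1]
    exact (MulEquiv.irreducible_iff (Bivariate.swap (R := ℚ))).2 h0
  rw [e]
  refine (IsPrimitive.irreducible_iff_irreducible_map_fraction_map (hi.isPrimitive ?_)).1 hi
  intro h
  have h2 : F.natDegree ≤ 0 := by rw [e, ← h]; exact natDegree_map_le
  rw [F_natDegree] at h2
  omega
end HSproof

namespace HSproof
open Polynomial IntermediateField

noncomputable abbrev ev {L : Type} [Field L] (x : L) : ℤ[X] →+* L := eval₂RingHom (Int.castRingHom L) x

lemma frobM {M L : Type} [Field M] [Field L] [Algebra M L] [FiniteDimensional M L] [IsGalois M L] (m : M)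
    (hinj : Function.Injective (ev m)) (hsurj : ∀ z : M, ∃ a b : ℤ[X], z = ev m a / ev m b)
    (l : ℕ) [Fact l.Prime] (θ : ℤ[X] →+* ZMod l) (f : ℤ[X][X])
    (hs : (f.map (ev (algebraMap M L m))).Splits) (u : ℕ) (fl : List ℕ) (gs : List (List ℕ)) (U V : List ℕ) (bs : List Bool)
    (hf : f.map θ = tP l fl) (hdeg : f.natDegree + 1 ≤ fl.length) (h1 : chk1 l u fl gs U V bs = true) :
    ∃ σ : L ≃ₐ[M] L, (f.map (ev (algebraMap M L m))).roots.Nodup ∧ ∀ d cs, chk2 l bs d gs cs = true →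
      ∀ [DecidablePred fun y : L => (σ^d) y = y],
        ((f.map (ev (algebraMap M L m))).roots.filter (fun y => (σ ^ d) y = y)).card = cnt gs cs := by
  let i1 : Algebra ℤ[X] M := (ev m).toAlgebra
  let i2 : Algebra ℤ[X] L := (ev (algebraMap M L m)).toAlgebra
  have i3 : IsScalarTower ℤ[X] M L := by
    refine IsScalarTower.of_algebraMap_eq' ?_
    change ev (algebraMap M L m) = (algebraMap M L).comp (ev m)
    refine Polynomial.ringHom_ext' (Subsingleton.elim _ _) ?_
    simp only [RingHom.comp_apply, coe_eval₂RingHom, eval₂_X]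
  have i4 : FaithfulSMul ℤ[X] M := (faithfulSMul_iff_algebraMap_injective _ _).2 hinj
  have i5 : IsFractionRing ℤ[X] M := by
    apply IsFractionRing.of_field
    intro z
    obtain ⟨a, b, h⟩ := hsurj z
    exact ⟨a, b, h⟩
  exact frobC (M := M) (L := L) l θ f hs u fl gs U V bs hf hdeg h1

set_option linter.unusedSectionVars false
section
variable {K L : Type} [Field K] [Field L] [CharZero K] [CharZero L] [Algebra K L]

lemma ev_inj (t : K) (ht : Transcendental ℚ t) (x : L) (hq : ev x (tZ ql) ≠ 0)
    (hx : ev x (tZ pl) = algebraMap K L t * ev x (tZ ql)) : Function.Injective (ev x) := by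
  rw [injective_iff_map_eq_zero]
  intro a ha
  by_contra h0
  have e0 : ∀ b : ℤ[X], ev x b = aeval x (b.map (Int.castRingHom ℚ)) := by
    intro b
    rw [aeval_def, eval₂_map, coe_eval₂RingHom]
    congr 1
    exact Subsingleton.elim _ _
  have hxa : x ∈ algebraicClosure ℚ L := by
    rw [mem_algebraicClosure_iff]
    refine ⟨a.map (Int.castRingHom ℚ), ?_, ?_⟩
    · rw [Ne, Polynomial.map_eq_zero_iff (RingHom.injective_int _)]; exact h0
    · rw [← e0]; exact ha
  have hm : ∀ b : ℤ[X], ev x b ∈ algebraicClosure ℚ L := by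
    intro b
    induction b using Polynomial.induction_on' with
    | add a b ha hb => rw [map_add]; exact add_mem ha hb
    | monomial n a =>
      simp only [coe_eval₂RingHom, eval₂_monomial]
      exact mul_mem (intCast_mem _ _) (pow_mem hxa _)
  have ht2 : algebraMap K L t ∈ algebraicClosure ℚ L := by
    rw [← mul_div_cancel_right₀ (algebraMap K L t) hq, ← hx]
    exact div_mem (hm _) (hm _)
  rw [mem_algebraicClosure_iff] at ht2
  exact ht ((isAlgebraic_algebraMap_iff (algebraMap K L).injective).1 ht2)

lemma adj_ratio (t : K) (hgen : ∀ S : Subfield K, t ∈ S → S = ⊤) (x : L) (hq : ev x (tZ ql) ≠ 0)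
    (hx : ev x (tZ pl) = algebraMap K L t * ev x (tZ ql)) (z : L) (hz : z ∈ K⟮x⟯) :
    ∃ a b : ℤ[X], z = ev x a / ev x b := by
  have h1 : Subring.closure {x} ≤ (ev x).range := by
    rw [Subring.closure_le]
    rintro _ rfl
    exact ⟨X, by simp⟩
  have h2 : ∀ b, ev x b ∈ Subfield.closure {x} := by
    intro b
    have hxm : x ∈ Subfield.closure {x} := Subfield.subset_closure rfl
    induction b using Polynomial.induction_on' with
    | add a b ha hb => rw [map_add]; exact add_mem ha hb
    | monomial n a =>
      simp only [coe_eval₂RingHom, eval₂_monomial]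
      exact mul_mem (intCast_mem _ _) (pow_mem hxm _)
  have h3 : (Subfield.closure {x}).comap (algebraMap K L) = ⊤ := by
    apply hgen
    rw [Subfield.mem_comap, ← mul_div_cancel_right₀ (algebraMap K L t) hq, ← hx]
    exact div_mem (h2 _) (h2 _)
  have h4 : K⟮x⟯ ≤ Subfield.toIntermediateField (Subfield.closure {x}) (fun k => by
      have : k ∈ (Subfield.closure {x}).comap (algebraMap K L) := by rw [h3]; trivial
      exact this) := by
    rw [adjoin_le_iff]
    rintro _ rfl
    exact Subfield.subset_closure rfl
  have h5 : z ∈ Subfield.closure {x} := h4 hz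
  rw [Subfield.mem_closure_iff] at h5
  obtain ⟨y, hy, w, hw, e⟩ := h5
  obtain ⟨a, rfl⟩ := h1 hy
  obtain ⟨b, rfl⟩ := h1 hw
  exact ⟨a, b, e.symm⟩

lemma frobX [FiniteDimensional K L] [IsGalois K L] (t : K) (ht : Transcendental ℚ t)
    (hgen : ∀ S : Subfield K, t ∈ S → S = ⊤) (x : L) (hq : ev x (tZ ql) ≠ 0)
    (hx : ev x (tZ pl) = algebraMap K L t * ev x (tZ ql))
    (l : ℕ) [Fact l.Prime] (θ : ℤ[X] →+* ZMod l) (f : ℤ[X][X])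
    (hs : (f.map (ev x)).Splits) (u : ℕ) (fl : List ℕ) (gs : List (List ℕ)) (U V : List ℕ) (bs : List Bool)
    (hf : f.map θ = tP l fl) (hdeg : f.natDegree + 1 ≤ fl.length) (h1 : chk1 l u fl gs U V bs = true) :
    ∃ g : L ≃ₐ[K] L, g x = x ∧ (f.map (ev x)).roots.Nodup ∧ ∀ d cs, chk2 l bs d gs cs = true →
      ∀ [DecidablePred fun y : L => (g^d) y = y],
        ((f.map (ev x)).roots.filter (fun y => (g ^ d) y = y)).card = cnt gs cs := by
  have hxm : x ∈ K⟮x⟯ := mem_adjoin_simple_self K x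
  let m : K⟮x⟯ := ⟨x, hxm⟩
  have hev : ∀ a : ℤ[X], algebraMap K⟮x⟯ L (ev m a) = ev x a := by
    intro a
    simp only [coe_eval₂RingHom]
    rw [hom_eval₂]
    congr 1
  have hinj : Function.Injective (ev m) := by
    intro a b hab
    apply ev_inj t ht x hq hx
    rw [← hev, ← hev, hab]
  have hsurj : ∀ z : K⟮x⟯, ∃ a b : ℤ[X], z = ev m a / ev m b := by
    intro z
    obtain ⟨a, b, h⟩ := adj_ratio t hgen x hq hx z z.2
    refine ⟨a, b, (algebraMap K⟮x⟯ L).injective ?_⟩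
    rw [map_div₀, hev, hev]
    exact h
  obtain ⟨σ, h2, h3⟩ := frobM (M := K⟮x⟯) (L := L) m hinj hsurj l θ f hs u fl gs U V bs hf hdeg h1
  refine ⟨σ.restrictScalars K, σ.commutes m, h2, ?_⟩
  have hp : ∀ d y, ((σ.restrictScalars K)^d) y = (σ^d) y := by
    intro d
    induction d with
    | zero => intro y; rfl
    | succ d ih => intro y; rw [pow_succ, pow_succ]; exact ih _
  intro d cs hc _
  classical
  have := h3 d cs hc
  rw [← this]
  simp only [hp]
  rfl
end
end HSproof

namespace HSproof
open Polynomial IntermediateField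
set_option linter.unusedSectionVars false

section
variable {K L : Type} [Field K] [Field L] [Algebra K L]

/-- the roots of `f` in `L` -/
def Om (f : K[X]) (L : Type) [Field L] [Algebra K L] : Type := {y : L // aeval y f = 0}

noncomputable instance (f : K[X]) : MulAction (L ≃ₐ[K] L) (Om f L) where
  smul g y := ⟨g y.1, by rw [← AlgEquiv.coe_toAlgHom, aeval_algHom_apply, y.2, map_zero]⟩
  one_smul _ := rfl
  mul_smul _ _ _ := rfl

lemma Om_smul (f : K[X]) (g : L ≃ₐ[K] L) (y : Om f L) : (g • y).1 = g y.1 := rfl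

lemma Om_ext {f : K[X]} {y z : Om f L} (h : y.1 = z.1) : y = z := Subtype.ext h

lemma cntOm {f : K[X]} [Fintype (Om f L)] (h : L[X]) (h0 : h ≠ 0) (hn : h.roots.Nodup)
    (hS : ∀ y, h.eval y = 0 → aeval y f = 0) (R : L → Prop) [DecidablePred R] (T : Om f L → Prop) [DecidablePred T]
    (hT : ∀ z, T z ↔ h.eval z.1 = 0 ∧ R z.1) : (Finset.univ.filter T).card = (h.roots.filter R).card := by
  classical
  have h1 : (Finset.univ.filter T).image (fun z : Om f L => z.1) = (h.roots.filter R).toFinset := by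
    ext y
    simp only [Finset.mem_image, Finset.mem_filter, Finset.mem_univ, true_and, Multiset.mem_toFinset, Multiset.mem_filter,
      mem_roots h0, IsRoot.def, hT]
    constructor
    · rintro ⟨z, hz, rfl⟩; exact hz
    · intro hy; exact ⟨⟨y, hS y hy.1⟩, hy, rfl⟩
  rw [← Multiset.toFinset_card_of_nodup (hn.filter _), ← h1, Finset.card_image_of_injective]
  intro a b hab
  exact Om_ext hab

lemma tZ2_coeff (a : List (List ℤ)) (i : ℕ) : (tZ2 a).coeff i = tZ (a.getD i []) := by
  induction a generalizing i with
  | nil => simp [tZ2, tZ]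
  | cons c a ih =>
    cases i with
    | zero => simp [tZ2]
    | succ i => rw [tZ2, coeff_add, coeff_C_succ, coeff_X_mul, ih]; simp

def Ae (i j : ℕ) : ℤ := (Al.getD i []).getD j 0
lemma Ae_symm : ∀ i < 23, ∀ j < 23, Ae i j = Ae j i := by decide +kernel

/-- the adjacency relation -/
def EE (y z : L) : Prop := ((tZ2 Al).map (ev y)).eval z = 0

lemma EE_eq (y z : L) : ((tZ2 Al).map (ev y)).eval z =
    ∑ i ∈ Finset.range 23, ∑ j ∈ Finset.range 23, (Ae i j : L) * y ^ j * z ^ i := by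
  rw [eval_map, eval₂_eq_sum_range' _ (n := 23) (by have := Al_deg2; omega)]
  refine Finset.sum_congr rfl fun i hi => ?_
  have hd : ((tZ2 Al).coeff i).natDegree < 23 := by have := Al_deg i; omega
  rw [coe_eval₂RingHom, eval₂_eq_sum_range' _ hd, Finset.sum_mul]
  refine Finset.sum_congr rfl fun j hj => ?_
  rw [tZ2_coeff, tZ_coeff]
  rfl

lemma EE_symm (y z : L) (h : EE y z) : EE z y := by
  rw [EE, EE_eq] at h ⊢
  rw [← h, Finset.sum_comm]
  refine Finset.sum_congr rfl fun i hi => Finset.sum_congr rfl fun j hj => ?_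
  rw [Ae_symm j (Finset.mem_range.1 hj) i (Finset.mem_range.1 hi)]
  ring

lemma EE_inv (g : L ≃ₐ[K] L) (y z : L) (h : EE y z) : EE (g y) (g z) := by
  rw [EE, eval_map] at h ⊢
  have h2 := congrArg (g : L →+* L) h
  rw [hom_eval₂, map_zero] at h2
  have e : (g : L →+* L).comp (ev y) = ev (g y) := by
    refine Polynomial.ringHom_ext' (Subsingleton.elim _ _) ?_
    simp only [RingHom.comp_apply, coe_eval₂RingHom, eval₂_X]
    rfl
  rw [e] at h2
  exact h2

variable [CharZero K] [CharZero L]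

lemma ev_ne (y : L) (h : ev y (tZ pl) = 0) : ev y (tZ ql) ≠ 0 := by
  intro h2
  obtain ⟨a, b, hab⟩ := pq_coprime
  have e0 : ∀ b : ℤ[X], ev y b = aeval y (b.map (Int.castRingHom ℚ)) := by
    intro b
    rw [aeval_def, eval₂_map, coe_eval₂RingHom]
    congr 1
    exact Subsingleton.elim _ _
  have h3 := congrArg (aeval y) hab
  rw [map_add, map_mul, map_mul, p_eq, q_eq, ← e0, ← e0, h, h2] at h3
  simp at h3

theorem core [FiniteDimensional K L] [IsGalois K L] (t : K) (ht : Transcendental ℚ t)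
    (hgen : ∀ S : Subfield K, t ∈ S → S = ⊤) (f : K[X])
    (hf : f = (tZ pl).map (Int.castRingHom K) - C t * (tZ ql).map (Int.castRingHom K))
    (hirr : Irreducible f) (hdeg : f.natDegree = 100) (hspl : (f.map (algebraMap K L)).Splits)
    (hadj : Algebra.adjoin K (f.rootSet L) = ⊤) : Nat.card (L ≃ₐ[K] L) = 88704000 := by
  classical
  have hf0 : f ≠ 0 := hirr.ne_zero
  have hfL0 : f.map (algebraMap K L) ≠ 0 := (Polynomial.map_ne_zero_iff (algebraMap K L).injective).2 hf0
  have hcomp : (algebraMap K L).comp (Int.castRingHom K) = Int.castRingHom L := Subsingleton.elim _ _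
  have hfL : f.map (algebraMap K L) = (tZ pl).map (Int.castRingHom L) - C (algebraMap K L t) * (tZ ql).map (Int.castRingHom L) := by
    rw [hf, Polynomial.map_sub, Polynomial.map_mul, Polynomial.map_map, Polynomial.map_map, map_C, hcomp]
  have hev : ∀ y : L, aeval y f = (f.map (algebraMap K L)).eval y := fun y => by rw [eval_map_algebraMap]
  have hroot : ∀ y : L, aeval y f = 0 → ev y (tZ pl) = algebraMap K L t * ev y (tZ ql) := by
    intro y hy
    rw [hev, hfL, eval_sub, eval_mul, eval_C, eval_map, eval_map] at hy
    exact sub_eq_zero.1 hy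
  have hrq : ∀ y : L, aeval y f = 0 → ev y (tZ ql) ≠ 0 := by
    intro y hy h0
    have := hroot y hy
    rw [h0, mul_zero] at this
    exact ev_ne y this h0
  have hfin : Finite (Om f L) := by
    have : Finite (f.rootSet L) := (f.rootSet_finite L).to_subtype
    refine Finite.of_injective (β := f.rootSet L) (fun y => ⟨y.1, (mem_rootSet_of_ne hf0).2 y.2⟩) ?_
    intro a b hab
    exact Om_ext (congrArg (fun z : f.rootSet L => z.1) hab)
  let _ : Fintype (Om f L) := Fintype.ofFinite _
  have hfaith : FaithfulSMul (L ≃ₐ[K] L) (Om f L) := by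
    refine ⟨fun {g h} hgh => ?_⟩
    have : (g : L →ₐ[K] L) = h := by
      apply AlgHom.ext_of_adjoin_eq_top hadj
      intro y hy
      have := hgh ⟨y, (mem_rootSet_of_ne hf0).1 hy⟩
      exact congrArg (fun z : Om f L => z.1) this
    ext y
    exact DFunLike.congr_fun this y
  have hsep : f.Separable := hirr.separable
  have hcard : Fintype.card (Om f L) = 100 := by
    have h1 := cntOm (f := f) (f.map (algebraMap K L)) hfL0 (nodup_roots hsep.map) (fun y hy => by rw [hev]; exact hy)
      (fun _ => True) (fun _ => True) (fun z => by simp only [and_true, true_iff]; rw [← hev]; exact z.2)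
    rw [Finset.filter_true, Finset.card_univ, Multiset.filter_true, ← hspl.natDegree_eq_card_roots, natDegree_map, hdeg] at h1
    exact h1
  have htr : ∀ y z : Om f L, ∃ g : L ≃ₐ[K] L, g • y = z := by
    intro y z
    have hc : IsConjRoot K z.1 y.1 := by
      exact (minpoly.eq_of_irreducible hirr z.2).symm.trans (minpoly.eq_of_irreducible hirr y.2)
    obtain ⟨g, hg⟩ := (isConjRoot_iff_exists_algEquiv).1 hc
    exact ⟨g, Om_ext hg⟩
  have hne : Nonempty (Om f L) := by
    rw [← Fintype.card_pos_iff, hcard]; norm_num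
  obtain ⟨x⟩ := hne
  have hPP : PP.map (ev x.1) = C (ev x.1 (tZ ql)) * f.map (algebraMap K L) := by
    have e : (ev x.1).comp C = Int.castRingHom L := Subsingleton.elim _ _
    rw [hfL, PP, Polynomial.map_sub, Polynomial.map_mul, Polynomial.map_mul, Polynomial.map_map, Polynomial.map_map, e, map_C, map_C,
      hroot x.1 x.2, C_mul]
    ring
  have hq := hrq x.1 x.2
  have hPP0 : PP.map (ev x.1) ≠ 0 := by
    rw [hPP]; exact mul_ne_zero (C_ne_zero.2 hq) hfL0
  have hPPs : (PP.map (ev x.1)).Splits := by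
    rw [hPP]; exact (Splits.C _).mul hspl
  have hPPe : ∀ y, (PP.map (ev x.1)).eval y = 0 ↔ aeval y f = 0 := by
    intro y; rw [hPP, eval_mul, eval_C, hev, mul_eq_zero, or_iff_right hq]
  have hAd : (tZ2 Al).map (ev x.1) ∣ PP.map (ev x.1) := Polynomial.map_dvd _ Al_dvd
  have hA0 : (tZ2 Al).map (ev x.1) ≠ 0 := ne_zero_of_dvd_ne_zero hPP0 hAd
  have hAs : ((tZ2 Al).map (ev x.1)).Splits := hPPs.of_dvd hPP0 hAd
  have hAe : ∀ y, ((tZ2 Al).map (ev x.1)).eval y = 0 → aeval y f = 0 := by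
    intro y hy
    exact (hPPe y).1 (eval_eq_zero_of_dvd_of_eval_eq_zero hAd hy)
  let E : Om f L → Om f L → Prop := fun y z => EE y.1 z.1
  have hx := hroot x.1 x.2
  obtain ⟨g11, a11, b11, c11⟩ := frobX t ht hgen x.1 hq hx 11 (th 11 1) PP hPPs _ _ _ _ _ _ hf11
    (by have := PP_deg; have : s11f.length = 101 := by decide +kernel
        omega) s11c1
  obtain ⟨g7, a7, b7, c7⟩ := frobX t ht hgen x.1 hq hx 11 (th 11 0) PP hPPs _ _ _ _ _ _ hf7
    (by have := PP_deg; have : s7f.length = 101 := by decide +kernel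
        omega) s7c1
  obtain ⟨g5, a5, b5, c5⟩ := frobX t ht hgen x.1 hq hx 13 (th 13 1) (tZ2 Al) hAs _ _ _ _ _ _ hf5
    (by have := Al_deg2; have : s5f.length = 23 := by decide +kernel
        omega) s5c1
  obtain ⟨g8, a8, b8, c8⟩ := frobX t ht hgen x.1 hq hx 37 (th 37 1) (tZ2 Al) hAs _ _ _ _ _ _ hf8
    (by have := Al_deg2; have : s8f.length = 23 := by decide +kernel
        omega) s8c1
  obtain ⟨g6, a6, b6, c6⟩ := frobX t ht hgen x.1 hq hx 43 (th 43 12) (tZ2 Al) hAs _ _ _ _ _ _ hf6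
    (by have := Al_deg2; have : s6f.length = 23 := by decide +kernel
        omega) s6c1
  have hfx : ∀ (g : L ≃ₐ[K] L) (k n : ℕ),
      (((tZ2 Al).map (ev x.1)).roots.filter (fun y => (g ^ k) y = y)).card = n → fx E x g k = n := by
    intro g k n h
    rw [← h, fx, Nb, Finset.filter_filter]
    apply cntOm (f := f) _ hA0 b5 hAe
    intro z
    refine and_congr Iff.rfl ⟨fun h => congrArg (fun w : Om f L => w.1) h, fun h => Om_ext h⟩
  have hfP : ∀ (g : L ≃ₐ[K] L) (k n : ℕ),
      ((PP.map (ev x.1)).roots.filter (fun y => (g ^ k) y = y)).card = n →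
      (Finset.univ.filter (fun y : Om f L => g ^ k • y = y)).card = n := by
    intro g k n h
    rw [← h]
    apply cntOm (f := f) _ hPP0 b11 (fun y => (hPPe y).1)
    intro z
    rw [hPPe]
    refine ⟨fun h => ⟨z.2, congrArg (fun w : Om f L => w.1) h⟩, fun h => Om_ext h.2⟩
  have hall : ∀ (g : L ≃ₐ[K] L) (k : ℕ), (Finset.univ.filter (fun y : Om f L => g ^ k • y = y)).card = 100 →
      ∀ y : Om f L, g ^ k • y = y := by
    intro g k h y
    have := Finset.eq_univ_of_card _ (h.trans hcard.symm)
    have hy := Finset.mem_univ y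
    rw [← this, Finset.mem_filter] at hy
    exact hy.2
  have hF5 : fx E x g5 5 = 22 := hfx g5 5 22 ((c5 5 s5e5 s5c25.1).trans s5c25.2)
  have hyp : Hyp (L ≃ₐ[K] L) E x := {
    c := hcard
    tr := htr
    sy := fun y z => EE_symm y.1 z.1
    inv := fun g y z => EE_inv g y.1 z.1
    n22 := by
      apply le_antisymm
      · have h1 := cntOm (f := f) _ hA0 b5 hAe (fun _ => True) (E x) (fun z => by rw [and_true]; rfl)
        rw [Multiset.filter_true] at h1
        rw [Nb, h1]
        exact (card_roots' _).trans (natDegree_map_le.trans Al_deg2)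
      · rw [← hF5, fx]
        exact Finset.card_filter_le _ _
    s11 := by
      refine ⟨g11, Om_ext a11, hall g11 11 (hfP g11 11 100 ((c11 11 s11e11 s11c211.1).trans s11c211.2)), ?_⟩
      have h1 := hfP g11 1 1 ((c11 1 s11e1 s11c21.1).trans s11c21.2)
      rw [pow_one, Finset.card_eq_one] at h1
      obtain ⟨a, ha⟩ := h1
      have hm : ∀ y : Om f L, g11 • y = y → y = a := by
        intro y hy
        have : y ∈ Finset.univ.filter (fun y : Om f L => g11 • y = y) := by simpa using hy
        rw [ha] at this
        simpa using this
      intro y hy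
      rw [hm y hy, hm x (Om_ext a11)]
    s7 := by
      refine ⟨g7, Om_ext a7, hall g7 7 (hfP g7 7 100 ((c7 7 s7e7 s7c27.1).trans s7c27.2)), ?_⟩
      have h1 := hfP g7 1 2 ((c7 1 s7e1 s7c21.1).trans s7c21.2)
      rwa [pow_one] at h1
    s5 := ⟨g5, Om_ext a5, hfx g5 1 2 ((c5 1 s5e1 s5c21.1).trans s5c21.2), hF5⟩
    s8 := ⟨g8, Om_ext a8, hfx g8 1 2 ((c8 1 s8e1 s8c21.1).trans s8c21.2),
      hfx g8 2 2 ((c8 2 s8e2 s8c22.1).trans s8c22.2), hfx g8 4 6 ((c8 4 s8e4 s8c24.1).trans s8c24.2),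
      hfx g8 8 22 ((c8 8 s8e8 s8c28.1).trans s8c28.2)⟩
    s6 := ⟨g6, Om_ext a6, hfx g6 2 4 ((c6 2 s6e2 s6c22.1).trans s6c22.2),
      hfx g6 3 8 ((c6 3 s6e3 s6c23.1).trans s6c23.2), hfx g6 6 22 ((c6 6 s6e6 s6c26.1).trans s6c26.2)⟩ }
  exact hyp.card_G
end
end HSproof

namespace HSproof
open Polynomial
lemma X_gen (S : Subfield (RatFunc ℚ)) (h : RatFunc.X ∈ S) : S = ⊤ := by
  rw [eq_top_iff]
  intro z _
  have hp : ∀ a : ℚ[X], algebraMap ℚ[X] (RatFunc ℚ) a ∈ S := by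
    intro a
    induction a using Polynomial.induction_on' with
    | add a b ha hb => rw [map_add]; exact add_mem ha hb
    | monomial n a =>
      rw [← C_mul_X_pow_eq_monomial, map_mul, map_pow, RatFunc.algebraMap_X, RatFunc.algebraMap_C]
      refine mul_mem ?_ (pow_mem h _)
      rw [show (RatFunc.C a : RatFunc ℚ) = (a : RatFunc ℚ) from eq_ratCast _ _]
      exact SubfieldClass.ratCast_mem S a
  rw [← RatFunc.num_div_denom z]
  exact div_mem (hp _) (hp _)
lemma X_tr : Transcendental ℚ (RatFunc.X : RatFunc ℚ) := by
  rw [transcendental_iff]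
  intro a ha
  apply RatFunc.algebraMap_injective ℚ
  rw [map_zero, ← ha, aeval_def]
  conv_lhs => rw [← Polynomial.eval₂_C_X (p := a), hom_eval₂, RatFunc.algebraMap_X]
  congr 1
  exact Subsingleton.elim _ _
end HSproof
theorem belyi_deg100_stmt18 :
    F.natDegree = 100 ∧ Irreducible F ∧ Nat.card F.Gal = 88704000 := by
  refine ⟨HSproof.F_natDegree, HSproof.F_irreducible, ?_⟩
  have hG : IsGalois (RatFunc ℚ) F.SplittingField := IsGalois.of_separable_splitting_field (p := F) HSproof.F_irreducible.separable
  have hC : CharZero F.SplittingField := charZero_of_injective_algebraMap (algebraMap (RatFunc ℚ) F.SplittingField).injective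
  refine HSproof.core (K := RatFunc ℚ) (L := F.SplittingField) RatFunc.X HSproof.X_tr HSproof.X_gen F ?_
    HSproof.F_irreducible HSproof.F_natDegree (Polynomial.SplittingField.splits F) (Polynomial.SplittingField.adjoin_rootSet F)
  rw [F, HSproof.p_eq, HSproof.q_eq, Polynomial.map_map, Polynomial.map_map]
  rw [show (algebraMap ℚ (RatFunc ℚ)).comp (Int.castRingHom ℚ) = Int.castRingHom (RatFunc ℚ) from Subsingleton.elim _ _]
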